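/- Additionally assume √n·(d_{n,1}²−μ_1,…,d_{n,k}²−μ_k) converges in distribution. Then for each fixed z > b_γ, √n·(T_n(z) − T_0(z)) equals −(1 + γ^{-1}m(z))^{-2}·D·F_n(z)·D + (1 + γ^{-1}m(z))^{-1}·{√n·(D_n² − D²) + D·(E_{n,11} − G_n(z)) + (E_{n,11} − G_n(z))ᵀ·D} − z·H_n(z) + √n·((1/n)·E_{n,31}ᵀE_{n,31} − (1 − γ^{-1})·I_k) + o_P(1), where the error term converges to zero in probability as n → ∞. -/

import Mathlib

/-!
The secular matrix is an explicit algebraic function of a few `k × k` random matrices, and the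
expansion is a first-order Taylor expansion of that function; the work lies in showing that its
arguments fluctuate at scale `n^{-1/2}`.

*Algebra.* Put `Q = (Λ_n - z)⁻¹` and `Δ = E₁₁ - G_n(z)`. By the Woodbury identity for
`S₂₂ - z = (Λ_n - z) + (1/n) E₁₂ᵀ E₁₂` (`schur_alg`, `BlockModel.T_eq`),
`T_n(z) = (D_n + n^{-1/2} Δ)ᵀ K (D_n + n^{-1/2} Δ) - (z/n) E₂₁ᵀ Q E₂₁ + (1/n) E₃₁ᵀ E₃₁ - z`, where
`K⁻¹ = 1 + (1/n) E₁₂ Q E₁₂ᵀ = (1 + γ⁻¹ m(z)) + n^{-1/2} F_n(z)`. The last three terms are exactly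
`n^{-1/2}` times the `H_n` and `E₃₁` terms of the expansion, up to the constant `m(z)⁻¹`, by the
Marchenko–Pastur equation `m⁻¹ = -z γ⁻¹ m + (1 - γ⁻¹) - z` (`mpStieltjes_inv`). Expanding `K` to
second order in `n^{-1/2} F_n` leaves an explicit remainder (`rem_alg`, `BlockModel.remainder`), each
term of which contains a factor `D_n - D` or `n^{-1/2}`. It is negligible as soon as `D_n → D` in
probability and `E₁₁`, `F_n(z)`, `G_n(z)` are bounded in probability.

*Tightness.* `D_n → D` follows from the convergence in distribution of `√n (d² - μ)`
(`BlockModel.d_zero`). Given `Λ_n`, the entries of `F_n` and `G_n` are quadratic and bilinear forms in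
independent Gaussian vectors, hence controlled by second moments as soon as `Λ_n` stays below `z - δ`;
the diagonal of `F_n` contains in addition `√n (n⁻¹ tr Q - γ⁻¹ m(z))`.

*Edge of the spectrum.* That `Λ_n` stays below `z - δ` with probability tending to one
(`wishart_edge`) comes from Householder bidiagonalisation: peeling off one column and one row at a
time, the operator norm of the Gaussian matrix is at most the largest column norm plus the largest row
norm met on the way, and these have chi distributions.

*Resolvent trace.* With `ρ = n⁻¹ tr (z - Λ_n)⁻¹`, removing one row of the Wishart matrix at a time
gives `z ρ² - (z + γ⁻¹ - 1) ρ + γ⁻¹ = O_P(n^{-1/2})` (`loo_bound`, `loo_markov`). The limit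
`-γ⁻¹ m(z)` is the smaller root of this quadratic (`mpStieltjes_eq`, from the explicit integral). The
larger root is excluded by comparing two values of `z`: `ρ` is decreasing in `z`, whereas the larger
root increases (`root_select`). Hence `√n (ρ + γ⁻¹ m(z)) = O_P(1)` (`rho_tight`).
-/


open MeasureTheory ProbabilityTheory Filter Matrix Topology

noncomputable section

instance matrixMeasurableSpace {m n : Type*} : MeasurableSpace (Matrix m n ℝ) :=
  MeasurableSpace.pi

/-- Convergence in distribution (weak convergence of laws) of a sequence of random elements. -/
def TendstoInDist {Ω E : Type*} [MeasurableSpace Ω] [MeasurableSpace E] [TopologicalSpace E]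
    (P : Measure Ω) (X : ℕ → Ω → E) (ν : Measure E) : Prop :=
  ∀ f : BoundedContinuousFunction E ℝ,
    Tendsto (fun n => ∫ ω, f (X n ω) ∂P) atTop (𝓝 (∫ x, f x ∂ν))

/-- Convergence to zero in probability. -/
def TendstoInProbZero {Ω : Type*} [MeasurableSpace Ω] (P : Measure Ω) (X : ℕ → Ω → ℝ) : Prop :=
  ∀ ε : ℝ, 0 < ε → Tendsto (fun n => P {ω | ε ≤ |X n ω|}) atTop (𝓝 0)

/-- `ν` is a centered multivariate Gaussian measure with covariance function `C`
(characterized through one-dimensional projections). -/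
def IsCenteredGaussianCov {ι : Type*} [Fintype ι] (ν : Measure (ι → ℝ)) (C : ι → ι → ℝ) : Prop :=
  ∀ a : ι → ℝ,
    Measure.map (fun x => ∑ i, a i * x i) ν
      = gaussianReal 0 (Real.toNNReal (∑ i, ∑ j, a i * C i j * a j))

/-- The coordinates of `X` are iid `N(0, v)` random variables. -/
def IIDGaussian {Ω ι : Type*} [MeasurableSpace Ω] [Fintype ι] (P : Measure Ω)
    (X : Ω → ι → ℝ) (v : NNReal) : Prop :=
  Measure.map X P = Measure.pi fun _ : ι => gaussianReal 0 v

/-- Entries of a matrix, as a function on pairs of indices. -/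
def matEntries {m n : Type*} (A : Matrix m n ℝ) : m × n → ℝ := fun q => A q.1 q.2

/-- The eigenvalues of a (Hermitian) real matrix, sorted in decreasing order. -/
def eigsDesc {p : ℕ} (A : Matrix (Fin p) (Fin p) ℝ) : List ℝ :=
  if h : A.IsHermitian then (List.ofFn h.eigenvalues).insertionSort (· ≥ ·) else []

/-- The `i`-th largest eigenvalue of a (Hermitian) real matrix (`i` is 0-based). -/
def ithEigDesc {p : ℕ} (A : Matrix (Fin p) (Fin p) ℝ) (i : ℕ) : ℝ :=
  (eigsDesc A).getD i 0

/-- Lower edge `a_γ = (1 - γ^{-1/2})²` of the Marchenko–Pastur law. -/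
def aGamma (γ : ℝ) : ℝ := (1 - 1 / Real.sqrt γ) ^ 2

/-- Upper edge `b_γ = (1 + γ^{-1/2})²` of the Marchenko–Pastur law. -/
def bGamma (γ : ℝ) : ℝ := (1 + 1 / Real.sqrt γ) ^ 2

/-- Density of the Marchenko–Pastur law with aspect ratio `γ`. -/
def mpDensity (γ t : ℝ) : ℝ :=
  if t ∈ Set.Icc (aGamma γ) (bGamma γ) then
    γ * Real.sqrt ((bGamma γ - t) * (t - aGamma γ)) / (2 * Real.pi * t)
  else 0

/-- The Marchenko–Pastur law with aspect ratio `γ`. -/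
def mpMeasure (γ : ℝ) : Measure ℝ :=
  volume.withDensity fun t => ENNReal.ofReal (mpDensity γ t)

/-- Stieltjes transform `m(z) = ∫ (t - z)⁻¹ dFMP_γ(t)` of the Marchenko–Pastur law. -/
def mpStieltjes (γ z : ℝ) : ℝ := ∫ t, (t - z)⁻¹ ∂(mpMeasure γ)

/-- The spiked low-rank-plus-noise model `X_n = √n U_n D_n V_nᵀ + E_n`
(Assumptions A1–A3, with `s = σ²` the noise variance and without the CLT
assumption on the factor strengths, which is stated separately when needed). -/
structure SpikedModel (k : ℕ) (γ s : ℝ) (p : ℕ → ℕ) (Ω : Type*) [MeasurableSpace Ω]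
    (P : Measure Ω) (μ : Fin k → ℝ) where
  U : ∀ n : ℕ, Ω → Matrix (Fin n) (Fin k) ℝ
  V : ∀ n : ℕ, Ω → Matrix (Fin (p n)) (Fin k) ℝ
  d : ∀ n : ℕ, Ω → Fin k → ℝ
  E : ∀ n : ℕ, Ω → Matrix (Fin n) (Fin (p n)) ℝ
  /- A1 -/
  orthU : ∀ n ω, (U n ω)ᵀ * U n ω = 1
  orthV : ∀ n ω, (V n ω)ᵀ * V n ω = 1
  aspect : Tendsto (fun n : ℕ => Real.sqrt n * ((n : ℝ) / (p n) - γ)) atTop (𝓝 0)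
  /- A2 (except for the CLT on the factor strengths) -/
  dpos : ∀ n ω i, 0 < d n ω i
  dstrictanti : ∀ n ω, StrictAnti (d n ω)
  dconv : ∀ᵐ ω ∂P, ∀ i, Tendsto (fun n => d n ω i) atTop (𝓝 (Real.sqrt (μ i)))
  /- A3 -/
  Egauss : ∀ n, IIDGaussian P (fun ω => matEntries (E n ω)) (Real.toNNReal s)
  Eindep : ∀ n, IndepFun (E n) (fun ω => (U n ω, d n ω, V n ω)) P

/-- The observed data matrix `X_n = √n U_n D_n V_nᵀ + E_n`. -/
def SpikedModel.X {k : ℕ} {γ s : ℝ} {p : ℕ → ℕ} {Ω : Type*} [MeasurableSpace Ω]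
    {P : Measure Ω} {μ : Fin k → ℝ} (M : SpikedModel k γ s p Ω P μ) (n : ℕ) (ω : Ω) :
    Matrix (Fin n) (Fin (p n)) ℝ :=
  Real.sqrt n • (M.U n ω * Matrix.diagonal (M.d n ω) * (M.V n ω)ᵀ) + M.E n ω

/-- `√n Uh (diagonal √μh) Vhᵀ` is the SVD of `X` truncated to the `k` largest terms:
the `μh i` are the `k` largest eigenvalues of `(1/n) Xᵀ X` in decreasing order, the columns
of `Vh` are corresponding orthonormal eigenvectors (right singular vectors), and the columns
of `Uh` are corresponding orthonormal left singular vectors. -/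
def IsTruncatedSVD {n q k : ℕ} (X : Matrix (Fin n) (Fin q) ℝ)
    (Uh : Matrix (Fin n) (Fin k) ℝ) (μh : Fin k → ℝ) (Vh : Matrix (Fin q) (Fin k) ℝ) : Prop :=
  Uhᵀ * Uh = 1 ∧ Vhᵀ * Vh = 1 ∧ Antitone μh ∧ (∀ i, 0 ≤ μh i) ∧
  (∀ i : Fin k, μh i = ithEigDesc ((1 / (n : ℝ)) • (Xᵀ * X)) i) ∧
  (∀ i : Fin k, (Xᵀ * X) *ᵥ (fun j => Vh j i) = ((n : ℝ) * μh i) • fun j => Vh j i) ∧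
  (∀ i : Fin k, X *ᵥ (fun j => Vh j i) = (Real.sqrt n * Real.sqrt (μh i)) • fun j => Uh j i)

/-- Almost sure limit `μ̄` of the top sample eigenvalues (`s = σ²`). -/
def muBar (γ s μi : ℝ) : ℝ :=
  if s / Real.sqrt γ < μi then (μi + s) * (1 + s / (γ * μi))
  else s * (1 + 1 / Real.sqrt γ) ^ 2

/-- Limiting covariance matrix `Σ̄` of the fluctuations of the top sample eigenvalues. -/
def sigmaBar {k : ℕ} (γ s : ℝ) (μ : Fin k → ℝ) (Cmat : Matrix (Fin k) (Fin k) ℝ) :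
    Fin k → Fin k → ℝ := fun i j =>
  if s / Real.sqrt γ < μ i ∧ s / Real.sqrt γ < μ j then
    Cmat i j * (1 - s ^ 2 / (γ * (μ i) ^ 2)) * (1 - s ^ 2 / (γ * (μ j) ^ 2))
      + (if i = j then 2 * s * (2 * μ i + (1 + γ⁻¹) * s) * (1 - s ^ 2 / (γ * (μ i) ^ 2)) else 0)
  else 0

/-- The independent noise blocks `E_{n,12}`, `E_{n,21}` and the scaled Wishart eigenvalues
`Λ_n` appearing after the change of basis. -/
structure NoiseBlocks (k : ℕ) (γ : ℝ) (p : ℕ → ℕ) (Ω : Type*) [MeasurableSpace Ω]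
    (P : Measure Ω) where
  E12 : ∀ n : ℕ, Ω → Matrix (Fin k) (Fin (p n - k)) ℝ
  E21 : ∀ n : ℕ, Ω → Matrix (Fin (p n - k)) (Fin k) ℝ
  W : ∀ n : ℕ, Ω → Matrix (Fin (n - k)) (Fin (p n - k)) ℝ
  lam : ∀ n : ℕ, Ω → Fin (p n - k) → ℝ
  aspect : Tendsto (fun n : ℕ => (n : ℝ) / (p n)) atTop (𝓝 γ)
  pTop : Tendsto p atTop atTop
  E12gauss : ∀ n, IIDGaussian P (fun ω => matEntries (E12 n ω)) 1
  E21gauss : ∀ n, IIDGaussian P (fun ω => matEntries (E21 n ω)) 1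
  Wgauss : ∀ n, IIDGaussian P (fun ω => matEntries (W n ω)) 1
  /-- `n λ_{n,α}` are the decreasingly ordered eigenvalues of the white Wishart
  matrix `Wᵀ W`. -/
  lamEig : ∀ n ω, ∀ α : Fin (p n - k), (n : ℝ) * lam n ω α = ithEigDesc ((W n ω)ᵀ * W n ω) α
  indep1 : ∀ n, IndepFun (E12 n) (fun ω => (E21 n ω, W n ω)) P
  indep2 : ∀ n, IndepFun (E21 n) (W n) P

namespace NoiseBlocks

variable {k : ℕ} {γ : ℝ} {p : ℕ → ℕ} {Ω : Type*} [MeasurableSpace Ω] {P : Measure Ω}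

/-- `(1/n) E_{n,12} (Λ_n − z I)⁻¹ E_{n,12}ᵀ`. -/
def q1 (B : NoiseBlocks k γ p Ω P) (n : ℕ) (ω : Ω) (z : ℝ) : Matrix (Fin k) (Fin k) ℝ :=
  (1 / (n : ℝ)) • (B.E12 n ω * (Matrix.diagonal (B.lam n ω) - z • 1)⁻¹ * (B.E12 n ω)ᵀ)

/-- `(1/n) E_{n,21}ᵀ (Λ_n − z I)⁻¹ E_{n,21}`. -/
def q2 (B : NoiseBlocks k γ p Ω P) (n : ℕ) (ω : Ω) (z : ℝ) : Matrix (Fin k) (Fin k) ℝ :=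
  (1 / (n : ℝ)) • ((B.E21 n ω)ᵀ * (Matrix.diagonal (B.lam n ω) - z • 1)⁻¹ * B.E21 n ω)

/-- `(1/n) E_{n,12} (Λ_n − z I)⁻¹ Λ_n^{1/2} E_{n,21}`. -/
def q3 (B : NoiseBlocks k γ p Ω P) (n : ℕ) (ω : Ω) (z : ℝ) : Matrix (Fin k) (Fin k) ℝ :=
  (1 / (n : ℝ)) • (B.E12 n ω * (Matrix.diagonal (B.lam n ω) - z • 1)⁻¹ *
    Matrix.diagonal (fun α => Real.sqrt (B.lam n ω α)) * B.E21 n ω)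

/-- `F_n(z)`. -/
def Fn (B : NoiseBlocks k γ p Ω P) (n : ℕ) (ω : Ω) (z : ℝ) : Matrix (Fin k) (Fin k) ℝ :=
  Real.sqrt n • (B.q1 n ω z - (γ⁻¹ * mpStieltjes γ z) • 1)

/-- `G_n(z)`. -/
def Gn (B : NoiseBlocks k γ p Ω P) (n : ℕ) (ω : Ω) (z : ℝ) : Matrix (Fin k) (Fin k) ℝ :=
  Real.sqrt n • B.q3 n ω z

/-- `H_n(z)`. -/
def Hn (B : NoiseBlocks k γ p Ω P) (n : ℕ) (ω : Ω) (z : ℝ) : Matrix (Fin k) (Fin k) ℝ :=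
  Real.sqrt n • (B.q2 n ω z - (γ⁻¹ * mpStieltjes γ z) • 1)

end NoiseBlocks

/-- The difference quotient `(m(z₁) − m(z₂))/(z₁ − z₂)`, interpreted as `m'(z₁)` when
`z₁ = z₂`: covariance kernel of `F` and `H`. -/
def qFH (γ z₁ z₂ : ℝ) : ℝ :=
  if z₁ = z₂ then deriv (mpStieltjes γ) z₁
  else (mpStieltjes γ z₁ - mpStieltjes γ z₂) / (z₁ - z₂)

/-- The difference quotient `(z₁ m(z₁) − z₂ m(z₂))/(z₁ − z₂)`, interpreted as
`m(z₁) + z₁ m'(z₁)` when `z₁ = z₂`: covariance kernel of `G`. -/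
def qG (γ z₁ z₂ : ℝ) : ℝ :=
  if z₁ = z₂ then mpStieltjes γ z₁ + z₁ * deriv (mpStieltjes γ) z₁
  else (z₁ * mpStieltjes γ z₁ - z₂ * mpStieltjes γ z₂) / (z₁ - z₂)

/-- Covariance function of the limiting Gaussian family
`(F(z_r), G(z_r), H(z_r))_{r}` (index component `Fin 3`: `0 ↦ F`, `1 ↦ G`, `2 ↦ H`);
it encodes that `F`, `G`, `H` are mutually independent, that `F` and `H` are symmetric,
and that all covariances vanish except the ones prescribed. -/
def covFGH (γ : ℝ) {l k : ℕ} (zs : Fin l → ℝ) :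
    Fin l × Fin 3 × Fin k × Fin k → Fin l × Fin 3 × Fin k × Fin k → ℝ := fun q q' =>
  if q.2.1 = q'.2.1 then
    if q.2.1 = 1 then
      γ⁻¹ * qG γ (zs q.1) (zs q'.1) *
        (if q.2.2.1 = q'.2.2.1 ∧ q.2.2.2 = q'.2.2.2 then 1 else 0)
    else
      γ⁻¹ * qFH γ (zs q.1) (zs q'.1) *
        ((if q.2.2.1 = q'.2.2.1 ∧ q.2.2.2 = q'.2.2.2 then 1 else 0)
          + (if q.2.2.1 = q'.2.2.2 ∧ q.2.2.2 = q'.2.2.1 then 1 else 0))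
  else 0

/-- The model after the orthogonal change of basis: the data matrix `X̃_n` has block form
`[[√n D_n + E₁₁, E₁₂], [E₂₁, √n Λ_n^{1/2}], [E₃₁, 0]]`, with all blocks mutually independent,
the `E`-blocks having iid `N(0,1)` entries and `n λ_{n,α}` the decreasingly ordered
eigenvalues of a white Wishart matrix of dimension `p − k` with `n − k` degrees of freedom.
(Monotonicity assumptions on `d` and `μ` are stated separately when needed.) -/
structure BlockModel (k : ℕ) (γ : ℝ) (p : ℕ → ℕ) (Ω : Type*) [MeasurableSpace Ω]
    (P : Measure Ω) (μ : Fin k → ℝ) where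
  d : ∀ n : ℕ, Ω → Fin k → ℝ
  E11 : ∀ n : ℕ, Ω → Matrix (Fin k) (Fin k) ℝ
  E12 : ∀ n : ℕ, Ω → Matrix (Fin k) (Fin (p n - k)) ℝ
  E21 : ∀ n : ℕ, Ω → Matrix (Fin (p n - k)) (Fin k) ℝ
  E31 : ∀ n : ℕ, Ω → Matrix (Fin (n - p n)) (Fin k) ℝ
  W : ∀ n : ℕ, Ω → Matrix (Fin (n - k)) (Fin (p n - k)) ℝ
  lam : ∀ n : ℕ, Ω → Fin (p n - k) → ℝ
  aspect : Tendsto (fun n : ℕ => Real.sqrt n * ((n : ℝ) / (p n) - γ)) atTop (𝓝 0)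
  pTop : Tendsto p atTop atTop
  dpos : ∀ n ω i, 0 < d n ω i
  dconv : ∀ᵐ ω ∂P, ∀ i, Tendsto (fun n => d n ω i) atTop (𝓝 (Real.sqrt (μ i)))
  E11gauss : ∀ n, IIDGaussian P (fun ω => matEntries (E11 n ω)) 1
  E12gauss : ∀ n, IIDGaussian P (fun ω => matEntries (E12 n ω)) 1
  E21gauss : ∀ n, IIDGaussian P (fun ω => matEntries (E21 n ω)) 1
  E31gauss : ∀ n, IIDGaussian P (fun ω => matEntries (E31 n ω)) 1
  Wgauss : ∀ n, IIDGaussian P (fun ω => matEntries (W n ω)) 1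
  lamEig : ∀ n ω, ∀ α : Fin (p n - k), (n : ℝ) * lam n ω α = ithEigDesc ((W n ω)ᵀ * W n ω) α
  indep1 : ∀ n, IndepFun (d n) (fun ω => (E11 n ω, E12 n ω, E21 n ω, E31 n ω, W n ω)) P
  indep2 : ∀ n, IndepFun (E11 n) (fun ω => (E12 n ω, E21 n ω, E31 n ω, W n ω)) P
  indep3 : ∀ n, IndepFun (E12 n) (fun ω => (E21 n ω, E31 n ω, W n ω)) P
  indep4 : ∀ n, IndepFun (E21 n) (fun ω => (E31 n ω, W n ω)) P
  indep5 : ∀ n, IndepFun (E31 n) (W n) P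

namespace BlockModel

variable {k : ℕ} {γ : ℝ} {p : ℕ → ℕ} {Ω : Type*} [MeasurableSpace Ω] {P : Measure Ω}
  {μ : Fin k → ℝ}

/-- Upper-left block `S_{n,11}` of `S_n = (1/n) X̃_nᵀ X̃_n`. -/
def S11 (M : BlockModel k γ p Ω P μ) (n : ℕ) (ω : Ω) : Matrix (Fin k) (Fin k) ℝ :=
  Matrix.diagonal (fun i => (M.d n ω i) ^ 2)
    + (1 / Real.sqrt n) •
      (Matrix.diagonal (M.d n ω) * M.E11 n ω + (M.E11 n ω)ᵀ * Matrix.diagonal (M.d n ω))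
    + (1 / (n : ℝ)) •
      ((M.E11 n ω)ᵀ * M.E11 n ω + (M.E21 n ω)ᵀ * M.E21 n ω + (M.E31 n ω)ᵀ * M.E31 n ω)

/-- Block `S_{n,12}` of `S_n = (1/n) X̃_nᵀ X̃_n`. -/
def S12 (M : BlockModel k γ p Ω P μ) (n : ℕ) (ω : Ω) : Matrix (Fin k) (Fin (p n - k)) ℝ :=
  (1 / Real.sqrt n) • (Matrix.diagonal (M.d n ω) * M.E12 n ω
      + (M.E21 n ω)ᵀ * Matrix.diagonal (fun α => Real.sqrt (M.lam n ω α)))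
    + (1 / (n : ℝ)) • ((M.E11 n ω)ᵀ * M.E12 n ω)

/-- Block `S_{n,21}` of `S_n = (1/n) X̃_nᵀ X̃_n`. -/
def S21 (M : BlockModel k γ p Ω P μ) (n : ℕ) (ω : Ω) : Matrix (Fin (p n - k)) (Fin k) ℝ :=
  (1 / Real.sqrt n) • ((M.E12 n ω)ᵀ * Matrix.diagonal (M.d n ω)
      + Matrix.diagonal (fun α => Real.sqrt (M.lam n ω α)) * M.E21 n ω)
    + (1 / (n : ℝ)) • ((M.E12 n ω)ᵀ * M.E11 n ω)

/-- Lower-right block `S_{n,22}` of `S_n = (1/n) X̃_nᵀ X̃_n`. -/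
def S22 (M : BlockModel k γ p Ω P μ) (n : ℕ) (ω : Ω) :
    Matrix (Fin (p n - k)) (Fin (p n - k)) ℝ :=
  Matrix.diagonal (M.lam n ω) + (1 / (n : ℝ)) • ((M.E12 n ω)ᵀ * M.E12 n ω)

/-- The secular-equation matrix `T_n(z) = S₁₁ − z I − S₁₂ (S₂₂ − z I)⁻¹ S₂₁`. -/
def T (M : BlockModel k γ p Ω P μ) (n : ℕ) (ω : Ω) (z : ℝ) : Matrix (Fin k) (Fin k) ℝ :=
  M.S11 n ω - z • 1 - M.S12 n ω * (M.S22 n ω - z • 1)⁻¹ * M.S21 n ω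

/-- `F_n(z)` in the block model. -/
def Fmat (M : BlockModel k γ p Ω P μ) (n : ℕ) (ω : Ω) (z : ℝ) : Matrix (Fin k) (Fin k) ℝ :=
  Real.sqrt n • ((1 / (n : ℝ)) •
      (M.E12 n ω * (Matrix.diagonal (M.lam n ω) - z • 1)⁻¹ * (M.E12 n ω)ᵀ)
    - (γ⁻¹ * mpStieltjes γ z) • 1)

/-- `G_n(z)` in the block model. -/
def Gmat (M : BlockModel k γ p Ω P μ) (n : ℕ) (ω : Ω) (z : ℝ) : Matrix (Fin k) (Fin k) ℝ :=
  Real.sqrt n • ((1 / (n : ℝ)) •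
    (M.E12 n ω * (Matrix.diagonal (M.lam n ω) - z • 1)⁻¹ *
      Matrix.diagonal (fun α => Real.sqrt (M.lam n ω α)) * M.E21 n ω))

/-- `H_n(z)` in the block model. -/
def Hmat (M : BlockModel k γ p Ω P μ) (n : ℕ) (ω : Ω) (z : ℝ) : Matrix (Fin k) (Fin k) ℝ :=
  Real.sqrt n • ((1 / (n : ℝ)) •
      ((M.E21 n ω)ᵀ * (Matrix.diagonal (M.lam n ω) - z • 1)⁻¹ * M.E21 n ω)
    - (γ⁻¹ * mpStieltjes γ z) • 1)

/-- `R_n(z) = D_n + n^{-1/2} E₁₁ − n^{-1/2} E₁₂ (S₂₂ − z I)⁻¹ S₂₁`. -/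
def Rmat (M : BlockModel k γ p Ω P μ) (n : ℕ) (ω : Ω) (z : ℝ) : Matrix (Fin k) (Fin k) ℝ :=
  Matrix.diagonal (M.d n ω) + (1 / Real.sqrt n) • M.E11 n ω
    - (1 / Real.sqrt n) • (M.E12 n ω * (M.S22 n ω - z • 1)⁻¹ * M.S21 n ω)

/-- Euclidean norm of `x̃ = (x; −(S₂₂ − z I)⁻¹ S₂₁ x)`. -/
def xtNorm (M : BlockModel k γ p Ω P μ) (n : ℕ) (ω : Ω) (z : ℝ) (x : Fin k → ℝ) : ℝ :=
  Real.sqrt (∑ j, x j ^ 2 +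
    ∑ α, ((((M.S22 n ω - z • 1)⁻¹ * M.S21 n ω) *ᵥ x) α) ^ 2)

/-- First `k` components of the left singular vector: `y = R_n(z) x / ‖x̃‖₂`. -/
def yvec (M : BlockModel k γ p Ω P μ) (n : ℕ) (ω : Ω) (z : ℝ) (x : Fin k → ℝ) :
    Fin k → ℝ :=
  (M.xtNorm n ω z x)⁻¹ • (M.Rmat n ω z *ᵥ x)

end BlockModel

/-- The deterministic limit `T₀(z) = (1 + γ⁻¹ m(z))⁻¹ D² + m(z)⁻¹ I` of `T_n(z)`. -/
def T0lim {k : ℕ} (γ : ℝ) (μ : Fin k → ℝ) (z : ℝ) : Matrix (Fin k) (Fin k) ℝ :=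
  (1 + γ⁻¹ * mpStieltjes γ z)⁻¹ • Matrix.diagonal μ + (mpStieltjes γ z)⁻¹ • 1

/-- The first-order perturbation term `T_{n,1}(z)` of the secular matrix:
`−(1 + γ⁻¹ m(z))⁻² D F_n(z) D + (1 + γ⁻¹ m(z))⁻¹ {√n (D_n² − D²) + D (E₁₁ − G_n(z)) +
(E₁₁ − G_n(z))ᵀ D} − z H_n(z) + √n ((1/n) E₃₁ᵀ E₃₁ − (1 − γ⁻¹) I_k)`, where
`D = diag(√μ_1, …, √μ_k)`. -/
def BlockModel.expansionTerm {k : ℕ} {γ : ℝ} {p : ℕ → ℕ} {Ω : Type*} [MeasurableSpace Ω]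
    {P : MeasureTheory.Measure Ω} {μ : Fin k → ℝ} (M : BlockModel k γ p Ω P μ)
    (n : ℕ) (ω : Ω) (z : ℝ) : Matrix (Fin k) (Fin k) ℝ :=
  - ((1 + γ⁻¹ * mpStieltjes γ z)⁻¹) ^ 2 •
      (Matrix.diagonal (fun i => Real.sqrt (μ i)) * M.Fmat n ω z *
        Matrix.diagonal (fun i => Real.sqrt (μ i)))
  + (1 + γ⁻¹ * mpStieltjes γ z)⁻¹ •
      (Real.sqrt n • (Matrix.diagonal (fun i => (M.d n ω i) ^ 2) - Matrix.diagonal μ)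
        + Matrix.diagonal (fun i => Real.sqrt (μ i)) * (M.E11 n ω - M.Gmat n ω z)
        + (M.E11 n ω - M.Gmat n ω z)ᵀ * Matrix.diagonal (fun i => Real.sqrt (μ i)))
  - z • M.Hmat n ω z
  + Real.sqrt n • ((1 / (n : ℝ)) • ((M.E31 n ω)ᵀ * M.E31 n ω) - (1 - γ⁻¹) • 1)

/-! ### The Stieltjes transform of the Marchenko–Pastur law -/

/-- An antiderivative of `s ↦ √(1 - s²) / (ζ - s)` on `(-1, 1)`. -/
def semicircleAntideriv (ζ s : ℝ) : ℝ :=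
  -Real.sqrt (1 - s ^ 2) + ζ * Real.arcsin s
    + Real.sqrt (ζ ^ 2 - 1) * Real.arcsin ((1 - ζ * s) / (ζ - s))

theorem semicircleAntideriv_hasDerivAt {ζ s : ℝ} (hζ : 1 ≤ ζ) (hs : s ∈ Set.Ioo (-1 : ℝ) 1) :
    HasDerivAt (semicircleAntideriv ζ) (Real.sqrt (1 - s ^ 2) / (ζ - s)) s := by
  obtain ⟨h1, h2⟩ := hs
  have hpos : 0 < 1 - s ^ 2 := by nlinarith
  have hζs : 0 < ζ - s := by linarith
  set w := Real.sqrt (1 - s ^ 2) with hw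
  have hwpos : 0 < w := Real.sqrt_pos.mpr hpos
  have hw2 : w ^ 2 = 1 - s ^ 2 := Real.sq_sqrt hpos.le
  have d1 : HasDerivAt (fun s : ℝ => -Real.sqrt (1 - s ^ 2)) (s / w) s := by
    have h := (((hasDerivAt_id s).pow 2).const_sub 1).sqrt hpos.ne'
    refine HasDerivAt.congr_deriv (f := fun s : ℝ => -Real.sqrt (1 - s ^ 2)) h.neg ?_
    have : Real.sqrt (1 - (id ^ 2 : ℝ → ℝ) s) = w := rfl
    rw [this]
    simp only [id_eq]
    field_simp; norm_num
  have d2 : HasDerivAt (fun s : ℝ => ζ * Real.arcsin s) (ζ * (1 / w)) s :=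
    (Real.hasDerivAt_arcsin (by linarith) (by linarith)).const_mul ζ
  rcases hζ.eq_or_lt with h | h
  · subst h
    have d3 : HasDerivAt (fun s : ℝ => Real.sqrt ((1:ℝ) ^ 2 - 1)
        * Real.arcsin ((1 - 1 * s) / (1 - s))) 0 s := by
      simpa using hasDerivAt_const s (0:ℝ)
    refine HasDerivAt.congr_deriv ((d1.add d2).add d3) ?_
    have h1s : (1 : ℝ) - s ≠ 0 := hζs.ne'
    field_simp
    rw [hw2]; ring
  · have hq : 0 < ζ ^ 2 - 1 := by nlinarith
    set k := Real.sqrt (ζ ^ 2 - 1) with hk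
    have hkpos : 0 < k := Real.sqrt_pos.mpr hq
    have hk2 : k ^ 2 = ζ ^ 2 - 1 := Real.sq_sqrt hq.le
    have hid : 1 - ((1 - ζ * s) / (ζ - s)) ^ 2 = (k * w / (ζ - s)) ^ 2 := by
      field_simp
      rw [hk2, hw2]; ring
    have hlt : ((1 - ζ * s) / (ζ - s)) ^ 2 < 1 := by
      have : 0 < (k * w / (ζ - s)) ^ 2 := by positivity
      linarith
    have hne1 : (1 - ζ * s) / (ζ - s) ≠ -1 := by intro h; rw [h] at hlt; norm_num at hlt
    have hne2 : (1 - ζ * s) / (ζ - s) ≠ 1 := by intro h; rw [h] at hlt; norm_num at hlt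
    have d0 : HasDerivAt (fun s : ℝ => (1 - ζ * s) / (ζ - s))
        (((-(ζ)) * (ζ - s) - (1 - ζ * s) * (-1)) / (ζ - s) ^ 2) s := by
      refine HasDerivAt.div ?_ ?_ hζs.ne'
      · simpa using ((hasDerivAt_id s).const_mul ζ).const_sub 1
      · simpa using (hasDerivAt_id s).const_sub ζ
    have d3 := ((Real.hasDerivAt_arcsin hne1 hne2).comp s d0).const_mul k
    have hsq : Real.sqrt (1 - ((1 - ζ * s) / (ζ - s)) ^ 2) = k * w / (ζ - s) := by
      rw [hid, Real.sqrt_sq (by positivity)]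
    rw [hsq] at d3
    refine HasDerivAt.congr_deriv ((d1.add d2).add d3) ?_
    have h1s : ζ - s ≠ 0 := hζs.ne'
    field_simp
    rw [hw2]; ring

theorem semicircleAntideriv_continuousOn {ζ : ℝ} (hζ : 1 ≤ ζ) :
    ContinuousOn (semicircleAntideriv ζ) (Set.Icc (-1) 1) := by
  rcases hζ.eq_or_lt with h | h
  · subst h
    have : semicircleAntideriv 1 = fun s => -Real.sqrt (1 - s ^ 2) + 1 * Real.arcsin s := by
      funext s; simp [semicircleAntideriv]
    rw [this]
    fun_prop
  · unfold semicircleAntideriv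
    have : ContinuousOn (fun s : ℝ => (1 - ζ * s) / (ζ - s)) (Set.Icc (-1) 1) := by
      apply ContinuousOn.div (by fun_prop) (by fun_prop)
      intro x hx; have := hx.2; intro h0; linarith
    have h2 := Real.continuous_arcsin.comp_continuousOn this
    exact ContinuousOn.add (by fun_prop) (continuousOn_const.mul h2)

/-- The Stieltjes transform of the semicircle law, to the right of its support; the Marchenko–Pastur
one reduces to it by partial fractions and an affine change of variables. -/
theorem semicircle_stieltjes {ζ : ℝ} (hζ : 1 ≤ ζ) :
    IntervalIntegrable (fun s => Real.sqrt (1 - s ^ 2) / (ζ - s)) volume (-1) 1 ∧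
    ∫ s in (-1 : ℝ)..1, Real.sqrt (1 - s ^ 2) / (ζ - s)
      = Real.pi * (ζ - Real.sqrt (ζ ^ 2 - 1)) := by
  have hInt : IntervalIntegrable (fun s => Real.sqrt (1 - s ^ 2) / (ζ - s)) volume (-1) 1 := by
    refine intervalIntegral.intervalIntegrable_deriv_of_nonneg (g := semicircleAntideriv ζ)
      ?_ ?_ ?_
    · rw [Set.uIcc_of_le (by norm_num)]; exact semicircleAntideriv_continuousOn hζ
    · intro x hx
      rw [min_eq_left (by norm_num), max_eq_right (by norm_num)] at hx
      exact semicircleAntideriv_hasDerivAt hζ hx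
    · intro x hx
      rw [min_eq_left (by norm_num), max_eq_right (by norm_num)] at hx
      exact div_nonneg (Real.sqrt_nonneg _) (by linarith [hx.2])
  refine ⟨hInt, ?_⟩
  rw [intervalIntegral.integral_eq_sub_of_hasDerivAt_of_le (by norm_num)
    (semicircleAntideriv_continuousOn hζ)
    (fun x hx => semicircleAntideriv_hasDerivAt hζ hx) hInt]
  rcases hζ.eq_or_lt with h | h
  · subst h
    simp [semicircleAntideriv, Real.arcsin_neg]
  · have e1 : (1 - ζ * 1) / (ζ - 1) = -1 := by
      rw [div_eq_iff (by linarith)]; ring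
    have e2 : (1 - ζ * (-1)) / (ζ - (-1)) = 1 := by
      rw [div_eq_iff (by linarith)]; ring
    simp only [semicircleAntideriv, e1, e2, Real.arcsin_neg, Real.arcsin_one]
    norm_num
    ring

/-- The lower root of `z ρ² - (z + y - 1) ρ + y = 0` with `y = γ⁻¹`, which is the limit of
`n⁻¹ tr (z - Λ_n)⁻¹`. -/
def rhoLim (γ z : ℝ) : ℝ :=
  ((z + γ⁻¹ - 1) - Real.sqrt ((z - aGamma γ) * (z - bGamma γ))) / (2 * z)

theorem sqrt_quot_scaled (a b w r c s : ℝ) (hr : 0 < r) (ha : a = c - r) (hb : b = c + r) :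
    Real.sqrt ((b - (r * s + c)) * ((r * s + c) - a)) / (w - (r * s + c))
      = Real.sqrt (1 - s ^ 2) / ((w - c) / r - s) := by
  subst ha hb
  have : (c + r - (r * s + c)) * (r * s + c - (c - r)) = r ^ 2 * (1 - s ^ 2) := by ring
  rw [this, Real.sqrt_mul (sq_nonneg r), Real.sqrt_sq hr.le]
  have : w - (r * s + c) = r * ((w - c) / r - s) := by field_simp; ring
  rw [this, mul_div_mul_left _ _ hr.ne']

theorem mp_pieces {a b w : ℝ} (hab : a < b) (hw : b ≤ w) :
    IntervalIntegrable (fun t => Real.sqrt ((b - t) * (t - a)) / (w - t)) volume a b ∧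
    ∫ t in a..b, Real.sqrt ((b - t) * (t - a)) / (w - t)
      = Real.pi * (w - (a + b) / 2 - Real.sqrt ((w - a) * (w - b))) := by
  set r := (b - a) / 2 with hr
  set c := (a + b) / 2 with hc
  have hrpos : 0 < r := by rw [hr]; linarith
  have ha : a = c - r := by rw [hr, hc]; ring
  have hb : b = c + r := by rw [hr, hc]; ring
  have hζ : 1 ≤ (w - c) / r := by rw [le_div_iff₀ hrpos]; linarith
  obtain ⟨h1, h2⟩ := semicircle_stieltjes hζ
  have hfun : (fun s => Real.sqrt (1 - s ^ 2) / ((w - c) / r - s))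
      = fun s => (fun t => Real.sqrt ((b - t) * (t - a)) / (w - t)) (r * s + c) := by
    funext s; exact (sqrt_quot_scaled a b w r c s hrpos ha hb).symm
  constructor
  · rw [hfun] at h1
    have h5 : IntervalIntegrable (fun t => (fun t => Real.sqrt ((b - t) * (t - a)) / (w - t))
        (r * (r⁻¹ * t - r⁻¹ * c) + c)) volume a b := by
      have := (h1.comp_sub_right (r⁻¹ * c)).comp_mul_left (c := r⁻¹)
      convert this using 1
      · field_simp; linarith
      · field_simp; linarith
    refine h5.congr ?_
    intro t _
    simp only
    have : r * (r⁻¹ * t - r⁻¹ * c) + c = t := by field_simp; ring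
    rw [this]
  · rw [hfun, intervalIntegral.integral_comp_mul_add
      (fun t => Real.sqrt ((b - t) * (t - a)) / (w - t)) hrpos.ne'] at h2
    have e1 : r * (-1) + c = a := by rw [ha]; ring
    have e2 : r * 1 + c = b := by rw [hb]; ring
    rw [e1, e2, smul_eq_mul, inv_mul_eq_iff_eq_mul₀ hrpos.ne'] at h2
    rw [h2]
    have : (w - a) * (w - b) = r ^ 2 * (((w - c) / r) ^ 2 - 1) := by
      rw [ha, hb]; field_simp; ring
    rw [this, Real.sqrt_mul (sq_nonneg r), Real.sqrt_sq hrpos.le]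
    field_simp

theorem mp_piece_left {a b : ℝ} (ha : 0 ≤ a) (hab : a < b) :
    IntervalIntegrable (fun t => Real.sqrt ((b - t) * (t - a)) / t) volume a b ∧
    ∫ t in a..b, Real.sqrt ((b - t) * (t - a)) / t
      = Real.pi * ((a + b) / 2 - Real.sqrt (a * b)) := by
  obtain ⟨h1, h2⟩ := mp_pieces (a := -b) (b := -a) (w := 0) (by linarith) (by linarith)
  have hfun : (fun t : ℝ => (fun t => Real.sqrt ((-a - t) * (t - -b)) / (0 - t)) (-t))
      = fun t => Real.sqrt ((b - t) * (t - a)) / t := by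
    funext t
    simp only
    congr 2 <;> ring
  constructor
  · have := h1.comp_sub_left 0
    simp only [zero_sub, neg_neg] at this
    have h3 : IntervalIntegrable
        (fun t : ℝ => (fun t => Real.sqrt ((-a - t) * (t - -b)) / (0 - t)) (-t)) volume a b := by
      simpa using this.symm
    rwa [hfun] at h3
  · rw [← hfun, intervalIntegral.integral_comp_neg
      (fun t => Real.sqrt ((-a - t) * (t - -b)) / (0 - t)), h2]
    congr 2
    · ring
    · congr 1; ring

theorem gamma_edges {γ : ℝ} (hγ : 1 ≤ γ) :
    0 ≤ aGamma γ ∧ aGamma γ < bGamma γ ∧ (aGamma γ + bGamma γ) / 2 = 1 + γ⁻¹ ∧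
    Real.sqrt (aGamma γ * bGamma γ) = 1 - γ⁻¹ ∧ 1 < bGamma γ := by
  have hs : 0 < Real.sqrt γ := Real.sqrt_pos.mpr (by linarith)
  have h1 : (1 / Real.sqrt γ) ^ 2 = γ⁻¹ := by
    rw [div_pow, Real.sq_sqrt (by linarith)]; simp
  have h2 : 0 < 1 / Real.sqrt γ := by positivity
  have h3 : γ⁻¹ ≤ 1 := inv_le_one_of_one_le₀ hγ
  refine ⟨sq_nonneg _, ?_, ?_, ?_, ?_⟩
  · unfold aGamma bGamma; nlinarith
  · unfold aGamma bGamma; nlinarith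
  · have : aGamma γ * bGamma γ = (1 - γ⁻¹) ^ 2 := by
      unfold aGamma bGamma; rw [← h1]; ring
    rw [this, Real.sqrt_sq (by linarith)]
  · unfold bGamma; nlinarith

/-- Closed form of the Stieltjes transform of the Marchenko–Pastur law to the right of its
support. -/
theorem mpStieltjes_eq {γ z : ℝ} (hγ : 1 ≤ γ) (hz : bGamma γ < z) :
    γ⁻¹ * mpStieltjes γ z = - rhoLim γ z := by
  obtain ⟨ha, hab, hsum, hprod, hb1⟩ := gamma_edges hγ
  have hγ0 : 0 < γ := by linarith
  have hz0 : 0 < z := by linarith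
  have hmeas : Measurable (mpDensity γ) := by
    unfold mpDensity
    refine Measurable.ite measurableSet_Icc ?_ measurable_const
    fun_prop
  have hnn : ∀ t, 0 ≤ mpDensity γ t := by
    intro t
    unfold mpDensity
    split_ifs with h
    · have : 0 ≤ t := ha.trans h.1
      positivity
    · exact le_rfl
  unfold mpStieltjes mpMeasure
  rw [integral_withDensity_eq_integral_toReal_smul (by fun_prop) (by simp)]
  simp only [ENNReal.toReal_ofReal (hnn _), smul_eq_mul]
  have h1 : ∫ t, mpDensity γ t * (t - z)⁻¹ =
      ∫ t in (aGamma γ)..(bGamma γ), (-(γ / (2 * Real.pi * z))) *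
        (Real.sqrt ((bGamma γ - t) * (t - aGamma γ)) / t
          + Real.sqrt ((bGamma γ - t) * (t - aGamma γ)) / (z - t)) := by
    rw [intervalIntegral.integral_of_le hab.le, ← integral_Icc_eq_integral_Ioc,
      ← integral_indicator measurableSet_Icc]
    congr 1
    funext t
    by_cases ht : t ∈ Set.Icc (aGamma γ) (bGamma γ)
    · rw [Set.indicator_of_mem ht]
      unfold mpDensity
      rw [if_pos ht]
      have hzt : z - t ≠ 0 := by have := ht.2; intro h; linarith
      have hzt' : t - z ≠ 0 := by have := ht.2; intro h; linarith
      rcases eq_or_ne t 0 with h0 | h0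
      · subst h0
        have : aGamma γ = 0 := le_antisymm ht.1 ha
        simp [this]
      · have hpi := Real.pi_ne_zero
        field_simp
        ring
    · rw [Set.indicator_of_notMem ht]
      unfold mpDensity
      rw [if_neg ht, zero_mul]
  obtain ⟨i1, v1⟩ := mp_piece_left ha hab
  obtain ⟨i2, v2⟩ := mp_pieces hab hz.le
  rw [h1, intervalIntegral.integral_const_mul, intervalIntegral.integral_add i1 i2, v1, v2, hprod,
    hsum]
  unfold rhoLim
  have hpi := Real.pi_ne_zero
  field_simp
  ring

/-- `rhoLim` solves the Marchenko–Pastur equation and lies in `(0, 1)`, so that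
`1 + γ⁻¹ m(z) = 1 - rhoLim γ z` is positive. -/
theorem rhoLim_spec {γ z : ℝ} (hγ : 1 ≤ γ) (hz : bGamma γ < z) :
    z * rhoLim γ z ^ 2 - (z + γ⁻¹ - 1) * rhoLim γ z + γ⁻¹ = 0 ∧ rhoLim γ z < 1 ∧
      0 < rhoLim γ z := by
  obtain ⟨ha, hab, hsum, hprod, hb1⟩ := gamma_edges hγ
  have hz0 : 0 < z := by linarith
  have h3 : γ⁻¹ ≤ 1 := inv_le_one_of_one_le₀ hγ
  have h4 : 0 < γ⁻¹ := inv_pos.mpr (by linarith)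
  have hd : 0 ≤ (z - aGamma γ) * (z - bGamma γ) := by
    apply mul_nonneg <;> linarith
  have hs2 := Real.sq_sqrt hd
  have hs0 := Real.sqrt_nonneg ((z - aGamma γ) * (z - bGamma γ))
  have hp2 : aGamma γ * bGamma γ = (1 - γ⁻¹) ^ 2 := by
    rw [← hprod, Real.sq_sqrt]; exact mul_nonneg ha (by linarith)
  set s := Real.sqrt ((z - aGamma γ) * (z - bGamma γ)) with hs
  have hs2' : s ^ 2 = (z + γ⁻¹ - 1) ^ 2 - 4 * z * γ⁻¹ := by
    rw [hs2]; linear_combination (-2 * z) * hsum + hp2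
  have e : rhoLim γ z * (2 * z) = (z + γ⁻¹ - 1) - s := by
    unfold rhoLim; rw [div_mul_cancel₀ _ (by positivity)]
  refine ⟨?_, ?_, ?_⟩
  · have : (4 * z) * (z * rhoLim γ z ^ 2 - (z + γ⁻¹ - 1) * rhoLim γ z + γ⁻¹) = 0 := by
      linear_combination (rhoLim γ z * (2 * z) + (z + γ⁻¹ - 1) - s - 2 * (z + γ⁻¹ - 1)) * e + hs2'
    exact (mul_eq_zero.mp this).resolve_left (by positivity)
  · by_contra h
    push Not at h
    nlinarith
  · by_contra h
    push Not at h
    have h5 : 0 < z + γ⁻¹ - 1 := by linarith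
    have h6 : z + γ⁻¹ - 1 ≤ s := by nlinarith
    have h7 := pow_le_pow_left₀ h5.le h6 2
    nlinarith [mul_pos hz0 h4]

/-- The Marchenko–Pastur equation in the form needed for the constant term of the secular
matrix. -/
theorem mpStieltjes_inv {γ z : ℝ} (hγ : 1 ≤ γ) (hz : bGamma γ < z) :
    (mpStieltjes γ z)⁻¹ = -z * (γ⁻¹ * mpStieltjes γ z) + (1 - γ⁻¹) - z := by
  have h1 := mpStieltjes_eq hγ hz
  obtain ⟨h2, -, -⟩ := rhoLim_spec hγ hz
  have h4 : 0 < γ⁻¹ := inv_pos.mpr (by linarith)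
  have h5 : rhoLim γ z = -(γ⁻¹ * mpStieltjes γ z) := by linarith
  rw [h5] at h2
  apply inv_eq_of_mul_eq_one_right
  have : γ⁻¹ * (mpStieltjes γ z * (-z * (γ⁻¹ * mpStieltjes γ z) + (1 - γ⁻¹) - z) - 1) = 0 := by
    linear_combination -h2
  have := (mul_eq_zero.mp this).resolve_left h4.ne'
  linarith

/-! ### Standard Gaussian vectors -/

/-- The standard Gaussian measure on `ι → ℝ`, as a product measure. -/
abbrev gpi (ι : Type*) [Fintype ι] : Measure (ι → ℝ) :=
  Measure.pi fun _ : ι => gaussianReal 0 1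

/-- Rotational invariance of the standard Gaussian measure. -/
lemma gpi_rotate {ι : Type*} [Fintype ι] (O : (ι → ℝ) →ₗ[ℝ] (ι → ℝ))
    (hO : ∀ v, ∑ i, (O v i) ^ 2 = ∑ i, v i ^ 2) : MeasurePreserving O (gpi ι) (gpi ι) := by
  have hOc : Continuous O := O.continuous_of_finiteDimensional
  refine ⟨hOc.measurable, ?_⟩
  let e := WithLp.linearEquiv 2 ℝ (ι → ℝ)
  let f : EuclideanSpace ℝ ι →ₗᵢ[ℝ] EuclideanSpace ℝ ι :=
    { toLinearMap := e.symm.toLinearMap ∘ₗ O ∘ₗ e.toLinearMap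
      norm_map' := by
        intro x
        rw [← sq_eq_sq₀ (norm_nonneg _) (norm_nonneg _), EuclideanSpace.real_norm_sq_eq,
          EuclideanSpace.real_norm_sq_eq]
        exact hO (e x) }
  let g := f.toLinearIsometryEquiv rfl
  have hg : ∀ x, g x = WithLp.toLp 2 (O (WithLp.ofLp x)) := fun x => rfl
  have h1 := stdGaussian_map g
  rw [← map_pi_eq_stdGaussian, Measure.map_map g.continuous.measurable (by fun_prop)] at h1
  have h2 := congrArg (Measure.map (WithLp.ofLp : EuclideanSpace ℝ ι → ι → ℝ)) h1
  rw [Measure.map_map (by fun_prop) (g.continuous.measurable.comp (by fun_prop)),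
    Measure.map_map (by fun_prop) (by fun_prop)] at h2
  have e1 : (WithLp.ofLp : EuclideanSpace ℝ ι → ι → ℝ) ∘ (g ∘ WithLp.toLp 2) = O := by
    ext x i
    simp [hg]
  have e2 : (WithLp.ofLp : EuclideanSpace ℝ ι → ι → ℝ) ∘ (WithLp.toLp 2) = id := rfl
  rw [e1, e2, Measure.map_id] at h2
  exact h2

/-- Splitting the coordinates of a standard Gaussian vector into two independent parts. -/
lemma gpi_split {ι κ τ : Type*} [Fintype ι] [Fintype κ] [Fintype τ] (e : ι ⊕ κ ≃ τ) :
    MeasurePreserving (fun f : τ → ℝ => ((fun i => f (e (Sum.inl i))), fun j => f (e (Sum.inr j))))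
      (gpi τ) ((gpi ι).prod (gpi κ)) := by
  have h1 := (measurePreserving_piCongrLeft (α := fun _ : τ => ℝ)
    (fun _ : τ => gaussianReal 0 1) e).symm
  have h2 := measurePreserving_sumPiEquivProdPi (X := fun _ : ι ⊕ κ => ℝ)
    (fun _ : ι ⊕ κ => gaussianReal 0 1)
  exact h2.comp h1

/-- Reindexing a standard Gaussian vector. -/
lemma gpi_reindex {κ τ : Type*} [Fintype κ] [Fintype τ] (e : κ ≃ τ) :
    MeasurePreserving (fun f : τ → ℝ => fun j => f (e j)) (gpi τ) (gpi κ) :=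
  (measurePreserving_piCongrLeft (α := fun _ : τ => ℝ) (fun _ : τ => gaussianReal 0 1) e).symm

/-- Union bound combined with conditioning on the first coordinate of a product. -/
lemma prod_bad_le {X Y : Type*} [MeasurableSpace X] [MeasurableSpace Y] (μ : Measure X)
    (ν : Measure Y) [IsProbabilityMeasure μ] [IsProbabilityMeasure ν]
    {bad : Set (X × Y)} (hbad : MeasurableSet bad) (A : Set X) (hA : MeasurableSet A) (b : ENNReal)
    (h : ∀ x ∈ A, ν {y | (x, y) ∈ bad} ≤ b) : μ.prod ν bad ≤ μ Aᶜ + b := by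
  rw [Measure.prod_apply hbad]
  calc ∫⁻ x, ν (Prod.mk x ⁻¹' bad) ∂μ
      ≤ ∫⁻ x, (Aᶜ.indicator (fun _ => 1) x + b) ∂μ := by
        refine lintegral_mono fun x => ?_
        by_cases hx : x ∈ A
        · exact (h x hx).trans (by simp)
        · simp only [Set.indicator, Set.mem_compl_iff, hx, not_false_eq_true, if_true]
          exact prob_le_one.trans (by simp)
    _ = μ Aᶜ + b := by
        rw [lintegral_add_right _ measurable_const, lintegral_indicator hA.compl]
        simp

lemma integral_exp_sq {t : ℝ} (ht : t < 1 / 2) :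
    Integrable (fun x => Real.exp (t * x ^ 2)) (gaussianReal 0 1) ∧
    ∫ x, Real.exp (t * x ^ 2) ∂(gaussianReal 0 1) = Real.sqrt (1 / (1 - 2 * t)) := by
  have hb : 0 < 1 / 2 - t := by linarith
  have key : ∀ x : ℝ, gaussianPDFReal 0 1 x * Real.exp (t * x ^ 2)
      = (√(2 * Real.pi))⁻¹ * Real.exp (-(1 / 2 - t) * x ^ 2) := by
    intro x
    simp only [gaussianPDFReal, NNReal.coe_one, mul_one, sub_zero]
    rw [mul_assoc, ← Real.exp_add]
    congr 2
    ring
  constructor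
  · rw [gaussianReal_of_var_ne_zero _ one_ne_zero]
    have : gaussianPDF 0 1 = fun x => ENNReal.ofReal (gaussianPDFReal 0 1 x) := rfl
    rw [this, integrable_withDensity_iff_integrable_smul' (by fun_prop) (by simp)]
    have : (fun x => (ENNReal.ofReal (gaussianPDFReal 0 1 x)).toReal • Real.exp (t * x ^ 2))
        = fun x => (√(2 * Real.pi))⁻¹ * Real.exp (-(1 / 2 - t) * x ^ 2) := by
      ext x
      rw [ENNReal.toReal_ofReal (gaussianPDFReal_nonneg _ _ _), smul_eq_mul, key]
    rw [this]
    exact (integrable_exp_neg_mul_sq hb).const_mul _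
  · rw [integral_gaussianReal_eq_integral_smul one_ne_zero]
    simp only [smul_eq_mul, key]
    rw [integral_const_mul, integral_gaussian, ← Real.sqrt_inv, ← Real.sqrt_mul (by positivity)]
    congr 1
    have := Real.pi_pos
    have h2 : 1 - 2 * t ≠ 0 := by linarith
    field_simp

/-- Chernoff bound for the chi-square distribution. -/
lemma chi_tail (m : ℕ) (n : ℝ) (hmn : (m : ℝ) ≤ n) {ε : ℝ} (h0 : 0 < ε) (h1 : ε ≤ 1) :
    gpi (Fin m) {v | (1 + ε) * n < ∑ i, v i ^ 2} ≤ ENNReal.ofReal (Real.exp (-(ε ^ 2 / 16) * n)) := by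
  set t := ε / 8 with ht
  have hI := integral_exp_sq (t := t) (by rw [ht]; linarith)
  have hbound : Real.sqrt (1 / (1 - 2 * t)) ≤ Real.exp (t * (1 + ε / 2)) := by
    rw [Real.sqrt_le_left (Real.exp_pos _).le, ← Real.exp_nat_mul]
    have hs : 1 / (1 - 2 * t) ≤ 1 + (2 * t) * (1 + ε / 2) := by
      rw [div_le_iff₀ (by rw [ht]; linarith), ht]
      nlinarith [mul_pos h0 h0, mul_nonneg (mul_pos h0 h0).le (sub_nonneg.2 h1)]
    refine hs.trans ?_
    have := Real.add_one_le_exp ((2 * t) * (1 + ε / 2))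
    refine le_trans (by linarith) (this.trans (le_of_eq ?_))
    congr 1; push_cast; ring
  have hprod : ∀ v : Fin m → ℝ, Real.exp (t * ∑ i, v i ^ 2) = ∏ i, Real.exp (t * v i ^ 2) := by
    intro v; rw [Finset.mul_sum, Real.exp_sum]
  have hInt : Integrable (fun v : Fin m → ℝ => Real.exp (t * ∑ i, v i ^ 2)) (gpi (Fin m)) := by
    simp_rw [hprod]
    exact Integrable.fintype_prod (f := fun (_ : Fin m) x => Real.exp (t * x ^ 2)) (fun _ => hI.1)
  have hval : mgf (fun v : Fin m → ℝ => ∑ i, v i ^ 2) (gpi (Fin m)) t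
      ≤ Real.exp (m * (t * (1 + ε / 2))) := by
    rw [mgf]
    simp_rw [hprod]
    rw [integral_fintype_prod_eq_prod (f := fun (_ : Fin m) x => Real.exp (t * x ^ 2))]
    rw [hI.2, Finset.prod_const, Finset.card_univ, Fintype.card_fin, Real.exp_nat_mul]
    exact pow_le_pow_left₀ (Real.sqrt_nonneg _) hbound _
  have hch := measure_ge_le_exp_mul_mgf (μ := gpi (Fin m)) (X := fun v => ∑ i, v i ^ 2)
    ((1 + ε) * n) (t := t) (by positivity) hInt
  have : (gpi (Fin m)).real {v | (1 + ε) * n < ∑ i, v i ^ 2} ≤ Real.exp (-(ε ^ 2 / 16) * n) := by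
    have hsub : {v : Fin m → ℝ | (1 + ε) * n < ∑ i, v i ^ 2}
        ⊆ {v : Fin m → ℝ | (1 + ε) * n ≤ ∑ i, v i ^ 2} := by
      intro v hv
      simp only [Set.mem_ofPred_eq] at hv ⊢
      exact hv.le
    refine (measureReal_mono hsub).trans (hch.trans ?_)
    refine (mul_le_mul_of_nonneg_left hval (Real.exp_pos _).le).trans ?_
    rw [← Real.exp_add]
    apply Real.exp_le_exp.2
    have : (m : ℝ) * (t * (1 + ε / 2)) ≤ n * (t * (1 + ε / 2)) :=
      mul_le_mul_of_nonneg_right hmn (by positivity)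
    rw [ht] at this ⊢
    nlinarith
  exact (ENNReal.le_ofReal_iff_toReal_le (measure_ne_top _ _) (Real.exp_pos _).le).2 this

/-! ### The edge of the Wishart spectrum -/

/-- Householder reflection sending `v` to `‖v‖ e₀`. -/
lemma householder {m : ℕ} (v : Fin (m + 1) → ℝ) : ∃ H : Matrix (Fin (m + 1)) (Fin (m + 1)) ℝ,
    Hᵀ * H = 1 ∧ H *ᵥ v = Pi.single 0 (Real.sqrt (∑ i, v i ^ 2)) := by
  set s := Real.sqrt (∑ i, v i ^ 2) with hs
  have hs2 : s ^ 2 = v ⬝ᵥ v := by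
    rw [hs, Real.sq_sqrt (Finset.sum_nonneg fun i _ => sq_nonneg _), dotProduct]
    exact Finset.sum_congr rfl fun i _ => by ring
  set e : Fin (m + 1) → ℝ := Pi.single 0 s with he
  set u := v - e with hu
  by_cases h0 : u = 0
  · exact ⟨1, by simp, by simpa using sub_eq_zero.1 h0⟩
  have huu : u ⬝ᵥ u ≠ 0 := fun h => h0 (dotProduct_self_eq_zero.1 h)
  have hee : e ⬝ᵥ e = v ⬝ᵥ v := by rw [← hs2, he]; simp [sq]
  have huv : 2 * (u ⬝ᵥ v) = u ⬝ᵥ u := by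
    simp only [hu, sub_dotProduct, dotProduct_sub, hee]
    rw [dotProduct_comm v e]; ring
  refine ⟨1 - (2 / (u ⬝ᵥ u)) • vecMulVec u u, ?_, ?_⟩
  · have : vecMulVec u u * vecMulVec u u = (u ⬝ᵥ u) • vecMulVec u u := by
      rw [vecMulVec_mul_vecMulVec]
      ext i j; simp [vecMulVec_apply]; ring
    simp only [transpose_sub, transpose_one, transpose_smul, transpose_vecMulVec]
    rw [sub_mul, mul_sub, mul_sub, smul_mul_smul_comm, this, smul_smul]
    have h4 : 2 / (u ⬝ᵥ u) * (2 / (u ⬝ᵥ u)) * (u ⬝ᵥ u) = 2 / (u ⬝ᵥ u) + 2 / (u ⬝ᵥ u) := by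
      field_simp; ring
    rw [h4, add_smul]; simp
  · rw [sub_mulVec, one_mulVec, smul_mulVec, vecMulVec_mulVec]
    have : 2 / (u ⬝ᵥ u) * (u ⬝ᵥ v) = 1 := by rw [div_mul_eq_mul_div, huv, div_self huu]
    ext i
    have e2 : (v - (2 / (u ⬝ᵥ u)) • MulOpposite.op (u ⬝ᵥ v) • u) i = v i - (2 / (u ⬝ᵥ u) * (u ⬝ᵥ v)) * u i := by
      simp; ring
    rw [e2, this, hu]; simp

lemma orth_sum_sq {m : Type*} [Fintype m] [DecidableEq m] {H : Matrix m m ℝ} (hH : Hᵀ * H = 1)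
    (x : m → ℝ) : ∑ i, (H *ᵥ x) i ^ 2 = ∑ i, x i ^ 2 := by
  have h : (H *ᵥ x) ⬝ᵥ (H *ᵥ x) = x ⬝ᵥ x := by
    rw [dotProduct_mulVec, ← mulVec_transpose, mulVec_mulVec, hH, one_mulVec]
  simpa [dotProduct, sq] using h

/-- The bound `‖W x‖² ≤ (a + b)² ‖x‖²`, strengthened along the first coordinate: there the
coefficient is only `(a + b)² - (b² + ab) = a² + ab`. The slack is what the induction on the
dimensions consumes. The test `j.val = 0` makes sense also for `p = 0`. -/
def GoodW (a b : ℝ) {n p : ℕ} (W : Fin n × Fin p → ℝ) : Prop :=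
  ∀ x : Fin p → ℝ, ∑ i, (∑ j, W (i, j) * x j) ^ 2
    ≤ (a + b) ^ 2 * ∑ j, x j ^ 2 - (b ^ 2 + a * b) * ∑ j, (if j.val = 0 then x j ^ 2 else 0)

lemma goodW_measurable (a b : ℝ) {n p : ℕ} :
    MeasurableSet {W : Fin n × Fin p → ℝ | GoodW a b W} := by
  have : IsClosed {W : Fin n × Fin p → ℝ | GoodW a b W} := by
    simp only [GoodW, Set.ofPred_forall]
    exact isClosed_iInter fun x => isClosed_le (by fun_prop) (by fun_prop)
  exact this.measurableSet

/-- Left multiplication by `H`, on matrices seen as functions on pairs. -/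
def rotL {m p : Type*} [Fintype m] (H : Matrix m m ℝ) : (m × p → ℝ) →ₗ[ℝ] (m × p → ℝ) where
  toFun W := fun q => ∑ l, H q.1 l * W (l, q.2)
  map_add' W W' := by ext q; simp [mul_add, Finset.sum_add_distrib]
  map_smul' c W := by ext q; simp [Finset.mul_sum]; exact Finset.sum_congr rfl fun _ _ => by ring

/-- Right multiplication by `Hᵀ`, on matrices seen as functions on pairs. -/
def rotR {m p : Type*} [Fintype p] (H : Matrix p p ℝ) : (m × p → ℝ) →ₗ[ℝ] (m × p → ℝ) where
  toFun W := fun q => ∑ l, H q.2 l * W (q.1, l)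
  map_add' W W' := by ext q; simp [mul_add, Finset.sum_add_distrib]
  map_smul' c W := by ext q; simp [Finset.mul_sum]; exact Finset.sum_congr rfl fun _ _ => by ring

lemma rotL_mp {m p : Type*} [Fintype m] [Fintype p] [DecidableEq m] {H : Matrix m m ℝ}
    (hH : Hᵀ * H = 1) : MeasurePreserving (rotL H) (gpi (m × p)) (gpi (m × p)) := by
  refine gpi_rotate _ fun W => ?_
  rw [Fintype.sum_prod_type_right, Fintype.sum_prod_type_right]
  exact Finset.sum_congr rfl fun j _ => orth_sum_sq hH (fun l => W (l, j))

lemma rotR_mp {m p : Type*} [Fintype m] [Fintype p] [DecidableEq p] {H : Matrix p p ℝ}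
    (hH : Hᵀ * H = 1) : MeasurePreserving (rotR H) (gpi (m × p)) (gpi (m × p)) := by
  refine gpi_rotate _ fun W => ?_
  rw [Fintype.sum_prod_type, Fintype.sum_prod_type]
  exact Finset.sum_congr rfl fun j _ => orth_sum_sq hH (fun l => W (j, l))

lemma rotL_rotL {m p : Type*} [Fintype m] [DecidableEq m] {H : Matrix m m ℝ}
    (hH : Hᵀ * H = 1) (W : m × p → ℝ) : rotL Hᵀ (rotL H W) = W := by
  ext ⟨i, j⟩
  have := congrFun (congrArg (fun A => A *ᵥ (fun l => W (l, j))) hH) i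
  simp only [← mulVec_mulVec, one_mulVec] at this
  exact this

/-- First column versus the rest. -/
def colSplit (n p : ℕ) : Fin n ⊕ (Fin n × Fin p) ≃ Fin n × Fin (p + 1) where
  toFun := Sum.elim (fun i => (i, 0)) (fun q => (q.1, q.2.succ))
  invFun q := Fin.cases (Sum.inl q.1) (fun j => Sum.inr (q.1, j)) q.2
  left_inv := by rintro (i | ⟨i, j⟩) <;> simp
  right_inv := by rintro ⟨i, j⟩; refine Fin.cases ?_ (fun j => ?_) j <;> simp

/-- First row versus the rest. -/
def rowSplit (n p : ℕ) : Fin p ⊕ (Fin n × Fin p) ≃ Fin (n + 1) × Fin p where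
  toFun := Sum.elim (fun i => (0, i)) (fun q => (q.1.succ, q.2))
  invFun q := Fin.cases (Sum.inl q.2) (fun i => Sum.inr (i, q.2)) q.1
  left_inv := by rintro (i | ⟨i, j⟩) <;> simp
  right_inv := by rintro ⟨i, j⟩; refine Fin.cases ?_ (fun j => ?_) i <;> simp

/-- The inductive step, at the deterministic level: if the first column is `v`, the first row of
the rotated remainder is `r`, and the doubly rotated remainder is good, then `W` is good. -/
lemma goodW_step {a b : ℝ} (ha : 0 ≤ a) (hb : 0 ≤ b) {n p : ℕ} (W : Fin (n + 1) × Fin (p + 1) → ℝ)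
    (H : Matrix (Fin (n + 1)) (Fin (n + 1)) ℝ) (hH : Hᵀ * H = 1)
    (hv : H *ᵥ (fun i => W (i, 0)) = Pi.single 0 (Real.sqrt (∑ i, W (i, 0) ^ 2)))
    (hva : ∑ i, W (i, 0) ^ 2 ≤ a ^ 2)
    (W' : Fin (n + 1) × Fin p → ℝ) (hW' : W' = rotL H (fun q => W (q.1, q.2.succ)))
    (hrb : ∑ j, W' (0, j) ^ 2 ≤ b ^ 2)
    (H' : Matrix (Fin p) (Fin p) ℝ) (hH' : H'ᵀ * H' = 1)
    (hr : ∀ j, (H' *ᵥ (fun j => W' (0, j))) j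
      = if j.val = 0 then Real.sqrt (∑ j, W' (0, j) ^ 2) else 0)
    (hgood : GoodW a b (rotR H' (fun q : Fin n × Fin p => W' (q.1.succ, q.2)))) : GoodW a b W := by
  intro x
  set y : Fin p → ℝ := fun j => x j.succ with hy
  set y' := H' *ᵥ y with hy'
  set α := Real.sqrt (∑ i, W (i, 0) ^ 2) with hα
  set β := Real.sqrt (∑ j, W' (0, j) ^ 2) with hβ
  have hα0 : 0 ≤ α := Real.sqrt_nonneg _
  have hβ0 : 0 ≤ β := Real.sqrt_nonneg _
  have hαa : α ≤ a := Real.sqrt_le_iff.2 ⟨ha, hva⟩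
  have hβb : β ≤ b := Real.sqrt_le_iff.2 ⟨hb, hrb⟩
  -- rotate the rows
  have e1 : ∀ i, (H *ᵥ (fun i => ∑ j, W (i, j) * x j)) i
      = (if i = 0 then α else 0) * x 0 + ∑ j, W' (i, j) * y j := by
    intro i
    have h0 : (H *ᵥ (fun i => W (i, 0))) i = if i = 0 then α else 0 := by
      rw [hv]; simp [Pi.single_apply]
    rw [← h0, hW']
    simp only [mulVec, dotProduct, Fin.sum_univ_succ (n := p), rotL, LinearMap.coe_mk, AddHom.coe_mk,
      mul_add, Finset.sum_add_distrib, Finset.sum_mul, Finset.mul_sum]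
    congr 1
    · exact Finset.sum_congr rfl fun _ _ => by ring
    · rw [Finset.sum_comm]
      exact Finset.sum_congr rfl fun _ _ => Finset.sum_congr rfl fun _ _ => by simp only [hy]; ring
  have e2 : ∀ r : Fin p → ℝ, ∑ j, r j * y j = ∑ j, (H' *ᵥ r) j * y' j := by
    intro r
    change r ⬝ᵥ y = (H' *ᵥ r) ⬝ᵥ y'
    rw [hy', dotProduct_mulVec, ← mulVec_transpose, mulVec_mulVec, hH', one_mulVec]
  have e3 : ∑ i, (∑ j, W (i, j) * x j) ^ 2 = (α * x 0 + ∑ j, W' (0, j) * y j) ^ 2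
      + ∑ i : Fin n, (∑ j, (rotR H' (fun q : Fin n × Fin p => W' (q.1.succ, q.2))) (i, j) * y' j) ^ 2 := by
    rw [← orth_sum_sq hH, Fin.sum_univ_succ, e1]
    simp only [if_true]
    congr 1
    refine Finset.sum_congr rfl fun i _ => ?_
    rw [e1, e2]
    simp [Fin.succ_ne_zero, rotR, mulVec, dotProduct]
  have e4 : ∑ j, W' (0, j) * y j = ∑ j, if j.val = 0 then β * y' j else 0 := by
    rw [e2]
    exact Finset.sum_congr rfl fun j _ => by rw [hr]; split_ifs <;> simp
  have e5 : (α * x 0 + ∑ j, W' (0, j) * y j) ^ 2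
      ≤ (a ^ 2 + a * b) * x 0 ^ 2 + (b ^ 2 + a * b) * ∑ j, (if j.val = 0 then y' j ^ 2 else 0) := by
    rw [e4]
    clear_value y' α β
    have hαβ : α * β ≤ a * b := mul_le_mul hαa hβb hβ0 ha
    rcases p with _ | p
    · simp
      nlinarith [mul_nonneg ha hb, mul_nonneg (sub_nonneg.2 hαa) (add_nonneg ha hα0),
        sq_nonneg (x 0), mul_nonneg (mul_nonneg (sub_nonneg.2 hαa) (add_nonneg ha hα0)) (sq_nonneg (x 0)), mul_nonneg (mul_nonneg ha hb) (sq_nonneg (x 0))]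
    · simp only [Fin.sum_univ_succ, Fin.val_zero, if_true, Fin.val_succ, Nat.add_eq_zero_iff, one_ne_zero,
        and_false, if_false, Finset.sum_const_zero, add_zero]
      have h1 : α ^ 2 * x 0 ^ 2 ≤ a ^ 2 * x 0 ^ 2 := by gcongr
      have h2 : β ^ 2 * y' 0 ^ 2 ≤ b ^ 2 * y' 0 ^ 2 := by gcongr
      have h3 : α * β * (x 0 ^ 2 + y' 0 ^ 2) ≤ a * b * (x 0 ^ 2 + y' 0 ^ 2) := by gcongr
      nlinarith [mul_nonneg (mul_nonneg hα0 hβ0) (sq_nonneg (x 0 - y' 0))]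
  have e6 := hgood y'
  have e7 : ∑ j, y' j ^ 2 = ∑ j, y j ^ 2 := orth_sum_sq hH' y
  rw [e3]
  simp only [Fin.sum_univ_succ (n := p), Fin.val_zero, if_true, Fin.val_succ, Nat.add_eq_zero_iff,
    one_ne_zero, and_false, if_false, Finset.sum_const_zero, add_zero]
  rw [e7] at e6
  linarith

/-- Householder bidiagonalisation in disguise: each of the `p` steps fails only if the current first
column is longer than `a` or the current first row is longer than `b`, and by rotational invariance
these are Gaussian vectors at every step. -/
theorem badW_le {a b : ℝ} (ha : 0 ≤ a) (hb : 0 ≤ b) (s t : ENNReal) : ∀ (p n : ℕ),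
    (∀ m ≤ n, gpi (Fin m) {v | a ^ 2 < ∑ i, v i ^ 2} ≤ s) →
    (∀ m ≤ p, gpi (Fin m) {v | b ^ 2 < ∑ i, v i ^ 2} ≤ t) →
    gpi (Fin n × Fin p) {W | ¬ GoodW a b W} ≤ p * (s + t) := by
  intro p
  induction p with
  | zero =>
    intro n _ _
    have : {W : Fin n × Fin 0 → ℝ | ¬ GoodW a b W} = ∅ := by
      ext W; simp [GoodW]
    rw [this]; simp
  | succ p ih =>
    intro n hs ht
    rcases n with _ | n
    · have : {W : Fin 0 × Fin (p + 1) → ℝ | ¬ GoodW a b W} = ∅ := by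
        ext W
        simp only [GoodW, Set.mem_ofPred_eq, Set.mem_empty_iff_false, iff_false, not_not]
        intro x
        simp only [Finset.univ_eq_empty, Finset.sum_empty]
        have : ∑ j : Fin (p + 1), (if j.val = 0 then x j ^ 2 else 0) ≤ ∑ j, x j ^ 2 :=
          Finset.sum_le_sum fun j _ => by
            split_ifs
            · exact le_rfl
            · positivity
        have h2 : 0 ≤ ∑ j, x j ^ 2 := Finset.sum_nonneg fun j _ => sq_nonneg _
        have h3 := mul_le_mul_of_nonneg_left this (show 0 ≤ b ^ 2 + a * b by positivity)
        nlinarith [mul_nonneg (show 0 ≤ a ^ 2 + a * b by positivity) h2]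
      rw [this]; simp
    have hi := ih n (fun m hm => hs m (by omega)) (fun m hm => ht m (by omega))
    -- split off the first column
    have hmp := gpi_split (colSplit (n + 1) p)
    let join : (Fin (n + 1) → ℝ) × (Fin (n + 1) × Fin p → ℝ) → Fin (n + 1) × Fin (p + 1) → ℝ :=
      fun z q => Fin.cases (z.1 q.1) (fun j => z.2 (q.1, j)) q.2
    have hjoin : Measurable join := by
      refine measurable_pi_lambda _ fun q => ?_
      obtain ⟨i, j⟩ := q
      refine Fin.cases ?_ (fun j => ?_) j
      · exact (measurable_pi_apply i).comp measurable_fst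
      · exact (measurable_pi_apply (i, j)).comp measurable_snd
    have hbm : MeasurableSet {z | ¬ GoodW a b (join z)} := hjoin (goodW_measurable a b).compl
    have h1 : gpi (Fin (n + 1) × Fin (p + 1)) {W | ¬ GoodW a b W}
        = ((gpi (Fin (n + 1))).prod (gpi (Fin (n + 1) × Fin p))) {z | ¬ GoodW a b (join z)} := by
      rw [← hmp.measure_preimage hbm.nullMeasurableSet]
      congr 1
      ext W
      have : join (fun i => W (colSplit (n + 1) p (Sum.inl i)), fun j => W (colSplit (n + 1) p (Sum.inr j))) = W := by
        ext ⟨i, j⟩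
        refine Fin.cases ?_ (fun j => ?_) j <;> simp [join, colSplit]
      simp only [Set.mem_ofPred_eq, Set.preimage_ofPred_eq, this]
    rw [h1]
    have hA : MeasurableSet {v : Fin (n + 1) → ℝ | ∑ i, v i ^ 2 ≤ a ^ 2} :=
      measurableSet_le (by fun_prop) (by fun_prop)
    refine (prod_bad_le _ _ hbm _ hA (t + p * (s + t)) fun v hv => ?_).trans ?_
    -- condition on the first column, rotate the rows, split off the first row
    · obtain ⟨H, hH, hHv⟩ := householder v
      have hmpH := (gpi_split (rowSplit n p)).comp (rotL_mp (p := Fin p) hH)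
      have hB : MeasurableSet {r : Fin p → ℝ | ∑ i, r i ^ 2 ≤ b ^ 2} :=
        measurableSet_le (by fun_prop) (by fun_prop)
      have hex : ∀ r : Fin p → ℝ, ∃ H' : Matrix (Fin p) (Fin p) ℝ, H'ᵀ * H' = 1 ∧
          ∀ j, (H' *ᵥ r) j = if j.val = 0 then Real.sqrt (∑ j, r j ^ 2) else 0 := by
        intro r
        rcases p with _ | p
        · exact ⟨1, by simp, fun j => j.elim0⟩
        · obtain ⟨H', h1, h2⟩ := householder r
          refine ⟨H', h1, fun j => ?_⟩
          rw [h2, Pi.single_apply]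
          simp only [Fin.ext_iff, Fin.val_zero]
      choose Hc hHc1 hHc2 using hex
      have hHH : H * Hᵀ = 1 := mul_eq_one_comm.1 hH
      let join2 : (Fin p → ℝ) × (Fin n × Fin p → ℝ) → Fin (n + 1) × Fin p → ℝ :=
        fun z q => Fin.cases (z.1 q.2) (fun i => z.2 (i, q.2)) q.1
      have hjoin2 : Measurable join2 := by
        refine measurable_pi_lambda _ fun q => ?_
        obtain ⟨i, j⟩ := q
        refine Fin.cases ?_ (fun i => ?_) i
        · exact (measurable_pi_apply j).comp measurable_fst
        · exact (measurable_pi_apply (i, j)).comp measurable_snd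
      have hrm : Measurable (rotL (p := Fin p) Hᵀ) :=
        (LinearMap.continuous_of_finiteDimensional _).measurable
      have hbm2 : MeasurableSet {z | ¬ GoodW a b (join (v, rotL Hᵀ (join2 z)))} :=
        (hjoin.comp (measurable_const.prodMk (hrm.comp hjoin2))) (goodW_measurable a b).compl
      have h2 : gpi (Fin (n + 1) × Fin p) {y | (v, y) ∈ {z | ¬ GoodW a b (join z)}}
          = ((gpi (Fin p)).prod (gpi (Fin n × Fin p)))
            {z | ¬ GoodW a b (join (v, rotL Hᵀ (join2 z)))} := by
        rw [← hmpH.measure_preimage hbm2.nullMeasurableSet]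
        congr 1
        ext y
        have : join2 (((fun f : Fin (n + 1) × Fin p → ℝ => ((fun i => f (rowSplit n p (Sum.inl i))),
            fun j => f (rowSplit n p (Sum.inr j)))) ∘ (rotL H)) y) = rotL H y := by
          ext ⟨i, j⟩
          refine Fin.cases ?_ (fun j => ?_) i <;> simp [join2, rowSplit]
        simp only [Set.mem_ofPred_eq, Set.preimage_ofPred_eq, this, rotL_rotL hH]
      rw [h2]
      refine (prod_bad_le _ _ hbm2 _ hB (p * (s + t)) fun r hr => ?_).trans ?_
      · have hpre := (rotR_mp (m := Fin n) (hHc1 r)).measure_preimage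
          (goodW_measurable a b).compl.nullMeasurableSet
        refine le_trans (measure_mono fun w hw => ?_) (hpre.trans_le hi)
        intro hgood
        refine hw (goodW_step ha hb _ H hH ?_ ?_ (join2 (r, w)) ?_ ?_ (Hc r) (hHc1 r) ?_ ?_)
        · simpa [join] using hHv
        · simpa [join] using hv
        · have := rotL_rotL (p := Fin p) (H := Hᵀ) (by simpa using hHH) (join2 (r, w))
          rw [transpose_transpose] at this
          simpa [join] using this.symm
        · simpa [join2] using hr
        · intro j
          simpa [join2] using hHc2 r j
        · simpa [join2] using hgood
      · have h3 : gpi (Fin p) {v : Fin p → ℝ | ∑ i, v i ^ 2 ≤ b ^ 2}ᶜ ≤ t := by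
          have := ht p (by omega)
          simpa [Set.compl_ofPred] using this
        gcongr
    · have h3 : gpi (Fin (n + 1)) {v : Fin (n + 1) → ℝ | ∑ i, v i ^ 2 ≤ a ^ 2}ᶜ ≤ s := by
        have := hs (n + 1) le_rfl
        simpa [Set.compl_ofPred] using this
      refine (add_le_add_left h3 _).trans (le_of_eq ?_)
      push_cast; ring

/-- The quadratic form of `Wᵀ W / n` is bounded by `c`. -/
def QBound {N q : ℕ} (n c : ℝ) (W : Matrix (Fin N) (Fin q) ℝ) : Prop :=
  ∀ x : Fin q → ℝ, ∑ i, (W *ᵥ x) i ^ 2 ≤ n * c * ∑ j, x j ^ 2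

/-- With probability tending to one, the largest eigenvalue of the normalised Wishart matrix stays
below any fixed level to the right of the Marchenko–Pastur edge: `badW_le` is applied with
`a² ≈ n` and `b² ≈ p`, and the chi-square tails are exponentially small. -/
theorem wishart_edge (k : ℕ) {γ : ℝ} (hγ : 1 ≤ γ) {p : ℕ → ℕ}
    (hr : Tendsto (fun n : ℕ => (p n : ℝ) / n) atTop (𝓝 γ⁻¹)) (hp : Tendsto p atTop atTop)
    {c : ℝ} (hc : bGamma γ < c) :
    Tendsto (fun n : ℕ => gpi (Fin (n - k) × Fin (p n - k))
      {W | ¬ QBound n c (Matrix.of fun i j => W (i, j))}) atTop (𝓝 0) := by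
  have hb1 := (gamma_edges hγ).2.2.2.2
  obtain ⟨ε, hε0, hε1, hεc⟩ : ∃ ε : ℝ, 0 < ε ∧ ε ≤ 1 ∧ (1 + ε) * bGamma γ < c := by
    refine ⟨min 1 ((c - bGamma γ) / (2 * bGamma γ)), by
      apply lt_min one_pos; apply div_pos <;> linarith, min_le_left _ _, ?_⟩
    have h1 : min 1 ((c - bGamma γ) / (2 * bGamma γ)) * bGamma γ ≤ (c - bGamma γ) / 2 := by
      calc _ ≤ ((c - bGamma γ) / (2 * bGamma γ)) * bGamma γ := by
            gcongr
            exact min_le_right _ _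
        _ = _ := by field_simp
    nlinarith
  have hlim : Tendsto (fun n : ℕ => (1 + ε) * (1 + Real.sqrt ((p n : ℝ) / n)) ^ 2) atTop
      (𝓝 ((1 + ε) * bGamma γ)) := by
    have : bGamma γ = (1 + Real.sqrt γ⁻¹) ^ 2 := by rw [bGamma, Real.sqrt_inv, one_div]
    rw [this]
    exact ((hr.sqrt.const_add 1).pow 2).const_mul _
  have hev := hlim.eventually (eventually_lt_nhds hεc)
  have hp2 : ∀ᶠ n : ℕ in atTop, (p n : ℝ) ≤ 2 * n := by
    have : γ⁻¹ < 2 := by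
      have : γ⁻¹ ≤ 1 := inv_le_one_of_one_le₀ hγ
      linarith
    filter_upwards [hr.eventually (eventually_lt_nhds this), eventually_gt_atTop 0] with n h1 h2
    have h2' : (0 : ℝ) < n := by exact_mod_cast h2
    rw [div_lt_iff₀ h2'] at h1
    exact h1.le
  have hexp : Tendsto (fun n : ℕ => (n : ℝ) * Real.exp (-(ε ^ 2 / 16) * n)) atTop (𝓝 0) := by
    have h := Real.tendsto_pow_mul_exp_neg_atTop_nhds_zero 1
    have hc' : 0 < ε ^ 2 / 16 := by positivity
    have h1 : Tendsto (fun n : ℕ => ε ^ 2 / 16 * (n : ℝ)) atTop atTop :=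
      tendsto_natCast_atTop_atTop.const_mul_atTop hc'
    have h2 := ((h.comp h1).const_mul (ε ^ 2 / 16)⁻¹)
    rw [mul_zero] at h2
    refine h2.congr fun n => ?_
    simp only [Function.comp, pow_one]
    rw [← mul_assoc, inv_mul_cancel_left₀ hc'.ne', neg_mul]
  have hbound : Tendsto (fun n : ℕ => 2 * ((n : ℝ) * Real.exp (-(ε ^ 2 / 16) * n))
      + (p n : ℝ) * Real.exp (-(ε ^ 2 / 16) * p n)) atTop (𝓝 0) := by
    have := (hexp.const_mul 2).add (hexp.comp hp)
    simpa using this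
  have hbound' := ENNReal.tendsto_ofReal hbound
  rw [ENNReal.ofReal_zero] at hbound'
  refine tendsto_of_tendsto_of_tendsto_of_le_of_le' tendsto_const_nhds hbound'
    (Eventually.of_forall fun _ => zero_le) ?_
  filter_upwards [hev, hp2, eventually_gt_atTop 0] with n h1 h2 h3
  have hn : (0 : ℝ) < n := by exact_mod_cast h3
  have key := badW_le (Real.sqrt_nonneg ((1 + ε) * n)) (Real.sqrt_nonneg ((1 + ε) * p n))
    (ENNReal.ofReal (Real.exp (-(ε ^ 2 / 16) * n))) (ENNReal.ofReal (Real.exp (-(ε ^ 2 / 16) * p n)))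
    (p n - k) (n - k) (fun m hm => by
      rw [Real.sq_sqrt (by positivity)]
      exact chi_tail m n (by exact_mod_cast hm.trans (Nat.sub_le _ _)) hε0 hε1) (fun m hm => by
      rw [Real.sq_sqrt (by positivity)]
      exact chi_tail m (p n) (by exact_mod_cast hm.trans (Nat.sub_le _ _)) hε0 hε1)
  refine (measure_mono ?_).trans (key.trans ?_)
  · intro W hW hgood
    refine hW fun x => ?_
    have hx : 0 ≤ ∑ j, x j ^ 2 := Finset.sum_nonneg fun j _ => sq_nonneg _
    refine (hgood x).trans ?_
    have h5 : (Real.sqrt ((1 + ε) * n) + Real.sqrt ((1 + ε) * p n)) ^ 2 ≤ n * c := by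
      have : Real.sqrt ((1 + ε) * p n) = Real.sqrt ((1 + ε) * n) * Real.sqrt ((p n : ℝ) / n) := by
        rw [← Real.sqrt_mul (by positivity)]
        congr 1; field_simp
      rw [this, show ∀ s t : ℝ, (s + s * t) ^ 2 = s ^ 2 * (1 + t) ^ 2 by intros; ring,
        Real.sq_sqrt (by positivity)]
      nlinarith
    have h6 : 0 ≤ (Real.sqrt ((1 + ε) * p n) ^ 2 + Real.sqrt ((1 + ε) * n) * Real.sqrt ((1 + ε) * p n))
        * ∑ j : Fin (p n - k), (if j.val = 0 then x j ^ 2 else 0) := by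
      refine mul_nonneg (by positivity) (Finset.sum_nonneg fun j _ => ?_)
      split_ifs
      · positivity
      · exact le_rfl
    nlinarith [mul_le_mul_of_nonneg_right h5 hx]
  · rw [← ENNReal.ofReal_natCast, ← ENNReal.ofReal_add (Real.exp_pos _).le (Real.exp_pos _).le,
      ← ENNReal.ofReal_mul (by positivity)]
    apply ENNReal.ofReal_le_ofReal
    have h7 : ((p n - k : ℕ) : ℝ) ≤ p n := by exact_mod_cast Nat.sub_le _ _
    rw [mul_add]
    have e1 := Real.exp_pos (-(ε ^ 2 / 16) * n)
    have e2 := Real.exp_pos (-(ε ^ 2 / 16) * p n)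
    nlinarith

/-! ### Second moments of Gaussian quadratic forms -/

/-- Second moment of a linear combination of independent centred variables. -/
lemma lintegral_sq_sum {ι : Type*} [Fintype ι] {g : ℝ → ℝ} (hg : Measurable g)
    (hg2 : MemLp g 2 (gaussianReal 0 1)) (hg0 : ∫ x, g x ∂(gaussianReal 0 1) = 0) (c : ι → ℝ) :
    ∫⁻ v, ENNReal.ofReal ((∑ i, c i * g (v i)) ^ 2) ∂(gpi ι)
      = ENNReal.ofReal (Var[g; gaussianReal 0 1] * ∑ i, c i ^ 2) := by
  have hm : ∀ i, MemLp (fun x => c i * g x) 2 (gaussianReal 0 1) := fun i => hg2.const_mul (c i)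
  have hmi : ∀ i : ι, MemLp (fun v : ι → ℝ => c i * g (v i)) 2 (gpi ι) := fun i =>
    (hm i).comp_measurePreserving (measurePreserving_eval _ i)
  have hvar := variance_sum_pi (μ := fun _ : ι => gaussianReal 0 1) (X := fun i x => c i * g x) hm
  have hsum : (∑ i, fun v : ι → ℝ => c i * g (v i)) = fun v => ∑ i, c i * g (v i) := by
    ext v; simp
  rw [hsum] at hvar
  have hL : MemLp (fun v : ι → ℝ => ∑ i, c i * g (v i)) 2 (gpi ι) :=
    memLp_finsetSum _ fun i _ => hmi i
  have hInt : ∫ v, ∑ i, c i * g (v i) ∂(gpi ι) = 0 := by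
    rw [integral_finsetSum _ fun i _ => (hmi i).integrable (by norm_num)]
    refine Finset.sum_eq_zero fun i _ => ?_
    rw [integral_const_mul]
    have : ∫ v, g (v i) ∂(gpi ι) = 0 := by
      rw [← hg0, ← (measurePreserving_eval (fun _ : ι => gaussianReal 0 1) i).map_eq,
        integral_map (measurable_pi_apply i).aemeasurable hg.aestronglyMeasurable]
    rw [this, mul_zero]
  have h1 : eVar[fun v => ∑ i, c i * g (v i); gpi ι]
      = ∫⁻ v, ENNReal.ofReal ((∑ i, c i * g (v i)) ^ 2) ∂(gpi ι) := by
    rw [evariance_eq_lintegral_ofReal, hInt]; simp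
  rw [← h1, ← ofReal_variance hL, hvar]
  congr 1
  rw [Finset.mul_sum]
  exact Finset.sum_congr rfl fun i _ => by rw [variance_const_mul]; ring

lemma lintegral_sq_linear {ι : Type*} [Fintype ι] (c : ι → ℝ) :
    ∫⁻ v, ENNReal.ofReal ((∑ i, c i * v i) ^ 2) ∂(gpi ι) = ENNReal.ofReal (∑ i, c i ^ 2) := by
  have h := lintegral_sq_sum measurable_id (memLp_id_gaussianReal 2)
    (by simp [integral_id_gaussianReal]) c
  rw [variance_id_gaussianReal] at h
  simpa using h

/-- The variance of the square of a standard Gaussian variable. -/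
def kap : ℝ := Var[fun x => x ^ 2 - 1; gaussianReal 0 1]

lemma kap_nonneg : 0 ≤ kap := variance_nonneg _ _

lemma integral_sq_gaussian : ∫ x, x ^ 2 ∂(gaussianReal 0 1) = 1 := by
  have h := variance_fun_id_gaussianReal (μ := 0) (v := 1)
  rw [variance_of_integral_eq_zero (by fun_prop) (by simp [integral_id_gaussianReal])] at h
  simpa using h

lemma memLp_sq_gaussian : MemLp (fun x : ℝ => x ^ 2 - 1) 2 (gaussianReal 0 1) := by
  have h : MemLp (fun x : ℝ => x ^ 2) 2 (gaussianReal 0 1) := by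
    have h4 := (memLp_id_gaussianReal (μ := 0) (v := 1) 4).integrable_norm_pow (by norm_num)
    rw [memLp_two_iff_integrable_sq (by fun_prop)]
    refine h4.congr (Eventually.of_forall fun x => ?_)
    simp only [id, Real.norm_eq_abs, ← pow_mul]
    exact Even.pow_abs (by decide) x
  exact h.sub (memLp_const 1)

lemma lintegral_sq_quad {ι : Type*} [Fintype ι] (c : ι → ℝ) :
    ∫⁻ v, ENNReal.ofReal ((∑ i, c i * (v i ^ 2 - 1)) ^ 2) ∂(gpi ι)
      = ENNReal.ofReal (kap * ∑ i, c i ^ 2) := by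
  refine lintegral_sq_sum (g := fun x => x ^ 2 - 1) (by fun_prop) memLp_sq_gaussian ?_ c
  rw [integral_sub, integral_sq_gaussian]
  · simp
  · exact (memLp_id_gaussianReal (μ := 0) (v := 1) 2).integrable_sq
  · exact integrable_const _

/-- Bound on the second moment of the centred quadratic form `v ⬝ M v - tr M` of a Gaussian vector. -/
lemma lintegral_sq_form {q : ℕ} (M : Matrix (Fin q) (Fin q) ℝ) (hM : M.IsHermitian) {b : ℝ}
    (hb : ∀ x : Fin q → ℝ, 0 ≤ x ⬝ᵥ (M *ᵥ x) ∧ x ⬝ᵥ (M *ᵥ x) ≤ b * (x ⬝ᵥ x)) :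
    ∫⁻ v, ENNReal.ofReal ((v ⬝ᵥ (M *ᵥ v) - M.trace) ^ 2) ∂(gpi (Fin q))
      ≤ ENNReal.ofReal (kap * (q * b ^ 2)) := by
  set U : Matrix (Fin q) (Fin q) ℝ := (hM.eigenvectorUnitary).1 with hU
  have hUU : Uᵀ * U = 1 := by
    have := Unitary.coe_star_mul_self hM.eigenvectorUnitary
    simpa [star_eq_conjTranspose, conjTranspose_eq_transpose_of_trivial] using this
  have hUU' : U * Uᵀ = 1 := mul_eq_one_comm.1 hUU
  set m := hM.eigenvalues with hm
  have hspec : M = U * diagonal m * Uᵀ := by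
    have := hM.spectral_theorem
    simpa [Unitary.conjStarAlgAut_apply, star_eq_conjTranspose,
      conjTranspose_eq_transpose_of_trivial, Function.comp_def, ← hU, ← hm] using this
  have hform : ∀ v, v ⬝ᵥ (M *ᵥ v) = ∑ i, m i * (Uᵀ *ᵥ v) i ^ 2 := by
    intro v
    have : v ⬝ᵥ (M *ᵥ v) = (Uᵀ *ᵥ v) ⬝ᵥ (diagonal m *ᵥ (Uᵀ *ᵥ v)) := by
      rw [hspec, ← mulVec_mulVec, ← mulVec_mulVec, dotProduct_mulVec, ← mulVec_transpose]
    rw [this]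
    simp only [dotProduct, mulVec_diagonal]
    exact Finset.sum_congr rfl fun i _ => by ring
  have htr : M.trace = ∑ i, m i := by
    rw [hspec, trace_mul_comm, ← mul_assoc, hUU, one_mul, trace_diagonal]
  have hmb : ∀ i, m i ^ 2 ≤ b ^ 2 := by
    intro i
    have h1 : Uᵀ *ᵥ (U *ᵥ Pi.single i 1) = Pi.single i 1 := by rw [mulVec_mulVec, hUU, one_mulVec]
    have h2 := hb (U *ᵥ Pi.single i 1)
    rw [hform, h1, dotProduct_mulVec, ← mulVec_transpose, h1] at h2
    simp [Pi.single_apply] at h2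
    nlinarith
  have hmp := gpi_rotate (mulVecLin Uᵀ) (fun v => by
    exact orth_sum_sq (H := Uᵀ) (by simpa using hUU') v)
  have hmeas : Measurable fun v : Fin q → ℝ => ENNReal.ofReal ((∑ i, m i * (v i ^ 2 - 1)) ^ 2) := by
    fun_prop
  have := hmp.lintegral_comp hmeas
  rw [lintegral_sq_quad] at this
  have e : ∀ v : Fin q → ℝ, ENNReal.ofReal ((v ⬝ᵥ (M *ᵥ v) - M.trace) ^ 2)
      = ENNReal.ofReal ((∑ i, m i * ((mulVecLin Uᵀ v) i ^ 2 - 1)) ^ 2) := by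
    intro v
    rw [hform, htr, ← Finset.sum_sub_distrib]
    congr 2
    exact Finset.sum_congr rfl fun i _ => by rw [mulVecLin_apply]; ring
  simp_rw [e]
  rw [this]
  apply ENNReal.ofReal_le_ofReal
  refine mul_le_mul_of_nonneg_left ?_ kap_nonneg
  refine (Finset.sum_le_sum fun i _ => hmb i).trans ?_
  simp

/-! ### The self-consistent equation for the resolvent trace -/

lemma dot_self_nonneg {ι : Type*} [Fintype ι] (v : ι → ℝ) : 0 ≤ v ⬝ᵥ v :=
  Finset.sum_nonneg fun i _ => mul_self_nonneg _

/-- A symmetric matrix bounded below by `δ`. -/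
structure Coer {q : ℕ} (δ : ℝ) (A : Matrix (Fin q) (Fin q) ℝ) : Prop where
  symm : Aᵀ = A
  low : ∀ x : Fin q → ℝ, δ * (x ⬝ᵥ x) ≤ x ⬝ᵥ (A *ᵥ x)

namespace Coer
variable {q : ℕ} {δ : ℝ} {A : Matrix (Fin q) (Fin q) ℝ}

lemma isUnit (h : Coer δ A) (hδ : 0 < δ) : IsUnit A.det := by
  rw [isUnit_iff_ne_zero]
  intro h0
  obtain ⟨v, hv, hv0⟩ := exists_mulVec_eq_zero_iff.2 h0
  have := h.low v
  rw [hv0, dotProduct_zero] at this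
  have h2 : 0 ≤ v ⬝ᵥ v := dot_self_nonneg v
  have h3 : v ⬝ᵥ v = 0 := by nlinarith
  exact hv (dotProduct_self_eq_zero.1 h3)

lemma inv_symm (h : Coer δ A) : A⁻¹ᵀ = A⁻¹ := by
  rw [transpose_nonsing_inv, h.symm]

lemma inv_bounds (h : Coer δ A) (hδ : 0 < δ) (x : Fin q → ℝ) :
    0 ≤ x ⬝ᵥ (A⁻¹ *ᵥ x) ∧ x ⬝ᵥ (A⁻¹ *ᵥ x) ≤ δ⁻¹ * (x ⬝ᵥ x) ∧
    (A⁻¹ *ᵥ x) ⬝ᵥ (A⁻¹ *ᵥ x) ≤ (δ⁻¹) ^ 2 * (x ⬝ᵥ x) := by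
  set y := A⁻¹ *ᵥ x with hy
  have hAy : A *ᵥ y = x := by rw [hy, mulVec_mulVec, mul_nonsing_inv _ (h.isUnit hδ), one_mulVec]
  have h1 := h.low y
  rw [hAy, dotProduct_comm y x] at h1
  have h2 : 0 ≤ y ⬝ᵥ y := dot_self_nonneg y
  have h3 : 0 ≤ (δ • y - x) ⬝ᵥ (δ • y - x) := dot_self_nonneg _
  have h4 : (δ • y - x) ⬝ᵥ (δ • y - x) = δ ^ 2 * (y ⬝ᵥ y) - 2 * δ * (x ⬝ᵥ y) + x ⬝ᵥ x := by
    simp only [sub_dotProduct, dotProduct_sub, smul_dotProduct, dotProduct_smul, smul_eq_mul,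
      dotProduct_comm y x]
    ring
  have h5 : δ * (x ⬝ᵥ y) ≤ x ⬝ᵥ x := by nlinarith [mul_le_mul_of_nonneg_left h1 hδ.le]
  refine ⟨by nlinarith, ?_, ?_⟩
  · rw [inv_mul_eq_div, le_div_iff₀ hδ]; linarith
  · rw [inv_pow, inv_mul_eq_div, le_div_iff₀ (by positivity)]
    nlinarith [mul_le_mul_of_nonneg_left h1 hδ.le]

lemma trace_bounds (h : Coer δ A) (hδ : 0 < δ) : 0 ≤ A⁻¹.trace ∧ A⁻¹.trace ≤ δ⁻¹ * q := by
  have hj : ∀ j, A⁻¹ j j = Pi.single j 1 ⬝ᵥ (A⁻¹ *ᵥ Pi.single j 1) := by intro j; simp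
  have hb : ∀ j, 0 ≤ A⁻¹ j j ∧ A⁻¹ j j ≤ δ⁻¹ := by
    intro j
    have := h.inv_bounds hδ (Pi.single j 1)
    rw [← hj] at this
    exact ⟨this.1, by simpa using this.2.1⟩
  refine ⟨Finset.sum_nonneg fun j _ => (hb j).1, ?_⟩
  refine (Finset.sum_le_sum fun j _ => (hb j).2).trans ?_
  simp [mul_comm]

end Coer

/-- The matrix `z - Wᵀ W / n`. -/
def resA {N q : ℕ} (n z : ℝ) (W : Matrix (Fin N) (Fin q) ℝ) : Matrix (Fin q) (Fin q) ℝ :=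
  z • 1 - (1 / n) • (Wᵀ * W)

/-- The normalised resolvent trace `tr (z - Wᵀ W / n)⁻¹ / n`. -/
def rhoW {N q : ℕ} (n z : ℝ) (W : Matrix (Fin N) (Fin q) ℝ) : ℝ := (1 / n) * ((resA n z W)⁻¹).trace

/-- The fluctuation `(xᵢ ⬝ Rᵢ xᵢ - tr Rᵢ) / n`, `Rᵢ` being the resolvent without row `i`. -/
def looD {N q : ℕ} (n z : ℝ) (W : Matrix (Fin N) (Fin q) ℝ) (i : Fin N) : ℝ :=
  (1 / n) * (W i ⬝ᵥ ((resA n z (W.updateRow i 0))⁻¹ *ᵥ W i) - ((resA n z (W.updateRow i 0))⁻¹).trace)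

lemma resA_coer {N q : ℕ} {n z δ : ℝ} (hn : 0 < n) {W : Matrix (Fin N) (Fin q) ℝ}
    (h : QBound n (z - δ) W) : Coer δ (resA n z W) := by
  refine ⟨by simp [resA], fun x => ?_⟩
  have h1 := h x
  have e : x ⬝ᵥ (resA n z W *ᵥ x) = z * (x ⬝ᵥ x) - (1 / n) * ∑ i, (W *ᵥ x) i ^ 2 := by
    rw [resA, sub_mulVec, dotProduct_sub, smul_mulVec, smul_mulVec, one_mulVec, dotProduct_smul,
      dotProduct_smul, ← mulVec_mulVec, dotProduct_mulVec x, vecMul_transpose]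
    simp [dotProduct, sq]
  have e2 : ∑ j, x j ^ 2 = x ⬝ᵥ x := by simp [dotProduct, sq]
  rw [e2] at h1
  rw [e]
  have : (1 / n) * ∑ i, (W *ᵥ x) i ^ 2 ≤ (z - δ) * (x ⬝ᵥ x) := by
    rw [one_div, inv_mul_le_iff₀ hn]; linarith
  linarith

lemma updateRow_mulVec_sq {N q : ℕ} (W : Matrix (Fin N) (Fin q) ℝ) (i : Fin N) (x : Fin q → ℝ)
    (l : Fin N) : ((W.updateRow i 0) *ᵥ x) l = if l = i then 0 else (W *ᵥ x) l := by
  by_cases h : l = i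
  · subst h; simp [mulVec]
  · simp [mulVec, h]

lemma QBound.updateRow {N q : ℕ} {n c : ℝ} {W : Matrix (Fin N) (Fin q) ℝ} (h : QBound n c W)
    (i : Fin N) : QBound n c (W.updateRow i 0) := by
  intro x
  refine le_trans (Finset.sum_le_sum fun l _ => ?_) (h x)
  rw [updateRow_mulVec_sq]
  split_ifs
  · simpa using sq_nonneg _
  · exact le_rfl

lemma QBound.row_le {N q : ℕ} {n c : ℝ} (hn : 0 ≤ n) (hc : 0 ≤ c) {W : Matrix (Fin N) (Fin q) ℝ}
    (h : QBound n c W) (i : Fin N) : W i ⬝ᵥ W i ≤ n * c := by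
  have h1 := h (W i)
  have e2 : ∑ j, (W i) j ^ 2 = W i ⬝ᵥ W i := by simp [dotProduct, sq]
  have h2 : (W *ᵥ (W i)) i ^ 2 ≤ ∑ l, (W *ᵥ (W i)) l ^ 2 :=
    Finset.single_le_sum (f := fun l => (W *ᵥ (W i)) l ^ 2) (fun l _ => sq_nonneg _) (Finset.mem_univ i)
  have h3 : (W *ᵥ (W i)) i = W i ⬝ᵥ W i := rfl
  rw [h3] at h2
  rw [e2] at h1
  have h4 : 0 ≤ W i ⬝ᵥ W i := dot_self_nonneg _
  by_contra hcon
  push Not at hcon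
  nlinarith [mul_nonneg hn hc]

lemma resA_updateRow {N q : ℕ} (n z : ℝ) (W : Matrix (Fin N) (Fin q) ℝ) (i : Fin N) :
    resA n z (W.updateRow i 0) = resA n z W + (1 / n) • vecMulVec (W i) (W i) := by
  have : Wᵀ * W = (W.updateRow i 0)ᵀ * (W.updateRow i 0) + vecMulVec (W i) (W i) := by
    ext a b
    simp only [mul_apply, transpose_apply, Matrix.add_apply, vecMulVec_apply]
    rw [← Finset.add_sum_erase _ _ (Finset.mem_univ i),
      ← Finset.add_sum_erase (a := i) _ (fun l => W.updateRow i 0 l a * W.updateRow i 0 l b) (Finset.mem_univ i)]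
    simp only [updateRow_self, Pi.zero_apply, zero_mul, zero_add]
    rw [add_comm]
    congr 1
    refine Finset.sum_congr rfl fun l hl => ?_
    rw [updateRow_ne (Finset.ne_of_mem_erase hl)]
  rw [resA, resA, this, smul_add]
  abel

/-- The approximate self-consistent equation for the resolvent trace, with an explicit error. It
comes from `z tr R - q = (1/n) ∑ᵢ xᵢ ⬝ R xᵢ` and the Sherman–Morrison formula for the removal of
row `i`. -/
theorem loo_bound {N q : ℕ} {n z δ : ℝ} (hn : 0 < n) (hNn : (N : ℝ) ≤ n) (hδ : 0 < δ) (hδz : δ ≤ z)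
    {W : Matrix (Fin N) (Fin q) ℝ} (h : QBound n (z - δ) W) :
    |(z * rhoW n z W - q / n) * (1 - rhoW n z W) - N / n * rhoW n z W|
      ≤ (1 + z / δ) * (Real.sqrt (∑ i, looD n z W i ^ 2) / Real.sqrt n + z / δ ^ 2 / n) := by
  set A := resA n z W with hA
  have hAc : Coer δ A := resA_coer hn h
  set R := A⁻¹ with hR
  have hAR : A * R = 1 := mul_nonsing_inv _ (hAc.isUnit hδ)
  have hRA : R * A = 1 := nonsing_inv_mul _ (hAc.isUnit hδ)
  set ρ := rhoW n z W with hρ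
  set σ : Fin N → ℝ := fun i => (1 / n) * (W i ⬝ᵥ (R *ᵥ W i)) with hσ
  set Ri : Fin N → Matrix (Fin q) (Fin q) ℝ := fun i => (resA n z (W.updateRow i 0))⁻¹ with hRi
  set τ : Fin N → ℝ := fun i => (1 / n) * (W i ⬝ᵥ (Ri i *ᵥ W i)) with hτ
  have hz : 0 < z := hδ.trans_le hδz
  have hrow : ∀ i, (1 / n) * (W i ⬝ᵥ W i) ≤ z := fun i => by
    have := h.row_le hn.le (by linarith) i
    rw [one_div, inv_mul_le_iff₀ hn]; nlinarith
  have hrow0 : ∀ i, 0 ≤ (1 / n) * (W i ⬝ᵥ W i) := fun i =>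
    mul_nonneg (by positivity) (dot_self_nonneg _)
  -- trace identity
  have htrace : z * ρ = q / n + (1 / n) * ∑ i, σ i := by
    have h1 : z • R = 1 + (1 / n) • (Wᵀ * W * R) := by
      have : A = z • 1 - (1 / n) • (Wᵀ * W) := rfl
      have h2 := hAR
      rw [this, sub_mul, smul_mul_assoc, one_mul, smul_mul_assoc] at h2
      rw [← h2]; abel
    have h2 := congrArg trace h1
    rw [trace_smul, trace_add, trace_smul, trace_one, Matrix.mul_assoc, trace_mul_comm Wᵀ] at h2
    have h3 : (W * R * Wᵀ).trace = ∑ i, W i ⬝ᵥ (R *ᵥ W i) := by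
      simp only [trace, diag_apply]
      refine Finset.sum_congr rfl fun i _ => ?_
      rw [Matrix.mul_assoc]
      rfl
    rw [h3] at h2
    simp only [smul_eq_mul, Fintype.card_fin] at h2
    rw [hρ, rhoW, ← hA, ← hR]
    simp only [hσ]
    rw [← Finset.mul_sum]
    calc z * (1 / n * R.trace) = (1 / n) * (z * R.trace) := by ring
      _ = _ := by rw [h2]; ring
  have hloo : ∀ i, σ i = (1 + σ i) * τ i ∧ 0 ≤ σ i ∧ σ i ≤ z / δ ∧
      |τ i - ρ| ≤ |looD n z W i| + z / δ ^ 2 / n := by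
    intro i
    set x := W i with hx
    have hc : Coer δ (resA n z (W.updateRow i 0)) := resA_coer hn (h.updateRow i)
    have hAi : resA n z (W.updateRow i 0) = A + (1 / n) • vecMulVec x x := resA_updateRow n z W i
    have hAiR : Ri i * resA n z (W.updateRow i 0) = 1 := nonsing_inv_mul _ (hc.isUnit hδ)
    have hb := hAc.inv_bounds hδ x
    have hbi := hc.inv_bounds hδ x
    -- `R x = (1 + σ) Rᵢ x`
    have h1 : R *ᵥ x = (1 + σ i) • (Ri i *ᵥ x) := by
      have h2 : resA n z (W.updateRow i 0) *ᵥ (R *ᵥ x) = (1 + σ i) • x := by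
        rw [hAi, add_mulVec, mulVec_mulVec, hAR, one_mulVec, smul_mulVec, vecMulVec_mulVec]
        ext j
        simp [hσ, ← hx]
        ring
      have h3 := congrArg (fun y => Ri i *ᵥ y) h2
      simp only [mulVec_mulVec] at h3
      rw [← mul_assoc, hAiR, one_mul, mulVec_smul] at h3
      exact h3
    have h4 : σ i = (1 + σ i) * τ i := by
      have : σ i = (1 / n) * (x ⬝ᵥ (R *ᵥ x)) := rfl
      refine this.trans ?_
      rw [h1, dotProduct_smul, smul_eq_mul]
      show _ = (1 + σ i) * ((1 / n) * (x ⬝ᵥ (Ri i *ᵥ x)))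
      ring
    refine ⟨h4, mul_nonneg (by positivity) hb.1, ?_, ?_⟩
    · calc σ i ≤ (1 / n) * (δ⁻¹ * (x ⬝ᵥ x)) := by
            simp only [hσ]; gcongr; exact hb.2.1
        _ = δ⁻¹ * ((1 / n) * (x ⬝ᵥ x)) := by ring
        _ ≤ δ⁻¹ * z := by gcongr; exact hrow i
        _ = z / δ := by ring
    -- trace comparison
    · have h5 : R - Ri i = (1 / n) • (Ri i * vecMulVec x x * R) := by
        have : (1 / n) • vecMulVec x x = resA n z (W.updateRow i 0) - A := by rw [hAi]; abel
        rw [← smul_mul_assoc, ← mul_smul_comm, this, mul_sub, hAiR, sub_mul, mul_assoc, hAR]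
        simp
      have h6 : R.trace - (Ri i).trace = (1 / n) * ((Ri i *ᵥ x) ⬝ᵥ (R *ᵥ x)) := by
        rw [← trace_sub, h5, trace_smul, smul_eq_mul, mul_vecMulVec, vecMulVec_mul, trace_vecMulVec]
        rw [← mulVec_transpose, hAc.inv_symm]
      have h7 : |R.trace - (Ri i).trace| ≤ z / δ ^ 2 := by
        have h8 : |(Ri i *ᵥ x) ⬝ᵥ (R *ᵥ x)| ≤ (δ⁻¹) ^ 2 * (x ⬝ᵥ x) := by
          have a1 : 0 ≤ ((Ri i *ᵥ x) - (R *ᵥ x)) ⬝ᵥ ((Ri i *ᵥ x) - (R *ᵥ x)) := dot_self_nonneg _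
          have a2 : 0 ≤ ((Ri i *ᵥ x) + (R *ᵥ x)) ⬝ᵥ ((Ri i *ᵥ x) + (R *ᵥ x)) := dot_self_nonneg _
          simp only [sub_dotProduct, dotProduct_sub, add_dotProduct, dotProduct_add,
            dotProduct_comm (R *ᵥ x) (Ri i *ᵥ x)] at a1 a2
          rw [abs_le]
          constructor <;> linarith [hb.2.2, hbi.2.2]
        rw [h6, abs_mul, abs_of_pos (by positivity : 0 < 1 / n)]
        calc _ ≤ (1 / n) * ((δ⁻¹) ^ 2 * (x ⬝ᵥ x)) := by gcongr
          _ = (δ⁻¹) ^ 2 * ((1 / n) * (x ⬝ᵥ x)) := by ring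
          _ ≤ (δ⁻¹) ^ 2 * z := by gcongr; exact hrow i
          _ = z / δ ^ 2 := by ring
      have h9 : τ i - ρ = looD n z W i - (1 / n) * (R.trace - (Ri i).trace) := by
        simp only [hτ, hρ, rhoW, looD, ← hA, ← hR, hRi]
        ring
      rw [h9]
      refine (abs_sub _ _).trans ?_
      gcongr
      rw [abs_mul, abs_of_pos (by positivity : 0 < 1 / n), one_div, inv_mul_eq_div]
      gcongr
  have hid : (z * ρ - q / n) * (1 - ρ) - N / n * ρ = (1 / n) * ∑ i, (1 + σ i) * (τ i - ρ) := by
    have : ∀ i, (1 + σ i) * (τ i - ρ) = σ i * (1 - ρ) - ρ := fun i => by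
      have := (hloo i).1
      rw [mul_sub, ← this]; ring
    simp_rw [this]
    rw [htrace, Finset.sum_sub_distrib, ← Finset.sum_mul]
    simp
    ring
  rw [hid, abs_mul, abs_of_pos (by positivity : 0 < 1 / n)]
  have hC : 0 ≤ z / δ := by positivity
  have hz2 : 0 ≤ z / δ ^ 2 / n := by positivity
  have hs1 : |∑ i, (1 + σ i) * (τ i - ρ)| ≤ (1 + z / δ) * (∑ i, |looD n z W i| + n * (z / δ ^ 2 / n)) := by
    calc |∑ i, (1 + σ i) * (τ i - ρ)| ≤ ∑ i, |(1 + σ i) * (τ i - ρ)| := Finset.abs_sum_le_sum_abs _ _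
      _ ≤ ∑ i, (1 + z / δ) * (|looD n z W i| + z / δ ^ 2 / n) := by
          refine Finset.sum_le_sum fun i _ => ?_
          obtain ⟨-, b1, b2, b3⟩ := hloo i
          rw [abs_mul, abs_of_nonneg (by linarith : 0 ≤ 1 + σ i)]
          gcongr
      _ = (1 + z / δ) * (∑ i, |looD n z W i| + N * (z / δ ^ 2 / n)) := by
          rw [← Finset.mul_sum, Finset.sum_add_distrib]; simp
      _ ≤ _ := by gcongr
  have hs2 : ∑ i, |looD n z W i| ≤ Real.sqrt n * Real.sqrt (∑ i, looD n z W i ^ 2) := by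
    have hcs := sq_sum_le_card_mul_sum_sq (s := Finset.univ) (f := fun i => |looD n z W i|)
    simp only [sq_abs, Finset.card_univ, Fintype.card_fin] at hcs
    rw [← Real.sqrt_mul hn.le]
    apply Real.le_sqrt_of_sq_le
    refine hcs.trans ?_
    exact mul_le_mul_of_nonneg_right hNn (Finset.sum_nonneg fun _ _ => sq_nonneg _)
  have hsn : Real.sqrt n * Real.sqrt n = n := Real.mul_self_sqrt hn.le
  have hsn0 : 0 < Real.sqrt n := Real.sqrt_pos.2 hn
  calc (1 / n) * |∑ i, (1 + σ i) * (τ i - ρ)|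
      ≤ (1 / n) * ((1 + z / δ) * (Real.sqrt n * Real.sqrt (∑ i, looD n z W i ^ 2) + n * (z / δ ^ 2 / n))) := by
        gcongr
        refine hs1.trans ?_
        gcongr
    _ = (1 + z / δ) * ((1 / n * Real.sqrt n) * Real.sqrt (∑ i, looD n z W i ^ 2) + (1 / n * n) * (z / δ ^ 2 / n)) := by ring
    _ = _ := by
        have e1 : 1 / n * Real.sqrt n = 1 / Real.sqrt n := by
          rw [div_mul_eq_mul_div, one_mul, div_eq_div_iff hn.ne' hsn0.ne', hsn, one_mul]
        have e2 : 1 / n * n = 1 := by field_simp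
        rw [e1, e2]; ring

/-! ### Leave-one-out fluctuations -/

/-- The matrix with the given family of entries. -/
abbrev toM {N q : ℕ} (W : Fin N × Fin q → ℝ) : Matrix (Fin N) (Fin q) ℝ :=
  Matrix.of fun i j => W (i, j)

lemma measurable_det_entries {α : Type*} [MeasurableSpace α] {q : ℕ}
    {f : α → Matrix (Fin q) (Fin q) ℝ} (hf : ∀ i j, Measurable fun a => f a i j) :
    Measurable fun a => (f a).det := by
  simp_rw [det_apply]
  refine Finset.measurable_sum _ fun σ _ => ?_
  refine Measurable.const_smul ?_ _
  exact Finset.measurable_prod _ fun i _ => hf _ _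

lemma measurable_inv_entries {α : Type*} [MeasurableSpace α] {q : ℕ}
    {f : α → Matrix (Fin q) (Fin q) ℝ} (hf : ∀ i j, Measurable fun a => f a i j) (i j : Fin q) :
    Measurable fun a => (f a)⁻¹ i j := by
  simp_rw [inv_def, Matrix.smul_apply, Ring.inverse_eq_inv', smul_eq_mul, adjugate_apply]
  refine (measurable_det_entries hf).inv.mul (measurable_det_entries fun a b => ?_)
  by_cases h : a = j
  · subst h; simp
  · simpa [updateRow_ne h] using hf a b

lemma measurable_resA {α : Type*} [MeasurableSpace α] {N q : ℕ} (n z : ℝ)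
    {f : α → Matrix (Fin N) (Fin q) ℝ} (hf : ∀ i j, Measurable fun a => f a i j) (i j : Fin q) :
    Measurable fun a => resA n z (f a) i j := by
  simp only [resA, Matrix.sub_apply, Matrix.smul_apply, mul_apply, transpose_apply, smul_eq_mul]
  refine measurable_const.sub (Measurable.const_mul ?_ _)
  exact Finset.measurable_sum _ fun l _ => (hf _ _).mul (hf _ _)

lemma measurableSet_QBound {ι : Type*} [Fintype ι] {N q : ℕ} (n c : ℝ)
    {f : (ι → ℝ) → Matrix (Fin N) (Fin q) ℝ} (hf : ∀ i j, Continuous fun a => f a i j) :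
    MeasurableSet {w | QBound n c (f w)} := by
  have : IsClosed {w | QBound n c (f w)} := by
    simp only [QBound, Set.ofPred_forall]
    refine isClosed_iInter fun x => isClosed_le ?_ continuous_const
    refine continuous_finsetSum _ fun i _ => Continuous.pow ?_ 2
    simp only [mulVec, dotProduct]
    exact continuous_finsetSum _ fun j _ => (hf i j).mul continuous_const
  exact this.measurableSet

/-- The second moment of one leave-one-out fluctuation: the resolvent `Rᵢ` does not involve
row `i`, so conditionally on the other rows this is a centred quadratic form. -/
lemma loo_expect {N q : ℕ} {n z δ : ℝ} (hn : 0 < n) (hδ : 0 < δ) (i : Fin N) :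
    ∫⁻ W, ({W | QBound n (z - δ) ((toM W).updateRow i 0)}).indicator
      (fun W => ENNReal.ofReal (looD n z (toM W) i ^ 2)) W ∂gpi (Fin N × Fin q)
      ≤ ENNReal.ofReal (kap * (q * (δ⁻¹) ^ 2) / n ^ 2) := by
  classical
  let τ := {x : Fin N × Fin q // x.1 ≠ i}
  let e : Fin q ⊕ τ ≃ Fin N × Fin q := Equiv.ofBijective
    (Sum.elim (fun j => (i, j)) (fun x => x.1)) (by
      constructor
      · rintro (a | a) (b | b) h
        · simpa using h
        · exact absurd (congrArg Prod.fst h).symm b.2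
        · exact absurd (congrArg Prod.fst h) a.2
        · exact congrArg Sum.inr (Subtype.ext h)
      · rintro ⟨a, b⟩
        by_cases h : a = i
        · exact ⟨Sum.inl b, by simp [h]⟩
        · exact ⟨Sum.inr ⟨(a, b), h⟩, rfl⟩)
  let M0 : (τ → ℝ) → Matrix (Fin N) (Fin q) ℝ :=
    fun w => Matrix.of fun a b => if h : a = i then 0 else w ⟨(a, b), h⟩
  have hM0c : ∀ a b, Continuous fun w => M0 w a b := by
    intro a b
    by_cases h : a = i
    · simp [M0, h, continuous_const]
    · simp only [M0, of_apply, h, dite_false]; exact continuous_apply _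
  have hM0 : ∀ W : Fin N × Fin q → ℝ, (toM W).updateRow i 0 = M0 (fun j => W (e (Sum.inr j))) := by
    intro W
    ext a b
    by_cases h : a = i
    · subst h; simp [M0]
    · rw [updateRow_ne h]; simp only [M0, of_apply, h, dite_false]; rfl
  let R : (τ → ℝ) → Matrix (Fin q) (Fin q) ℝ := fun w => (resA n z (M0 w))⁻¹
  let S : Set (τ → ℝ) := {w | QBound n (z - δ) (M0 w)}
  have hS : MeasurableSet S := measurableSet_QBound _ _ hM0c
  have hR : ∀ a b, Measurable fun w => R w a b :=
    measurable_inv_entries (measurable_resA n z fun a b => (hM0c a b).measurable)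
  let Φ : (Fin q → ℝ) × (τ → ℝ) → ENNReal := fun y =>
    S.indicator (fun _ => ENNReal.ofReal (((1 / n) * (y.1 ⬝ᵥ (R y.2 *ᵥ y.1) - (R y.2).trace)) ^ 2)) y.2
  have hΦ : Measurable Φ := by
    have h1 : Measurable fun y : (Fin q → ℝ) × (τ → ℝ) =>
        ENNReal.ofReal (((1 / n) * (y.1 ⬝ᵥ (R y.2 *ᵥ y.1) - (R y.2).trace)) ^ 2) := by
      refine ENNReal.measurable_ofReal.comp (Measurable.pow_const (Measurable.const_mul ?_ _) 2)
      refine Measurable.sub ?_ ?_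
      · simp only [dotProduct, mulVec]
        refine Finset.measurable_sum _ fun a _ => ?_
        refine ((measurable_pi_apply a).comp measurable_fst).mul ?_
        exact Finset.measurable_sum _ fun b _ =>
          ((hR a b).comp measurable_snd).mul ((measurable_pi_apply b).comp measurable_fst)
      · exact Finset.measurable_sum _ fun a _ => (hR a a).comp measurable_snd
    have : Φ = (Prod.snd ⁻¹' S).indicator (fun y : (Fin q → ℝ) × (τ → ℝ) =>
        ENNReal.ofReal (((1 / n) * (y.1 ⬝ᵥ (R y.2 *ᵥ y.1) - (R y.2).trace)) ^ 2)) := by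
      ext y; simp [Φ, Set.indicator]
    rw [this]
    exact h1.indicator (measurable_snd hS)
  have hmp := gpi_split e
  calc _ = ∫⁻ W, Φ ((fun j => W (e (Sum.inl j))), fun j => W (e (Sum.inr j))) ∂gpi (Fin N × Fin q) := by
        refine lintegral_congr fun W => ?_
        simp only [Set.indicator, Φ, looD, hM0, Set.mem_ofPred_eq, S]
        rfl
    _ = ∫⁻ y, Φ y ∂((gpi (Fin q)).prod (gpi τ)) := hmp.lintegral_comp hΦ
    _ = ∫⁻ w, ∫⁻ v, Φ (v, w) ∂gpi (Fin q) ∂gpi τ := lintegral_prod_symm' _ hΦ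
    _ ≤ ∫⁻ w, ENNReal.ofReal (kap * (q * (δ⁻¹) ^ 2) / n ^ 2) ∂gpi τ := by
        refine lintegral_mono fun w => ?_
        by_cases hw : w ∈ S
        · simp only [Φ, Set.indicator, hw, if_true]
          have hc : Coer δ (resA n z (M0 w)) := resA_coer hn hw
          have key := lintegral_sq_form (R w) (b := δ⁻¹) (by
            show (R w)ᴴ = R w
            rw [conjTranspose_eq_transpose_of_trivial]; exact hc.inv_symm)
            (fun x => ⟨(hc.inv_bounds hδ x).1, (hc.inv_bounds hδ x).2.1⟩)
          have e1 : ∀ v : Fin q → ℝ, ENNReal.ofReal (((1 / n) * (v ⬝ᵥ (R w *ᵥ v) - (R w).trace)) ^ 2)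
              = ENNReal.ofReal ((1 / n) ^ 2) * ENNReal.ofReal ((v ⬝ᵥ (R w *ᵥ v) - (R w).trace) ^ 2) := by
            intro v; rw [mul_pow, ENNReal.ofReal_mul (by positivity)]
          simp_rw [e1]
          rw [lintegral_const_mul' _ _ ENNReal.ofReal_ne_top]
          refine (mul_le_mul_right key _).trans ?_
          rw [← ENNReal.ofReal_mul (by positivity)]
          apply le_of_eq; congr 1; ring
        · simp [Φ, Set.indicator, hw]
    _ = _ := by simp

/-- Markov's inequality for the sum of the squared leave-one-out fluctuations, on the event of
bounded spectrum. -/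
lemma loo_markov {N q : ℕ} {n z δ K : ℝ} (hn : 0 < n) (hδ : 0 < δ) (hK : 0 < K) :
    gpi (Fin N × Fin q) {W | QBound n (z - δ) (toM W) ∧ K ≤ ∑ i, looD n z (toM W) i ^ 2}
      ≤ ENNReal.ofReal (N * (kap * (q * (δ⁻¹) ^ 2) / n ^ 2) / K) := by
  classical
  let g : Fin N → (Fin N × Fin q → ℝ) → ENNReal := fun i =>
    ({W | QBound n (z - δ) ((toM W).updateRow i 0)}).indicator
      (fun W => ENNReal.ofReal (looD n z (toM W) i ^ 2))
  have hupd : ∀ i a b, Continuous fun W : Fin N × Fin q → ℝ => (toM W).updateRow i 0 a b := by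
    intro i a b
    by_cases h : a = i
    · subst h; simp [continuous_const]
    · simp only [updateRow_ne h, of_apply]; exact continuous_apply _
  have hg : ∀ i, Measurable (g i) := by
    intro i
    refine Measurable.indicator ?_ (measurableSet_QBound _ _ (hupd i))
    refine ENNReal.measurable_ofReal.comp (Measurable.pow_const ?_ 2)
    have hR := measurable_inv_entries (measurable_resA n z fun a b => (hupd i a b).measurable)
    refine Measurable.const_mul (Measurable.sub ?_ ?_) _
    · simp only [dotProduct, mulVec]
      refine Finset.measurable_sum _ fun a _ => ?_
      refine (measurable_pi_apply (i, a)).mul ?_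
      exact Finset.measurable_sum _ fun b _ => (hR a b).mul (measurable_pi_apply (i, b))
    · exact Finset.measurable_sum _ fun a _ => hR a a
  have hsub : {W | QBound n (z - δ) (toM W) ∧ K ≤ ∑ i, looD n z (toM W) i ^ 2}
      ⊆ {W | ENNReal.ofReal K ≤ ∑ i, g i W} := by
    rintro W ⟨h1, h2⟩
    have : ∀ i, g i W = ENNReal.ofReal (looD n z (toM W) i ^ 2) := fun i =>
      Set.indicator_of_mem (h1.updateRow i) _
    simp only [Set.mem_ofPred_eq, this]
    rw [← ENNReal.ofReal_sum_of_nonneg fun i _ => sq_nonneg _]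
    exact ENNReal.ofReal_le_ofReal h2
  refine (measure_mono hsub).trans ?_
  refine (meas_ge_le_lintegral_div (Finset.measurable_sum _ fun i _ => hg i).aemeasurable
    (by simpa using hK) ENNReal.ofReal_ne_top).trans ?_
  rw [lintegral_finsetSum _ fun i _ => hg i, ENNReal.ofReal_div_of_pos hK]
  gcongr
  refine (Finset.sum_le_sum fun i _ => loo_expect hn hδ i).trans ?_
  rw [Finset.sum_const, nsmul_eq_mul, ENNReal.ofReal_mul (by positivity)]
  simp

/-! ### Ordered eigenvalues -/

lemma exists_diag {q : ℕ} {A : Matrix (Fin q) (Fin q) ℝ} (h : A.IsHermitian) :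
    ∃ U : Matrix (Fin q) (Fin q) ℝ, Uᵀ * U = 1 ∧ U * Uᵀ = 1 ∧ A = U * diagonal h.eigenvalues * Uᵀ := by
  refine ⟨(h.eigenvectorUnitary).1, ?_⟩
  set U : Matrix (Fin q) (Fin q) ℝ := (h.eigenvectorUnitary).1 with hU
  have hUU : Uᵀ * U = 1 := by
    have := Unitary.coe_star_mul_self h.eigenvectorUnitary
    simpa [star_eq_conjTranspose, conjTranspose_eq_transpose_of_trivial] using this
  refine ⟨hUU, mul_eq_one_comm.1 hUU, ?_⟩
  have := h.spectral_theorem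
  simpa [Unitary.conjStarAlgAut_apply, star_eq_conjTranspose,
      conjTranspose_eq_transpose_of_trivial, Function.comp_def, ← hU] using this

lemma trace_inv_conj {q : ℕ} {U : Matrix (Fin q) (Fin q) ℝ} (h1 : Uᵀ * U = 1) (h2 : U * Uᵀ = 1)
    {v : Fin q → ℝ} (hv : ∀ j, v j ≠ 0) : ((U * diagonal v * Uᵀ)⁻¹).trace = ∑ j, (v j)⁻¹ := by
  have : (U * diagonal v * Uᵀ)⁻¹ = U * diagonal (fun j => (v j)⁻¹) * Uᵀ := by
    refine inv_eq_right_inv ?_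
    calc U * diagonal v * Uᵀ * (U * diagonal (fun j => (v j)⁻¹) * Uᵀ)
        = U * diagonal v * (Uᵀ * U) * diagonal (fun j => (v j)⁻¹) * Uᵀ := by simp only [mul_assoc]
      _ = U * (diagonal v * diagonal (fun j => (v j)⁻¹)) * Uᵀ := by rw [h1]; simp only [mul_assoc, mul_one, one_mul]
      _ = 1 := by
        rw [diagonal_mul_diagonal]
        simp [hv, h2]
  rw [this, trace_mul_comm, ← mul_assoc, h1, one_mul, trace_diagonal]

lemma gram_isHermitian {N q : ℕ} (W : Matrix (Fin N) (Fin q) ℝ) : (Wᵀ * W).IsHermitian := by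
  show (Wᵀ * W)ᴴ = _
  rw [conjTranspose_eq_transpose_of_trivial]; simp

lemma gram_eig_bounds {N q : ℕ} {W : Matrix (Fin N) (Fin q) ℝ} (j : Fin q) :
    0 ≤ (gram_isHermitian W).eigenvalues j ∧ ∀ n c : ℝ, QBound n c W →
      (gram_isHermitian W).eigenvalues j ≤ n * c := by
  obtain ⟨U, h1, h2, h3⟩ := exists_diag (gram_isHermitian W)
  set m := (gram_isHermitian W).eigenvalues
  have e : ∑ i, (W *ᵥ (U *ᵥ Pi.single j 1)) i ^ 2 = m j := by
    have : ∑ i, (W *ᵥ (U *ᵥ Pi.single j 1)) i ^ 2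
        = (U *ᵥ Pi.single j 1) ⬝ᵥ ((Wᵀ * W) *ᵥ (U *ᵥ Pi.single j 1)) := by
      rw [← mulVec_mulVec, dotProduct_mulVec _ Wᵀ, vecMul_transpose]
      simp [dotProduct, sq]
    rw [this, h3, mulVec_mulVec, mul_assoc, h1, mul_one, ← mulVec_mulVec, dotProduct_mulVec,
      ← mulVec_transpose, mulVec_mulVec, h1]
    simp
  have e2 : ∑ i, (U *ᵥ Pi.single j 1) i ^ 2 = 1 := by
    rw [orth_sum_sq h1]; simp [Pi.single_apply]
  refine ⟨e ▸ Finset.sum_nonneg fun i _ => sq_nonneg _, fun n c h => ?_⟩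
  have := h (U *ᵥ Pi.single j 1)
  rwa [e, e2, mul_one] at this

lemma sum_getD {q : ℕ} (L : List ℝ) (hq : L.length = q) (f : ℝ → ℝ) :
    ∑ α : Fin q, f (L.getD α 0) = (L.map f).sum := by
  subst hq
  rw [← List.sum_ofFn]
  congr 1
  refine List.ext_getElem (by simp) fun i h1 h2 => ?_
  simp at h1 h2
  simp [h1]

/-- The list `ithEigDesc A` is a decreasing rearrangement of the eigenvalues of `A`. -/
lemma ithEig_spec {q : ℕ} {A : Matrix (Fin q) (Fin q) ℝ} (h : A.IsHermitian) :
    Antitone (fun α : Fin q => ithEigDesc A α) ∧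
    (∀ f : ℝ → ℝ, ∑ α : Fin q, f (ithEigDesc A α) = ∑ j, f (h.eigenvalues j)) ∧
    ∀ α : Fin q, ∃ j, ithEigDesc A α = h.eigenvalues j := by
  set L := (List.ofFn h.eigenvalues).insertionSort (· ≥ ·) with hL
  have hE : eigsDesc A = L := by rw [eigsDesc, dif_pos h]
  have hperm : L.Perm (List.ofFn h.eigenvalues) := List.perm_insertionSort _ _
  have hlen : L.length = q := by simp [hL]
  have hs : L.Pairwise (· ≥ ·) := List.pairwise_insertionSort _ _
  simp only [ithEigDesc, hE]
  refine ⟨?_, fun f => ?_, fun α => ?_⟩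
  · intro a b hab
    have ha : (a : ℕ) < L.length := by rw [hlen]; exact a.2
    have hb : (b : ℕ) < L.length := by rw [hlen]; exact b.2
    simp only [List.getD_eq_getElem _ _ ha, List.getD_eq_getElem _ _ hb]
    rcases hab.eq_or_lt with rfl | hlt
    · exact le_rfl
    · exact List.pairwise_iff_getElem.1 hs _ _ ha hb hlt
  · rw [sum_getD L hlen f, (hperm.map f).sum_eq, List.map_ofFn, List.sum_ofFn]
    rfl
  · have ha : (α : ℕ) < L.length := by rw [hlen]; exact α.2
    rw [List.getD_eq_getElem _ _ ha]
    have : L[(α : ℕ)] ∈ List.ofFn h.eigenvalues := hperm.subset (List.getElem_mem ha)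
    rw [List.mem_ofFn] at this
    obtain ⟨j, hj⟩ := this
    exact ⟨j, hj.symm⟩

/-- The ordered eigenvalues of `Wᵀ W / n`. -/
def lamOf {N q : ℕ} (n : ℝ) (W : Matrix (Fin N) (Fin q) ℝ) (α : Fin q) : ℝ :=
  ithEigDesc (Wᵀ * W) α / n

lemma lamOf_bounds {N q : ℕ} {n : ℝ} (hn : 0 < n) (W : Matrix (Fin N) (Fin q) ℝ) (α : Fin q) :
    0 ≤ lamOf n W α ∧ ∀ c : ℝ, QBound n c W → lamOf n W α ≤ c := by
  obtain ⟨j, hj⟩ := (ithEig_spec (gram_isHermitian W)).2.2 α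
  rw [lamOf, hj]
  refine ⟨div_nonneg (gram_eig_bounds j).1 hn.le, fun c hc => ?_⟩
  rw [div_le_iff₀ hn, mul_comm]
  exact (gram_eig_bounds j).2 n c hc

lemma rhoW_eq {N q : ℕ} {n z δ : ℝ} (hn : 0 < n) (hδ : 0 < δ) {W : Matrix (Fin N) (Fin q) ℝ}
    (h : QBound n (z - δ) W) : rhoW n z W = (1 / n) * ∑ α, (z - lamOf n W α)⁻¹ := by
  obtain ⟨U, h1, h2, h3⟩ := exists_diag (gram_isHermitian W)
  set m := (gram_isHermitian W).eigenvalues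
  have e : resA n z W = U * diagonal (fun j => z - m j / n) * Uᵀ := by
    have : diagonal (fun j => z - m j / n) = z • (1 : Matrix (Fin q) (Fin q) ℝ) - (1 / n) • diagonal m := by
      ext a b
      by_cases hab : a = b
      · subst hab; simp; ring
      · simp [hab]
    rw [resA, h3, this, mul_sub, sub_mul]
    simp [h2]
  have := (ithEig_spec (gram_isHermitian W)).2.1 (fun x => (z - x / n)⁻¹)
  simp only [lamOf]
  rw [this, rhoW, e, trace_inv_conj h1 h2]
  intro j
  have := (gram_eig_bounds j).2 n _ h
  have : m j / n ≤ z - δ := by rw [div_le_iff₀ hn, mul_comm]; exact this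
  linarith

/-- Ordered eigenvalues are measurable functions of the entries: as `m → ∞`, the spectral function
`∑ (1 + (λ/t)^m)⁻¹` tends to the number of eigenvalues below `t`, those equal to `t` being counted
with weight one half. -/
lemma measurable_ithEig {N q : ℕ} (α : Fin q) :
    Measurable fun W : Fin N × Fin q → ℝ => ithEigDesc ((toM W)ᵀ * toM W) α := by
  set l : (Fin N × Fin q → ℝ) → Fin q → ℝ := fun W α => ithEigDesc ((toM W)ᵀ * toM W) α with hl
  let c : ℝ → ℝ → ℝ := fun t x => if x < t then 1 else if x = t then 1 / 2 else 0
  have hl0 : ∀ W α, 0 ≤ l W α := fun W α => by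
    obtain ⟨j, hj⟩ := (ithEig_spec (gram_isHermitian (toM W))).2.2 α
    simp only [hl, hj]; exact (gram_eig_bounds j).1
  have hentry : ∀ i j, Measurable fun W : Fin N × Fin q → ℝ => ((toM W)ᵀ * toM W) i j := by
    intro i j
    simp only [mul_apply, transpose_apply, of_apply]
    exact Finset.measurable_sum _ fun a _ => (measurable_pi_apply _).mul (measurable_pi_apply _)
  have hpow : ∀ (t : ℝ) (m : ℕ) i j, Measurable fun W : Fin N × Fin q → ℝ =>
      ((t⁻¹ • ((toM W)ᵀ * toM W)) ^ m) i j := by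
    intro t m
    induction m with
    | zero => intro i j; simp only [pow_zero]; exact measurable_const
    | succ m ih =>
      intro i j
      have : ∀ W : Fin N × Fin q → ℝ, ((t⁻¹ • ((toM W)ᵀ * toM W)) ^ (m + 1)) i j
          = ∑ a, ((t⁻¹ • ((toM W)ᵀ * toM W)) ^ m) i a * (t⁻¹ * ((toM W)ᵀ * toM W) a j) := by
        intro W
        rw [pow_succ, mul_apply]
        rfl
      simp_rw [this]
      exact Finset.measurable_sum _ fun a _ => (ih _ _).mul ((hentry a j).const_mul _)
  have hcount : ∀ t : ℝ, 0 < t → Measurable fun W => ∑ β, c t (l W β) := by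
    intro t ht
    have hlim : ∀ W, Tendsto (fun m : ℕ => ∑ β, (1 + (l W β / t) ^ m)⁻¹) atTop
        (𝓝 (∑ β, c t (l W β))) := by
      intro W
      refine tendsto_finsetSum _ fun β _ => ?_
      have hr : 0 ≤ l W β / t := div_nonneg (hl0 W β) ht.le
      by_cases h1 : l W β < t
      · simp only [c, h1, if_true]
        have := (tendsto_pow_atTop_nhds_zero_of_lt_one hr ((div_lt_one ht).2 h1)).const_add 1
        simpa using this.inv₀ (by norm_num)
      · by_cases h2 : l W β = t
        · simp only [c, h2, lt_irrefl, if_false, if_true, div_self ht.ne', one_pow]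
          norm_num
        · simp only [c, h1, h2, if_false]
          have h3 : 1 < l W β / t := (one_lt_div ht).2 (lt_of_le_of_ne (not_lt.1 h1) (Ne.symm h2))
          exact tendsto_inv_atTop_zero.comp
            (tendsto_atTop_add_const_left _ 1 (tendsto_pow_atTop_atTop_of_one_lt h3))
    refine measurable_of_tendsto_metrizable (f := fun (m : ℕ) W => ∑ β, (1 + (l W β / t) ^ m)⁻¹) ?_
      (tendsto_pi_nhds.2 hlim)
    intro m
    have : (fun W => ∑ β, (1 + (l W β / t) ^ m)⁻¹)
        = fun W => ((1 + (t⁻¹ • ((toM W)ᵀ * toM W)) ^ m)⁻¹).trace := by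
      ext W
      obtain ⟨U, h1, h2, h3⟩ := exists_diag (gram_isHermitian (toM W))
      have hs := (ithEig_spec (gram_isHermitian (toM W))).2.1 (fun x => (1 + (x / t) ^ m)⁻¹)
      simp only [hl]
      rw [hs]
      set e := (gram_isHermitian (toM W)).eigenvalues with he
      have hp : ∀ m : ℕ, (t⁻¹ • ((toM W)ᵀ * toM W)) ^ m = U * diagonal (fun j => (e j / t) ^ m) * Uᵀ := by
        intro m
        induction m with
        | zero => simp [h2]
        | succ m ih =>
          rw [pow_succ, ih, h3, ← smul_mul_assoc, ← mul_smul_comm]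
          calc U * diagonal (fun j => (e j / t) ^ m) * Uᵀ * (U * (t⁻¹ • diagonal e) * Uᵀ)
              = U * diagonal (fun j => (e j / t) ^ m) * (Uᵀ * U) * (t⁻¹ • diagonal e) * Uᵀ := by
                simp only [mul_assoc]
            _ = U * (diagonal (fun j => (e j / t) ^ m) * (t⁻¹ • diagonal e)) * Uᵀ := by
                rw [h1]; simp only [mul_assoc, mul_one, one_mul]
            _ = _ := by
                congr 2
                rw [← diagonal_smul, diagonal_mul_diagonal]
                congr 1; ext j; simp [pow_succ]; left; ring
      have : 1 + (t⁻¹ • ((toM W)ᵀ * toM W)) ^ m = U * diagonal (fun j => 1 + (e j / t) ^ m) * Uᵀ := by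
        rw [hp m, ← diagonal_add, mul_add, add_mul, diagonal_one, mul_one, h2]
      rw [this, trace_inv_conj h1 h2]
      intro j
      have : 0 ≤ e j / t := div_nonneg (gram_eig_bounds j).1 ht.le
      positivity
    rw [this]
    refine Finset.measurable_sum _ fun a _ => measurable_inv_entries (fun i j => ?_) a a
    simp only [Matrix.add_apply]
    exact measurable_const.add (hpow t m i j)
  refine measurable_of_Iio fun t => ?_
  have hset : (fun W => l W α) ⁻¹' Set.Iio t
      = ⋃ s : {s : ℚ // 0 < (s : ℝ) ∧ (s : ℝ) < t}, {W | ((q : ℝ) - 1 - α) < ∑ β, c s.1 (l W β)} := by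
    ext W
    have hanti := (ithEig_spec (gram_isHermitian (toM W))).1
    simp only [Set.mem_preimage, Set.mem_Iio, Set.mem_iUnion, Set.mem_ofPred_eq]
    have hcardI : ((Finset.Ici α).card : ℝ) = q - α := by
      rw [Fin.card_Ici, Nat.cast_sub α.2.le]
    constructor
    · intro h
      obtain ⟨s, hs1, hs2⟩ := exists_rat_btwn h
      refine ⟨⟨s, (hl0 W α).trans_lt hs1, hs2⟩, ?_⟩
      calc (q : ℝ) - 1 - α < q - α := by linarith
        _ = ∑ β ∈ Finset.Ici α, (1 : ℝ) := by rw [Finset.sum_const, nsmul_eq_mul, hcardI, mul_one]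
        _ ≤ ∑ β ∈ Finset.Ici α, c s (l W β) := by
            refine Finset.sum_le_sum fun β hβ => ?_
            have : l W β ≤ l W α := hanti (Finset.mem_Ici.1 hβ)
            simp [c, this.trans_lt hs1]
        _ ≤ ∑ β, c s (l W β) := Finset.sum_le_sum_of_subset_of_nonneg (Finset.subset_univ _)
            fun β _ _ => by simp only [c]; split_ifs <;> norm_num
    · rintro ⟨⟨s, hs0, hst⟩, hs⟩
      refine lt_of_le_of_lt ?_ hst
      by_contra hcon
      push Not at hcon
      simp only at hs
      have : ∑ β, c s (l W β) ≤ ∑ β ∈ Finset.Ioi α, (1 : ℝ) := by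
        rw [← Finset.sum_subset (Finset.subset_univ (Finset.Ioi α)) (f := fun β => c s (l W β))]
        · refine Finset.sum_le_sum fun β _ => ?_
          simp only [c]; split_ifs <;> norm_num
        · intro β _ hβ
          have : β ≤ α := by simpa using hβ
          have : (s : ℝ) < l W β := hcon.trans_le (hanti this)
          simp [c, this.not_gt, this.ne']
      have hc : ((Finset.Ioi α).card : ℝ) = q - 1 - α := by
        have h1 := α.2
        rw [Fin.card_Ioi, Nat.cast_sub (by omega), Nat.cast_sub (by omega)]
        simp
      rw [Finset.sum_const, nsmul_eq_mul, mul_one, hc] at this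
      linarith
  have hfun : (fun W : Fin N × Fin q → ℝ => ithEigDesc ((toM W)ᵀ * toM W) α) = fun W => l W α := rfl
  rw [hset]
  exact MeasurableSet.iUnion fun s => measurableSet_lt measurable_const (hcount _ s.2.1)

lemma measurable_lamOf {N q : ℕ} (n : ℝ) (α : Fin q) :
    Measurable fun W : Fin N × Fin q → ℝ => lamOf n (toM W) α :=
  (measurable_ithEig α).div_const n

/-! ### The resolvent trace at scale `n^{-1/2}` -/

/-- The quadratic equation solved by the Marchenko–Pastur resolvent trace. -/
def mpEps (γ z ρ : ℝ) : ℝ := z * ρ ^ 2 - (z + γ⁻¹ - 1) * ρ + γ⁻¹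

/-- Approximate solutions of the quadratic equation at the two nearby points `z` and `z + η`
which decrease from `z` to `z + η` at a bounded rate must be close to the smaller root. -/
lemma root_select {γ z C : ℝ} (hγ : 1 ≤ γ) (hz : bGamma γ < z) (hC : 0 ≤ C) :
    ∃ η > 0, ∃ κ > 0, ∃ s > 0, ∀ ρ₁ ρ₂ : ℝ, 0 ≤ ρ₂ → ρ₂ ≤ ρ₁ → ρ₁ ≤ ρ₂ + η * C →
      |mpEps γ z ρ₁| ≤ κ → |mpEps γ (z + η) ρ₂| ≤ κ → s * |ρ₁ - rhoLim γ z| ≤ |mpEps γ z ρ₁| := by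
  obtain ⟨ha, hab, -, -, hb1⟩ := gamma_edges hγ
  obtain ⟨hq, -, -⟩ := rhoLim_spec hγ hz
  have hz0 : 0 < z := by linarith
  set y := γ⁻¹ with hy
  have hy0 : 0 < y := by positivity
  have hy1 : y ≤ 1 := inv_le_one_of_one_le₀ hγ
  set s := Real.sqrt ((z - aGamma γ) * (z - bGamma γ)) with hs
  have hs0 : 0 < s := Real.sqrt_pos.2 (mul_pos (by linarith) (by linarith))
  have hrs : 2 * z * rhoLim γ z = (z + y - 1) - s := by
    rw [rhoLim, ← hs, ← hy]; field_simp
  set η := s / (2 * z * (C + 1)) with hη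
  have hη0 : 0 < η := by positivity
  have hηC : z * (η * C) ≤ s / 2 := by
    have : z * (η * C) = s / 2 * (C / (C + 1)) := by rw [hη]; field_simp
    rw [this]
    have : C / (C + 1) ≤ 1 := by rw [div_le_one (by linarith)]; linarith
    nlinarith
  refine ⟨η, hη0, min (y / 2) (η * y / (8 * (z + η))), lt_min (by positivity) (by positivity), s / 4,
    by positivity, fun ρ₁ ρ₂ h0 h21 h12 e1 e2 => ?_⟩
  have hlow : y / 2 ≤ (z + η) * (ρ₂ * (1 - ρ₂)) := by
    have h1 := (abs_le.1 (e2.trans (min_le_left _ _))).2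
    have : (z + η) * (ρ₂ * (1 - ρ₂)) = (1 - y) * ρ₂ + y - mpEps γ (z + η) ρ₂ := by
      rw [mpEps, ← hy]; ring
    rw [this]
    have := mul_nonneg (by linarith : 0 ≤ 1 - y) h0
    linarith
  have hlow2 : η * y / (2 * (z + η)) ≤ η * (ρ₂ * (1 - ρ₂)) := by
    rw [div_le_iff₀ (by positivity)]
    nlinarith [mul_le_mul_of_nonneg_left hlow hη0.le]
  have hid : (ρ₁ - ρ₂) * ((z + y - 1) - z * (ρ₁ + ρ₂))
      = η * (ρ₂ * (1 - ρ₂)) + (mpEps γ (z + η) ρ₂ - mpEps γ z ρ₁) := by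
    rw [mpEps, mpEps, ← hy]; ring
  have hpos : 0 < (ρ₁ - ρ₂) * ((z + y - 1) - z * (ρ₁ + ρ₂)) := by
    rw [hid]
    have h1 := (abs_le.1 (e1.trans (min_le_right _ _))).2
    have h2 := (abs_le.1 (e2.trans (min_le_right _ _))).1
    have h3 : η * y / (2 * (z + η)) = 4 * (η * y / (8 * (z + η))) := by field_simp; ring
    have h4 : 0 < η * y / (8 * (z + η)) := by positivity
    linarith
  have hpos2 : 0 < (z + y - 1) - z * (ρ₁ + ρ₂) := by
    by_contra hcon
    push Not at hcon
    nlinarith [mul_nonneg (sub_nonneg.2 h21) (neg_nonneg.2 hcon)]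
  have hmid : 2 * z * ρ₁ ≤ (z + y - 1) + s / 2 := by
    have := mul_le_mul_of_nonneg_left h12 hz0.le
    nlinarith
  have hfac : mpEps γ z ρ₁ = -((ρ₁ - rhoLim γ z) * ((z + y - 1) - z * (ρ₁ + rhoLim γ z))) := by
    have : mpEps γ z ρ₁ = mpEps γ z ρ₁ - mpEps γ z (rhoLim γ z) := by
      rw [mpEps, mpEps]; linarith
    rw [this, mpEps, mpEps, ← hy]; ring
  have hg : s / 4 ≤ (z + y - 1) - z * (ρ₁ + rhoLim γ z) := by nlinarith
  rw [hfac, abs_neg, abs_mul, abs_of_nonneg (by linarith : 0 ≤ (z + y - 1) - z * (ρ₁ + rhoLim γ z)),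
    mul_comm]
  gcongr

/-- Deterministic error bound for the quadratic equation on the event of bounded spectrum. -/
lemma eps_bound {N q : ℕ} {n γ z δ : ℝ} (hn : 0 < n) (hNn : (N : ℝ) ≤ n) (hq : (q : ℝ) ≤ 2 * n)
    (hδ : 0 < δ) (hδz : δ ≤ z) {W : Matrix (Fin N) (Fin q) ℝ} (h : QBound n (z - δ) W) :
    Real.sqrt n * |mpEps γ z (rhoW n z W)| ≤
      (1 + z / δ) * (Real.sqrt (∑ i, looD n z W i ^ 2) + z / δ ^ 2 / Real.sqrt n)
      + (1 + 2 / δ) * |Real.sqrt n * (q / n - γ⁻¹)| + 2 / δ * |Real.sqrt n * (N / n - 1)| := by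
  have h1 := loo_bound hn hNn hδ hδz h
  set ρ := rhoW n z W with hρ
  have hsn : Real.sqrt n * Real.sqrt n = n := Real.mul_self_sqrt hn.le
  have hsn0 : 0 < Real.sqrt n := Real.sqrt_pos.2 hn
  have htr := (resA_coer hn h).trace_bounds hδ
  have hρ0 : 0 ≤ ρ := mul_nonneg (by positivity) htr.1
  have hρ1 : ρ ≤ 2 / δ := by
    rw [hρ, rhoW, one_div, inv_mul_le_iff₀ hn]
    refine htr.2.trans ?_
    calc δ⁻¹ * q ≤ δ⁻¹ * (2 * n) := by gcongr
      _ = n * (2 / δ) := by ring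
  have hid : mpEps γ z ρ = -((z * ρ - q / n) * (1 - ρ) - N / n * ρ)
      + (-(1 - ρ) * (q / n - γ⁻¹)) - ρ * (N / n - 1) := by
    rw [mpEps]; ring
  have h2 : |mpEps γ z ρ| ≤ |(z * ρ - q / n) * (1 - ρ) - N / n * ρ|
      + (1 + 2 / δ) * |q / n - γ⁻¹| + 2 / δ * |N / n - 1| := by
    rw [hid]
    refine (abs_sub _ _).trans ?_
    refine add_le_add ((abs_add_le _ _).trans ?_) ?_
    · rw [abs_neg, abs_mul (-(1 - ρ))]
      gcongr
      rw [abs_neg, abs_le]; constructor <;> linarith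
    · rw [abs_mul, abs_of_nonneg hρ0]; gcongr
  calc Real.sqrt n * |mpEps γ z ρ|
      ≤ Real.sqrt n * ((1 + z / δ) * (Real.sqrt (∑ i, looD n z W i ^ 2) / Real.sqrt n + z / δ ^ 2 / n)
        + (1 + 2 / δ) * |q / n - γ⁻¹| + 2 / δ * |N / n - 1|) := by
        gcongr
        refine h2.trans ?_
        gcongr
    _ = (1 + z / δ) * ((Real.sqrt n / Real.sqrt n) * Real.sqrt (∑ i, looD n z W i ^ 2)
          + z / δ ^ 2 * (Real.sqrt n / n)) + (1 + 2 / δ) * (Real.sqrt n * |q / n - γ⁻¹|)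
          + 2 / δ * (Real.sqrt n * |N / n - 1|) := by ring
    _ = _ := by
        have e1 : Real.sqrt n / n = 1 / Real.sqrt n := by
          rw [div_eq_div_iff hn.ne' hsn0.ne', hsn, one_mul]
        rw [e1, div_self hsn0.ne', abs_mul, abs_mul, abs_of_pos hsn0]; ring

/-- The resolvent trace is decreasing in the spectral parameter, at a bounded rate. -/
lemma rho_compare {N q : ℕ} {n z δ η : ℝ} (hn : 0 < n) (hq : (q : ℝ) ≤ 2 * n)
    (hδ : 0 < δ) (hη : 0 < η) {W : Matrix (Fin N) (Fin q) ℝ} (h : QBound n (z - δ) W) :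
    0 ≤ rhoW n (z + η) W ∧ rhoW n (z + η) W ≤ rhoW n z W ∧
      rhoW n z W ≤ rhoW n (z + η) W + η * (2 / δ ^ 2) := by
  have h' : QBound n (z + η - (δ + η)) W := by
    have : z + η - (δ + η) = z - δ := by ring
    rwa [this]
  rw [rhoW_eq hn hδ h, rhoW_eq hn (by linarith : 0 < δ + η) h']
  have hl : ∀ α, δ ≤ z - lamOf n W α := fun α => by
    have := (lamOf_bounds hn W α).2 _ h; linarith
  refine ⟨mul_nonneg (by positivity) (Finset.sum_nonneg fun α _ => ?_), ?_, ?_⟩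
  · have := hl α; exact inv_nonneg.2 (by linarith)
  · gcongr with α
    · have := hl α; linarith
    · linarith
  · have : ∀ α, (z - lamOf n W α)⁻¹ ≤ (z + η - lamOf n W α)⁻¹ + η * (1 / δ ^ 2) := by
      intro α
      have h1 := hl α
      have h2 : 0 < z - lamOf n W α := by linarith
      have h3 : 0 < z + η - lamOf n W α := by linarith
      have e : (z - lamOf n W α)⁻¹ = (z + η - lamOf n W α)⁻¹
          + η * (1 / ((z - lamOf n W α) * (z + η - lamOf n W α))) := by field_simp; ring
      rw [e]
      gcongr
      nlinarith
    calc _ ≤ (1 / n) * ∑ α, ((z + η - lamOf n W α)⁻¹ + η * (1 / δ ^ 2)) := by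
          gcongr with α; exact this α
      _ = (1 / n) * ∑ α, (z + η - lamOf n W α)⁻¹ + η * ((q / n) * (1 / δ ^ 2)) := by
          rw [Finset.sum_add_distrib]; simp; ring
      _ ≤ _ := by
          have : (q : ℝ) / n ≤ 2 := by rw [div_le_iff₀ hn]; exact hq
          have : (q : ℝ) / n * (1 / δ ^ 2) ≤ 2 * (1 / δ ^ 2) := by gcongr
          rw [show (2 : ℝ) / δ ^ 2 = 2 * (1 / δ ^ 2) by ring]
          gcongr

lemma loo_markov' {N q : ℕ} {n z δ K : ℝ} (hn : 0 < n) (hNn : (N : ℝ) ≤ n) (hq : (q : ℝ) ≤ 2 * n)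
    (hδ : 0 < δ) (hK : 0 < K) :
    gpi (Fin N × Fin q) {W | QBound n (z - δ) (toM W) ∧ K ≤ Real.sqrt (∑ i, looD n z (toM W) i ^ 2)}
      ≤ ENNReal.ofReal (2 * kap / δ ^ 2 / K ^ 2) := by
  have hsub : {W : Fin N × Fin q → ℝ | QBound n (z - δ) (toM W) ∧ K ≤ Real.sqrt (∑ i, looD n z (toM W) i ^ 2)}
      ⊆ {W | QBound n (z - δ) (toM W) ∧ K ^ 2 ≤ ∑ i, looD n z (toM W) i ^ 2} := by
    rintro W ⟨h1, h2⟩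
    exact ⟨h1, (Real.le_sqrt' hK).1 h2⟩
  refine (measure_mono hsub).trans ((loo_markov hn hδ (by positivity)).trans ?_)
  apply ENNReal.ofReal_le_ofReal
  have hk := kap_nonneg
  gcongr
  calc (N : ℝ) * (kap * (q * (δ⁻¹) ^ 2) / n ^ 2) ≤ n * (kap * ((2 * n) * (δ⁻¹) ^ 2) / n ^ 2) := by gcongr
    _ = _ := by field_simp

/-- The resolvent trace of the sample covariance matrix is within `O_P(n^{-1/2})` of its limit. -/
theorem rho_tight (k : ℕ) {γ z : ℝ} (hγ : 1 ≤ γ) (hz : bGamma γ < z) {p : ℕ → ℕ}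
    (hr : Tendsto (fun n : ℕ => (p n : ℝ) / n) atTop (𝓝 γ⁻¹)) (hp : Tendsto p atTop atTop)
    (hr2 : Tendsto (fun n : ℕ => Real.sqrt n * (((p n - k : ℕ) : ℝ) / n - γ⁻¹)) atTop (𝓝 0))
    (ε : ENNReal) (hε : ε ≠ 0) :
    ∃ K : ℝ, ∀ᶠ n : ℕ in atTop, gpi (Fin (n - k) × Fin (p n - k))
      {W | ¬ Real.sqrt n * |rhoW n z (toM W) - rhoLim γ z| ≤ K} ≤ ε := by
  obtain ⟨ha, hab, -, -, hb1⟩ := gamma_edges hγ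
  set δ := (z - bGamma γ) / 2 with hδd
  have hδ : 0 < δ := by rw [hδd]; linarith
  have hδz : δ ≤ z := by rw [hδd]; linarith
  obtain ⟨η, hη, κ, hκ, s, hs, hroot⟩ := root_select (C := 2 / δ ^ 2) hγ hz (by positivity)
  have hε3 : ε / 3 ≠ 0 := by simp [hε]
  have hK : ∀ c : ℝ, ∀ᶠ K : ℝ in atTop, ENNReal.ofReal (c / K ^ 2) ≤ ε / 3 := by
    intro c
    have h1 : Tendsto (fun K : ℝ => c / K ^ 2) atTop (𝓝 0) :=
      tendsto_const_nhds.div_atTop (tendsto_pow_atTop (by norm_num))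
    have h2 := ENNReal.tendsto_ofReal h1
    rw [ENNReal.ofReal_zero] at h2
    exact h2.eventually (ge_mem_nhds (pos_iff_ne_zero.2 hε3))
  obtain ⟨K, hK1, hK2, hK0⟩ := ((hK (2 * kap / δ ^ 2)).and ((hK (2 * kap / (δ + η) ^ 2)).and
    (eventually_gt_atTop 0))).exists
  -- a common bound for the error terms at `z` and at `z + η`
  let B : ℝ := (1 + (z + η) / δ) * (K + 1) + 2
  have hB0 : 0 < B := by have : 0 < z := by linarith
                         positivity
  refine ⟨B / s, ?_⟩
  have hz0 : 0 < z := by linarith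
  have hsq : Tendsto (fun n : ℕ => Real.sqrt n) atTop atTop :=
    Real.tendsto_sqrt_atTop.comp tendsto_natCast_atTop_atTop
  have hNlim : Tendsto (fun n : ℕ => Real.sqrt n * (((n - k : ℕ) : ℝ) / n - 1)) atTop (𝓝 0) := by
    have h1 : Tendsto (fun n : ℕ => -(k : ℝ) / Real.sqrt n) atTop (𝓝 0) :=
      tendsto_const_nhds.div_atTop hsq
    refine h1.congr' ?_
    filter_upwards [eventually_ge_atTop (k + 1)] with n hn
    have hn0 : (0 : ℝ) < n := by exact_mod_cast (by omega : 0 < n)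
    have e1 : Real.sqrt n / n = 1 / Real.sqrt n := by
      rw [div_eq_div_iff hn0.ne' (Real.sqrt_pos.2 hn0).ne', Real.mul_self_sqrt hn0.le, one_mul]
    rw [Nat.cast_sub (by omega)]
    calc -(k : ℝ) / Real.sqrt n = -k * (1 / Real.sqrt n) := by ring
      _ = -k * (Real.sqrt n / n) := by rw [e1]
      _ = _ := by field_simp; ring
  have hq2 : ∀ᶠ n : ℕ in atTop, ((p n - k : ℕ) : ℝ) ≤ 2 * n := by
    have hy1 : γ⁻¹ < 2 := lt_of_le_of_lt (inv_le_one_of_one_le₀ hγ) (by norm_num)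
    filter_upwards [hr.eventually (gt_mem_nhds hy1), eventually_gt_atTop 0] with n h1 h0
    have h0' : (0 : ℝ) < n := by exact_mod_cast h0
    rw [div_lt_iff₀ h0'] at h1
    have : ((p n - k : ℕ) : ℝ) ≤ p n := by exact_mod_cast Nat.sub_le _ _
    linarith
  have herr : ∀ δ' : ℝ, ∀ᶠ n : ℕ in atTop,
      (1 + 2 / δ') * |Real.sqrt n * (((p n - k : ℕ) : ℝ) / n - γ⁻¹)| ≤ 1 ∧
      2 / δ' * |Real.sqrt n * (((n - k : ℕ) : ℝ) / n - 1)| ≤ 1 := by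
    intro δ'
    have h1 := (hr2.abs.const_mul (1 + 2 / δ'))
    have h2 := (hNlim.abs.const_mul (2 / δ'))
    simp only [abs_zero, mul_zero] at h1 h2
    exact (h1.eventually (ge_mem_nhds one_pos)).and (h2.eventually (ge_mem_nhds one_pos))
  have hsm : ∀ z' δ' : ℝ, ∀ᶠ n : ℕ in atTop, z' / δ' ^ 2 / Real.sqrt n ≤ 1 := fun z' δ' =>
    (tendsto_const_nhds.div_atTop hsq).eventually (ge_mem_nhds one_pos)
  have hedge := wishart_edge k hγ hr hp (show bGamma γ < z - δ by rw [hδd]; linarith)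
  filter_upwards [hedge.eventually (ge_mem_nhds (pos_iff_ne_zero.2 hε3)), hq2, herr δ, herr (δ + η),
    hsm z δ, hsm (z + η) (δ + η), eventually_gt_atTop 0,
    hsq.eventually_ge_atTop (B / κ)] with n h1 hq h2 h3 h4 h5 h0 h6
  have hn0 : (0 : ℝ) < n := by exact_mod_cast h0
  have hsn0 : 0 < Real.sqrt n := Real.sqrt_pos.2 hn0
  have hNn : (((n - k : ℕ)) : ℝ) ≤ n := by exact_mod_cast Nat.sub_le _ _
  have hshift : z + η - (δ + η) = z - δ := by ring
  have hδη : 0 < δ + η := by linarith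
  have hsub : {W : Fin (n - k) × Fin (p n - k) → ℝ | ¬ Real.sqrt n * |rhoW n z (toM W) - rhoLim γ z| ≤ B / s}
      ⊆ {W | ¬ QBound n (z - δ) (toM W)}
        ∪ ({W | QBound n (z - δ) (toM W) ∧ K ≤ Real.sqrt (∑ i, looD n z (toM W) i ^ 2)}
        ∪ {W | QBound n (z + η - (δ + η)) (toM W) ∧
            K ≤ Real.sqrt (∑ i, looD n (z + η) (toM W) i ^ 2)}) := by
    intro W hW
    by_contra hcon
    simp only [Set.mem_union, Set.mem_ofPred_eq, not_or, not_not, not_and, not_le, hshift] at hcon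
    obtain ⟨hG, hc1, hc2⟩ := hcon
    have hc1 := hc1 hG
    have hc2 := hc2 hG
    refine hW ?_
    have b1 := eps_bound (γ := γ) hn0 hNn hq hδ hδz hG
    have b2 := eps_bound (γ := γ) (z := z + η) (δ := δ + η) hn0 hNn hq hδη (by linarith)
      (by rw [hshift]; exact hG)
    have c1 : Real.sqrt n * |mpEps γ z (rhoW n z (toM W))| ≤ B := by
      have : (1 + z / δ) * (Real.sqrt (∑ i, looD n z (toM W) i ^ 2) + z / δ ^ 2 / Real.sqrt n)
          ≤ (1 + (z + η) / δ) * (K + 1) := by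
        gcongr
        linarith
      simp only [B]
      linarith [h2.1, h2.2]
    have c2 : Real.sqrt n * |mpEps γ (z + η) (rhoW n (z + η) (toM W))| ≤ B := by
      have : (1 + (z + η) / (δ + η)) *
          (Real.sqrt (∑ i, looD n (z + η) (toM W) i ^ 2) + (z + η) / (δ + η) ^ 2 / Real.sqrt n)
          ≤ (1 + (z + η) / δ) * (K + 1) := by
        gcongr
        linarith
      simp only [B]
      linarith [h3.1, h3.2]
    have hk : ∀ x, Real.sqrt n * |x| ≤ B → |x| ≤ κ := by
      intro x hx
      rw [div_le_iff₀ hκ] at h6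
      by_contra hcon
      push Not at hcon
      nlinarith [mul_lt_mul_of_pos_left hcon hsn0]
    obtain ⟨r0, r1, r2⟩ := rho_compare hn0 hq hδ hη hG
    have := hroot _ _ r0 r1 r2 (hk _ c1) (hk _ c2)
    rw [le_div_iff₀ hs]
    calc Real.sqrt n * |rhoW n z (toM W) - rhoLim γ z| * s
        = Real.sqrt n * (s * |rhoW n z (toM W) - rhoLim γ z|) := by ring
      _ ≤ Real.sqrt n * |mpEps γ z (rhoW n z (toM W))| := by gcongr
      _ ≤ B := c1
  refine (measure_mono hsub).trans ((measure_union_le _ _).trans ?_)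
  refine (add_le_add h1 ((measure_union_le _ _).trans (add_le_add
    ((loo_markov' hn0 hNn hq hδ hK0).trans hK1) ((loo_markov' hn0 hNn hq hδη hK0).trans hK2)))).trans ?_
  rw [← add_assoc, ENNReal.add_thirds]

/-! ### Boundedness and convergence in probability -/

section

variable {Ω : Type*} [MeasurableSpace Ω] {P : Measure Ω}

/-- The sequence is bounded in (outer) probability, `X_n = O_P(1)`. -/
def Tight (P : Measure Ω) (X : ℕ → Ω → ℝ) : Prop :=
  ∀ ε : ENNReal, ε ≠ 0 → ∃ K : ℝ, ∀ᶠ n in atTop, P {ω | ¬ |X n ω| ≤ K} ≤ ε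

/-- The events hold with (outer) probability tending to one. -/
def Whp (P : Measure Ω) (A : ℕ → Ω → Prop) : Prop :=
  Tendsto (fun n => P {ω | ¬ A n ω}) atTop (𝓝 0)

lemma tzero_iff {X : ℕ → Ω → ℝ} : TendstoInProbZero P X ↔
    ∀ t : ℝ, 0 < t → ∀ ε : ENNReal, ε ≠ 0 → ∀ᶠ n in atTop, P {ω | ¬ |X n ω| < t} ≤ ε := by
  simp only [TendstoInProbZero, not_lt]
  refine forall₂_congr fun t _ => ?_
  rw [ENNReal.tendsto_nhds_zero]
  exact forall_congr' fun ε => by rw [gt_iff_lt, pos_iff_ne_zero]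

lemma whp_iff {A : ℕ → Ω → Prop} : Whp P A ↔
    ∀ ε : ENNReal, ε ≠ 0 → ∀ᶠ n in atTop, P {ω | ¬ A n ω} ≤ ε := by
  rw [Whp, ENNReal.tendsto_nhds_zero]
  exact forall_congr' fun ε => by rw [gt_iff_lt, pos_iff_ne_zero]

lemma meas_not_le_add {A B C : Ω → Prop} (h : ∀ ω, A ω → B ω → C ω) {ε : ENNReal}
    (hA : P {ω | ¬ A ω} ≤ ε / 2) (hB : P {ω | ¬ B ω} ≤ ε / 2) : P {ω | ¬ C ω} ≤ ε := by
  have hsub : {ω | ¬ C ω} ⊆ {ω | ¬ A ω} ∪ {ω | ¬ B ω} := by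
    intro ω hω
    by_contra hcon
    simp only [Set.mem_union, Set.mem_ofPred_eq, not_or, not_not] at hcon
    exact hω (h ω hcon.1 hcon.2)
  exact (measure_mono hsub).trans ((measure_union_le _ _).trans
    ((add_le_add hA hB).trans (ENNReal.add_halves ε).le))

lemma Whp.and {A B : ℕ → Ω → Prop} (hA : Whp P A) (hB : Whp P B) :
    Whp P fun n ω => A n ω ∧ B n ω := by
  rw [whp_iff] at *
  intro ε hε
  have hε2 : ε / 2 ≠ 0 := by simp [hε]
  filter_upwards [hA _ hε2, hB _ hε2] with n h1 h2
  exact meas_not_le_add (fun ω a b => ⟨a, b⟩) h1 h2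

lemma Whp.mono {A B : ℕ → Ω → Prop} (hA : Whp P A) (h : ∀ᶠ n in atTop, ∀ ω, A n ω → B n ω) :
    Whp P B := by
  rw [whp_iff] at *
  intro ε hε
  filter_upwards [hA _ hε, h] with n h1 h2
  have hsub : {ω | ¬ B n ω} ⊆ {ω | ¬ A n ω} := fun ω hω ha => hω (h2 ω ha)
  exact (measure_mono hsub).trans h1

lemma Tight.whp_bound {X Y : ℕ → Ω → ℝ} {A : ℕ → Ω → Prop} (hA : Whp P A) (hX : Tight P X)
    (h : ∀ᶠ n in atTop, ∀ ω, A n ω → |Y n ω| ≤ |X n ω|) : Tight P Y := by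
  intro ε hε
  have hε2 : ε / 2 ≠ 0 := by simp [hε]
  obtain ⟨K, hK⟩ := hX _ hε2
  refine ⟨K, ?_⟩
  filter_upwards [hK, whp_iff.1 hA _ hε2, h] with n h1 h2 h3
  exact meas_not_le_add (fun ω a b => (h3 ω b).trans a) h1 h2

lemma Tight.congr {X Y : ℕ → Ω → ℝ} {A : ℕ → Ω → Prop} (hA : Whp P A) (hX : Tight P X)
    (h : ∀ᶠ n in atTop, ∀ ω, A n ω → Y n ω = X n ω) : Tight P Y :=
  Tight.whp_bound hA hX (h.mono fun _ hn ω ha => by rw [hn ω ha])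

lemma TendstoInProbZero.congr {X Y : ℕ → Ω → ℝ} {A : ℕ → Ω → Prop} (hA : Whp P A)
    (hX : TendstoInProbZero P X) (h : ∀ᶠ n in atTop, ∀ ω, A n ω → Y n ω = X n ω) :
    TendstoInProbZero P Y := by
  rw [tzero_iff] at *
  intro t ht ε hε
  have hε2 : ε / 2 ≠ 0 := by simp [hε]
  filter_upwards [hX t ht _ hε2, whp_iff.1 hA _ hε2, h] with n h1 h2 h3
  exact meas_not_le_add (fun ω a b => by rw [h3 ω b]; exact a) h1 h2

lemma TendstoInProbZero.tight {X : ℕ → Ω → ℝ} (hX : TendstoInProbZero P X) : Tight P X := by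
  intro ε hε
  refine ⟨1, ?_⟩
  filter_upwards [tzero_iff.1 hX 1 one_pos ε hε] with n h1
  have hsub : {ω | ¬ |X n ω| ≤ 1} ⊆ {ω | ¬ |X n ω| < 1} := fun ω hω ha => hω (le_of_lt ha)
  exact (measure_mono hsub).trans h1

lemma tight_of_bdd {x : ℕ → ℝ} {K : ℝ} (h : ∀ᶠ n in atTop, |x n| ≤ K) :
    Tight P fun n _ => x n := by
  intro ε _
  refine ⟨K, ?_⟩
  filter_upwards [h] with n hn
  simp [hn]

lemma tight_const (c : ℝ) : Tight P fun _ _ => c := tight_of_bdd (K := |c|) (by simp)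

lemma zero_of_tendsto {x : ℕ → ℝ} (h : Tendsto x atTop (𝓝 0)) :
    TendstoInProbZero P fun n _ => x n := by
  rw [tzero_iff]
  intro t ht ε _
  have h1 := h.abs
  rw [abs_zero] at h1
  filter_upwards [h1.eventually (gt_mem_nhds ht)] with n hn
  simp [hn]

lemma Tight.add {X Y : ℕ → Ω → ℝ} (hX : Tight P X) (hY : Tight P Y) :
    Tight P fun n ω => X n ω + Y n ω := by
  intro ε hε
  have hε2 : ε / 2 ≠ 0 := by simp [hε]
  obtain ⟨K, hK⟩ := hX _ hε2
  obtain ⟨L, hL⟩ := hY _ hε2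
  refine ⟨K + L, ?_⟩
  filter_upwards [hK, hL] with n h1 h2
  exact meas_not_le_add (fun ω a b => (abs_add_le _ _).trans (add_le_add a b)) h1 h2

lemma Tight.mul {X Y : ℕ → Ω → ℝ} (hX : Tight P X) (hY : Tight P Y) :
    Tight P fun n ω => X n ω * Y n ω := by
  intro ε hε
  have hε2 : ε / 2 ≠ 0 := by simp [hε]
  obtain ⟨K, hK⟩ := hX _ hε2
  obtain ⟨L, hL⟩ := hY _ hε2
  refine ⟨K * L, ?_⟩
  filter_upwards [hK, hL] with n h1 h2
  refine meas_not_le_add (fun ω a b => ?_) h1 h2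
  rw [abs_mul]
  exact mul_le_mul a b (abs_nonneg _) ((abs_nonneg _).trans a)

lemma Tight.neg {X : ℕ → Ω → ℝ} (hX : Tight P X) : Tight P fun n ω => - X n ω := by
  intro ε hε
  simpa using hX ε hε

lemma Tight.sub {X Y : ℕ → Ω → ℝ} (hX : Tight P X) (hY : Tight P Y) :
    Tight P fun n ω => X n ω - Y n ω := by
  simpa [sub_eq_add_neg] using hX.add hY.neg

lemma Tight.sum {ι : Type*} (s : Finset ι) {X : ι → ℕ → Ω → ℝ} (hX : ∀ i, Tight P (X i)) :
    Tight P fun n ω => ∑ i ∈ s, X i n ω := by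
  classical
  induction s using Finset.induction_on with
  | empty => simpa using tight_const 0
  | insert a s ha ih =>
    simp only [Finset.sum_insert ha]
    exact (hX a).add ih

namespace TendstoInProbZero

lemma add {X Y : ℕ → Ω → ℝ} (hX : TendstoInProbZero P X) (hY : TendstoInProbZero P Y) :
    TendstoInProbZero P fun n ω => X n ω + Y n ω := by
  rw [tzero_iff] at *
  intro t ht ε hε
  have hε2 : ε / 2 ≠ 0 := by simp [hε]
  filter_upwards [hX (t / 2) (by linarith) _ hε2, hY (t / 2) (by linarith) _ hε2] with n h1 h2
  exact meas_not_le_add (fun ω a b => (abs_add_le _ _).trans_lt (by linarith)) h1 h2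

lemma neg {X : ℕ → Ω → ℝ} (hX : TendstoInProbZero P X) : TendstoInProbZero P fun n ω => - X n ω := by
  intro ε hε
  simpa using hX ε hε

lemma sub {X Y : ℕ → Ω → ℝ} (hX : TendstoInProbZero P X) (hY : TendstoInProbZero P Y) :
    TendstoInProbZero P fun n ω => X n ω - Y n ω := by
  simpa [sub_eq_add_neg] using hX.add hY.neg

lemma mul_tight {X Y : ℕ → Ω → ℝ} (hX : TendstoInProbZero P X) (hY : Tight P Y) :
    TendstoInProbZero P fun n ω => X n ω * Y n ω := by
  rw [tzero_iff] at *
  intro t ht ε hε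
  have hε2 : ε / 2 ≠ 0 := by simp [hε]
  obtain ⟨K, hK⟩ := hY _ hε2
  filter_upwards [hX (t / (|K| + 1)) (by positivity) _ hε2, hK] with n h1 h2
  refine meas_not_le_add (fun ω a b => ?_) h1 h2
  rw [abs_mul]
  have h3 : |Y n ω| ≤ |K| + 1 := b.trans ((le_abs_self K).trans (by linarith))
  calc |X n ω| * |Y n ω| ≤ |X n ω| * (|K| + 1) := by gcongr
    _ < t / (|K| + 1) * (|K| + 1) := by gcongr
    _ = t := by field_simp

lemma tight_mul {X Y : ℕ → Ω → ℝ} (hX : Tight P X) (hY : TendstoInProbZero P Y) :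
    TendstoInProbZero P fun n ω => X n ω * Y n ω := by
  simpa only [mul_comm] using hY.mul_tight hX

lemma sum {ι : Type*} (s : Finset ι) {X : ι → ℕ → Ω → ℝ} (hX : ∀ i, TendstoInProbZero P (X i)) :
    TendstoInProbZero P fun n ω => ∑ i ∈ s, X i n ω := by
  classical
  induction s using Finset.induction_on with
  | empty => simpa using zero_of_tendsto (P := P) (x := fun _ => 0) tendsto_const_nhds
  | insert a s ha ih =>
    simp only [Finset.sum_insert ha]
    exact (hX a).add ih

end TendstoInProbZero

/-- Entrywise boundedness in probability of a sequence of random matrices. -/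
def MTight {a b : Type*} (P : Measure Ω) (X : ℕ → Ω → Matrix a b ℝ) : Prop :=
  ∀ i j, Tight P fun n ω => X n ω i j

/-- Entrywise convergence to zero in probability of a sequence of random matrices. -/
def MZero {a b : Type*} (P : Measure Ω) (X : ℕ → Ω → Matrix a b ℝ) : Prop :=
  ∀ i j, TendstoInProbZero P fun n ω => X n ω i j

section
variable {a b c : Type*} [Fintype b]

lemma MTight.mul {X : ℕ → Ω → Matrix a b ℝ} {Y : ℕ → Ω → Matrix b c ℝ} (hX : MTight P X)
    (hY : MTight P Y) : MTight P fun n ω => X n ω * Y n ω := fun i j => by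
  simp only [mul_apply]
  exact Tight.sum _ fun l => (hX i l).mul (hY l j)

lemma MTight.add {X Y : ℕ → Ω → Matrix a c ℝ} (hX : MTight P X)
    (hY : MTight P Y) : MTight P fun n ω => X n ω + Y n ω := fun i j => (hX i j).add (hY i j)

lemma MTight.sub {X Y : ℕ → Ω → Matrix a c ℝ} (hX : MTight P X)
    (hY : MTight P Y) : MTight P fun n ω => X n ω - Y n ω := fun i j => (hX i j).sub (hY i j)

lemma MTight.transpose {X : ℕ → Ω → Matrix a c ℝ} (hX : MTight P X) :
    MTight P fun n ω => (X n ω)ᵀ := fun i j => hX j i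

lemma MTight.smul {x : ℕ → Ω → ℝ} {X : ℕ → Ω → Matrix a c ℝ} (hx : Tight P x) (hX : MTight P X) :
    MTight P fun n ω => x n ω • X n ω := fun i j => hx.mul (hX i j)

lemma MZero.mul_tight {X : ℕ → Ω → Matrix a b ℝ} {Y : ℕ → Ω → Matrix b c ℝ} (hX : MZero P X)
    (hY : MTight P Y) : MZero P fun n ω => X n ω * Y n ω := fun i j => by
  simp only [mul_apply]
  exact TendstoInProbZero.sum _ fun l => (hX i l).mul_tight (hY l j)

lemma MTight.mul_zero {X : ℕ → Ω → Matrix a b ℝ} {Y : ℕ → Ω → Matrix b c ℝ} (hX : MTight P X)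
    (hY : MZero P Y) : MZero P fun n ω => X n ω * Y n ω := fun i j => by
  simp only [mul_apply]
  exact TendstoInProbZero.sum _ fun l => TendstoInProbZero.tight_mul (hX i l) (hY l j)

lemma MZero.add {X Y : ℕ → Ω → Matrix a c ℝ} (hX : MZero P X)
    (hY : MZero P Y) : MZero P fun n ω => X n ω + Y n ω := fun i j => (hX i j).add (hY i j)

lemma MZero.sub {X Y : ℕ → Ω → Matrix a c ℝ} (hX : MZero P X)
    (hY : MZero P Y) : MZero P fun n ω => X n ω - Y n ω := fun i j => (hX i j).sub (hY i j)

lemma MZero.const_smul (x : ℝ) {X : ℕ → Ω → Matrix a c ℝ} (hX : MZero P X) :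
    MZero P fun n ω => x • X n ω := fun i j => TendstoInProbZero.tight_mul (tight_const x) (hX i j)

lemma MTight.zero_smul {x : ℕ → ℝ} (hx : Tendsto x atTop (𝓝 0)) {X : ℕ → Ω → Matrix a c ℝ}
    (hX : MTight P X) : MZero P fun n ω => x n • X n ω := fun i j =>
  (zero_of_tendsto hx).mul_tight (hX i j)

lemma MZero.tight {X : ℕ → Ω → Matrix a c ℝ} (hX : MZero P X) : MTight P X := fun i j => (hX i j).tight

end

end

/-! ### Chebyshev bounds for bilinear forms -/

lemma lintegral_coord_sq {τ : Type*} [Fintype τ] (t : τ) :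
    ∫⁻ w, ENNReal.ofReal (w t ^ 2) ∂gpi τ = 1 := by
  classical
  have h := lintegral_sq_linear (ι := τ) (Pi.single t 1)
  simpa [Pi.single_apply] using h

lemma lintegral_weighted_sq {α τ : Type*} [Fintype α] [Fintype τ] (c : α → ℝ) (t : α → τ) :
    ∫⁻ w, ENNReal.ofReal (∑ a, (c a * w (t a)) ^ 2) ∂gpi τ = ENNReal.ofReal (∑ a, c a ^ 2) := by
  have h1 : ∀ w : τ → ℝ, ENNReal.ofReal (∑ a, (c a * w (t a)) ^ 2)
      = ∑ a, ENNReal.ofReal (c a ^ 2) * ENNReal.ofReal (w (t a) ^ 2) := by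
    intro w
    rw [ENNReal.ofReal_sum_of_nonneg fun a _ => sq_nonneg _]
    refine Finset.sum_congr rfl fun a _ => ?_
    rw [mul_pow, ENNReal.ofReal_mul (sq_nonneg _)]
  simp_rw [h1]
  rw [lintegral_finsetSum _ fun a _ => by fun_prop]
  rw [ENNReal.ofReal_sum_of_nonneg fun a _ => sq_nonneg _]
  refine Finset.sum_congr rfl fun a _ => ?_
  rw [lintegral_const_mul' _ _ ENNReal.ofReal_ne_top, lintegral_coord_sq, mul_one]

/-- Second moment of a diagonal quadratic form in one row of a Gaussian matrix. -/
lemma lintegral_sq_row {k q : ℕ} (i : Fin k) (c : Fin q → ℝ) :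
    ∫⁻ x, ENNReal.ofReal ((∑ a, c a * (x (i, a) ^ 2 - 1)) ^ 2) ∂gpi (Fin k × Fin q)
      = ENNReal.ofReal (kap * ∑ a, c a ^ 2) := by
  have h := lintegral_sq_quad (ι := Fin k × Fin q) (fun t => if t.1 = i then c t.2 else 0)
  simpa [Fintype.sum_prod_type, ite_mul, ite_pow, Finset.sum_comm (s := (Finset.univ : Finset (Fin k)))]
    using h

/-- Second moment of a diagonal bilinear form in two distinct rows of a Gaussian matrix. -/
lemma lintegral_sq_rows {k q : ℕ} {i j : Fin k} (hij : i ≠ j) (c : Fin q → ℝ) :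
    ∫⁻ x, ENNReal.ofReal ((∑ a, c a * (x (i, a) * x (j, a))) ^ 2) ∂gpi (Fin k × Fin q)
      = ENNReal.ofReal (∑ a, c a ^ 2) := by
  classical
  let τ := {t : Fin k × Fin q // t.1 ≠ j}
  obtain ⟨e, he1, he2⟩ : ∃ e : Fin q ⊕ τ ≃ Fin k × Fin q, (∀ a, e (Sum.inl a) = (j, a)) ∧
      ∀ t, e (Sum.inr t) = t.1 := ⟨Equiv.ofBijective
    (Sum.elim (fun b => (j, b)) (fun t => t.1)) (by
      constructor
      · rintro (a | a) (b | b) h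
        · simp only [Sum.elim_inl, Prod.mk.injEq, true_and] at h; rw [h]
        · simp only [Sum.elim_inl, Sum.elim_inr] at h
          exact absurd (congrArg Prod.fst h).symm b.2
        · simp only [Sum.elim_inl, Sum.elim_inr] at h
          exact absurd (congrArg Prod.fst h) a.2
        · simp only [Sum.elim_inr] at h; rw [Subtype.ext h]
      · rintro ⟨a, b⟩
        by_cases h : a = j
        · exact ⟨Sum.inl b, by simp [h]⟩
        · exact ⟨Sum.inr ⟨(a, b), h⟩, rfl⟩), fun _ => rfl, fun _ => rfl⟩
  let s : Fin q → τ := fun a => ⟨(i, a), hij⟩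
  let Φ : (Fin q → ℝ) × (τ → ℝ) → ENNReal := fun y =>
    ENNReal.ofReal ((∑ a, (c a * y.2 (s a)) * y.1 a) ^ 2)
  have hΦ : Measurable Φ := by
    refine ENNReal.measurable_ofReal.comp (Measurable.pow_const ?_ 2)
    exact Finset.measurable_sum _ fun a _ =>
      (((measurable_pi_apply (s a)).comp measurable_snd).const_mul _).mul
        ((measurable_pi_apply a).comp measurable_fst)
  have hcongr : ∀ W : Fin k × Fin q → ℝ, ENNReal.ofReal ((∑ a, c a * (W (i, a) * W (j, a))) ^ 2)
      = Φ ((fun j => W (e (Sum.inl j))), fun j => W (e (Sum.inr j))) := by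
    intro W
    simp only [Φ, mul_assoc, he1, he2, s]
  have hlin : ∀ w : τ → ℝ, ∫⁻ v, Φ (v, w) ∂gpi (Fin q)
      = ENNReal.ofReal (∑ a, (c a * w (s a)) ^ 2) :=
    fun w => lintegral_sq_linear (fun a => c a * w (s a))
  calc _ = ∫⁻ W, Φ ((fun j => W (e (Sum.inl j))), fun j => W (e (Sum.inr j)))
        ∂gpi (Fin k × Fin q) := lintegral_congr hcongr
    _ = ∫⁻ y, Φ y ∂((gpi (Fin q)).prod (gpi τ)) := (gpi_split e).lintegral_comp hΦ
    _ = ∫⁻ w, ∫⁻ v, Φ (v, w) ∂gpi (Fin q) ∂gpi τ := lintegral_prod_symm' _ hΦ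
    _ = ∫⁻ w, ENNReal.ofReal (∑ a, (c a * w (s a)) ^ 2) ∂gpi τ :=
        lintegral_congr hlin
    _ = _ := lintegral_weighted_sq c s

section

variable {Ω : Type*} [MeasurableSpace Ω] {P : Measure Ω}

/-- Chebyshev's inequality for a statistic of two independent random elements. -/
lemma indep_tail [IsProbabilityMeasure P] {ι β : Type*} [Fintype ι] [MeasurableSpace β]
    {X : Ω → ι → ℝ} {Y : Ω → β}
    (hX : P.map X = gpi ι) (hXm : AEMeasurable X P) (hY : AEMeasurable Y P) (hXY : IndepFun X Y P)
    {φ : (ι → ℝ) × β → ℝ} (hφ : Measurable φ) {C K : ℝ} (hK : 0 < K)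
    (h : ∫⁻ b, ∫⁻ x, ENNReal.ofReal (φ (x, b) ^ 2) ∂gpi ι ∂(P.map Y) ≤ ENNReal.ofReal C) :
    P {ω | ¬ |φ (X ω, Y ω)| ≤ K} ≤ ENNReal.ofReal (C / K ^ 2) := by
  have hYp : IsProbabilityMeasure (P.map Y) := Measure.isProbabilityMeasure_map hY
  have hmap : P.map (fun ω => (X ω, Y ω)) = (gpi ι).prod (P.map Y) := by
    rw [(indepFun_iff_map_prod_eq_prod_map_map hXm hY).1 hXY, hX]
  have hm : Measurable fun y => ENNReal.ofReal (φ y ^ 2) :=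
    ENNReal.measurable_ofReal.comp (hφ.pow_const 2)
  have hsub : {ω | ¬ |φ (X ω, Y ω)| ≤ K} ⊆
      (fun ω => (X ω, Y ω)) ⁻¹' {y | ENNReal.ofReal (K ^ 2) ≤ ENNReal.ofReal (φ y ^ 2)} := by
    intro ω hω
    simp only [Set.mem_ofPred_eq, not_le, Set.mem_preimage] at hω ⊢
    refine ENNReal.ofReal_le_ofReal ?_
    rw [← sq_abs (φ _)]
    gcongr
  refine (measure_mono hsub).trans ((Measure.le_map_apply (hXm.prodMk hY) _).trans ?_)
  rw [hmap]
  refine (meas_ge_le_lintegral_div hm.aemeasurable (by simp [hK.ne']) ENNReal.ofReal_ne_top).trans ?_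
  rw [lintegral_prod_symm' _ hm, ENNReal.ofReal_div_of_pos (by positivity)]
  gcongr

/-- A uniform bound on Chebyshev tails gives boundedness in probability. -/
lemma tight_of_tail {X : ℕ → Ω → ℝ} (C : ℝ)
    (h : ∀ᶠ n in atTop, ∀ K : ℝ, 0 < K → P {ω | ¬ |X n ω| ≤ K} ≤ ENNReal.ofReal (C / K ^ 2)) :
    Tight P X := by
  intro ε hε
  have h1 : Tendsto (fun K : ℝ => ENNReal.ofReal (C / K ^ 2)) atTop (𝓝 0) := by
    have : Tendsto (fun K : ℝ => C / K ^ 2) atTop (𝓝 0) :=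
      tendsto_const_nhds.div_atTop (tendsto_pow_atTop (by norm_num))
    simpa using ENNReal.tendsto_ofReal this
  obtain ⟨K, hK, hK0⟩ := ((ENNReal.tendsto_nhds_zero.1 h1 ε (pos_iff_ne_zero.2 hε)).and
    (eventually_gt_atTop 0)).exists
  exact ⟨K, h.mono fun n hn => (hn K hK0).trans hK⟩

lemma aemeasurable_of_map_prob {β : Type*} [MeasurableSpace β] {X : Ω → β} {ν : Measure β}
    [IsProbabilityMeasure ν] (h : P.map X = ν) : AEMeasurable X P := by
  by_contra hc
  rw [Measure.map_of_not_aemeasurable hc] at h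
  exact IsProbabilityMeasure.ne_zero ν h.symm

lemma measurable_matEntries {m n : Type*} :
    Measurable (matEntries : Matrix m n ℝ → m × n → ℝ) := by
  refine measurable_pi_lambda _ fun t => ?_
  exact (measurable_pi_apply t.2).comp (measurable_pi_apply (X := fun _ : m => n → ℝ) t.1)

end

/-! ### Entries of `F_n` and `G_n` -/

lemma sqrt_mul_one_div {n : ℝ} (hn : 0 < n) : √n * (1 / n) = 1 / √n := by
  have h := Real.mul_self_sqrt hn.le
  have h0 : √n ≠ 0 := (Real.sqrt_pos.2 hn).ne'
  field_simp
  nlinarith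

open Classical in
/-- The weights `n^{-1/2} (λ_α - z)⁻¹` of the resolvent of the normalised Wishart matrix, cut off to
zero outside of the event that its spectrum lies below `z - δ`. -/
def cw {N q : ℕ} (n z δ : ℝ) (w : Fin N × Fin q → ℝ) (α : Fin q) : ℝ :=
  if QBound n (z - δ) (toM w) then (1 / √n) * (lamOf n (toM w) α - z)⁻¹ else 0

lemma cw_sq_le {N q : ℕ} {n z δ : ℝ} (hn : 0 < n) (hδ : 0 < δ) (w : Fin N × Fin q → ℝ)
    (α : Fin q) : cw n z δ w α ^ 2 ≤ (1 / n) * (δ⁻¹) ^ 2 := by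
  unfold cw
  split_ifs with h
  · rw [mul_pow, div_pow, Real.sq_sqrt hn.le, one_pow, inv_pow, inv_pow]
    have h1 := (lamOf_bounds hn (toM w) α).2 _ h
    have h2 : δ ^ 2 ≤ (lamOf n (toM w) α - z) ^ 2 := by nlinarith
    gcongr
  · simpa using by positivity

lemma measurable_cw {N q : ℕ} (n z δ : ℝ) (α : Fin q) :
    Measurable fun w : Fin N × Fin q → ℝ => cw n z δ w α := by
  unfold cw
  refine Measurable.ite (measurableSet_QBound _ _ fun i j => continuous_apply (i, j)) ?_
    measurable_const
  exact (((measurable_lamOf n α).sub_const z).inv).const_mul _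

lemma sum_cw_sq_le {N q : ℕ} {n z δ : ℝ} (hn : 0 < n) (hδ : 0 < δ) (hq : (q : ℝ) ≤ 2 * n)
    (w : Fin N × Fin q → ℝ) : ∑ α, cw n z δ w α ^ 2 ≤ 2 * (δ⁻¹) ^ 2 := by
  calc ∑ α, cw n z δ w α ^ 2 ≤ ∑ _α : Fin q, (1 / n) * (δ⁻¹) ^ 2 :=
        Finset.sum_le_sum fun α _ => cw_sq_le hn hδ w α
    _ = (q / n) * (δ⁻¹) ^ 2 := by simp; ring
    _ ≤ 2 * (δ⁻¹) ^ 2 := by gcongr; rw [div_le_iff₀ hn]; exact hq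

lemma resolvent_diag {q : ℕ} {z : ℝ} {l : Fin q → ℝ} (h : ∀ α, l α - z ≠ 0) :
    (Matrix.diagonal l - z • (1 : Matrix (Fin q) (Fin q) ℝ))⁻¹
      = Matrix.diagonal fun α => (l α - z)⁻¹ := by
  refine Matrix.inv_eq_right_inv ?_
  rw [← Matrix.diagonal_one, ← Matrix.diagonal_smul, Matrix.diagonal_sub, Matrix.diagonal_mul_diagonal]
  congr 1
  ext α
  simpa using mul_inv_cancel₀ (h α)

lemma mul_diag_mul_apply {a b q : ℕ} (A : Matrix (Fin a) (Fin q) ℝ) (v : Fin q → ℝ)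
    (B : Matrix (Fin q) (Fin b) ℝ) (i : Fin a) (j : Fin b) :
    (A * Matrix.diagonal v * B) i j = ∑ α, A i α * v α * B α j := by
  rw [Matrix.mul_apply]
  simp only [Matrix.mul_diagonal]

namespace BlockModel

variable {k : ℕ} {γ : ℝ} {p : ℕ → ℕ} {Ω : Type*} [MeasurableSpace Ω] {P : Measure Ω}
  {μ : Fin k → ℝ}

lemma lam_eq (M : BlockModel k γ p Ω P μ) {n : ℕ} (hn : 0 < n) (ω : Ω) (α : Fin (p n - k)) :
    M.lam n ω α = lamOf n (M.W n ω) α := by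
  have h := M.lamEig n ω α
  have h0 : (n : ℝ) ≠ 0 := by positivity
  rw [lamOf, ← h]
  field_simp

/-- The event that the spectrum of the Wishart part lies below `z - δ`. -/
def good (M : BlockModel k γ p Ω P μ) (z δ : ℝ) (n : ℕ) (ω : Ω) : Prop :=
  QBound (n : ℝ) (z - δ) (M.W n ω)

lemma good.lam_bounds {M : BlockModel k γ p Ω P μ} {z δ : ℝ} {n : ℕ} {ω : Ω} (h : M.good z δ n ω)
    (hn : 0 < n) (α : Fin (p n - k)) : 0 ≤ M.lam n ω α ∧ M.lam n ω α ≤ z - δ := by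
  rw [M.lam_eq hn]
  have := lamOf_bounds (n := n) (by positivity) (M.W n ω) α
  exact ⟨this.1, this.2 _ h⟩

lemma good.cw_eq {M : BlockModel k γ p Ω P μ} {z δ : ℝ} {n : ℕ} {ω : Ω} (h : M.good z δ n ω)
    (hn : 0 < n) (α : Fin (p n - k)) :
    cw (n : ℝ) z δ (matEntries (M.W n ω)) α = (1 / √(n : ℝ)) * (M.lam n ω α - z)⁻¹ := by
  rw [cw, M.lam_eq hn]
  exact if_pos h

lemma good.F_offdiag {M : BlockModel k γ p Ω P μ} {z δ : ℝ} (hδ : 0 < δ) {n : ℕ} {ω : Ω}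
    (h : M.good z δ n ω) (hn : 0 < n) {i j : Fin k} (hij : i ≠ j) :
    M.Fmat n ω z i j = ∑ α, cw (n : ℝ) z δ (matEntries (M.W n ω)) α *
      (matEntries (M.E12 n ω) (i, α) * matEntries (M.E12 n ω) (j, α)) := by
  have hne : ∀ α, M.lam n ω α - z ≠ 0 := fun α => by
    have := (h.lam_bounds hn α).2
    exact (by linarith : M.lam n ω α - z < 0).ne
  rw [Fmat, resolvent_diag hne]
  simp only [Matrix.smul_apply, Matrix.sub_apply, smul_eq_mul, Matrix.one_apply_ne hij, mul_zero,
    sub_zero, ← mul_assoc, sqrt_mul_one_div (n := (n : ℝ)) (by positivity), mul_diag_mul_apply,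
    Matrix.transpose_apply, Finset.mul_sum]
  refine Finset.sum_congr rfl fun α _ => ?_
  rw [h.cw_eq hn]
  simp only [matEntries]
  ring

/-- A diagonal entry of `F_n(z)` is a centred quadratic form in a row of `E_{n,12}` plus the
fluctuation of the resolvent trace. -/
lemma good.F_diag {M : BlockModel k γ p Ω P μ} (hγ : 1 ≤ γ) {z δ : ℝ} (hz : bGamma γ < z)
    (hδ : 0 < δ) {n : ℕ} {ω : Ω}
    (h : M.good z δ n ω) (hn : 0 < n) (i : Fin k) :
    M.Fmat n ω z i i = ∑ α, cw (n : ℝ) z δ (matEntries (M.W n ω)) α *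
      (matEntries (M.E12 n ω) (i, α) ^ 2 - 1)
      - √(n : ℝ) * (rhoW n z (toM (matEntries (M.W n ω))) - rhoLim γ z) := by
  have hn' : (0 : ℝ) < n := by positivity
  have hne : ∀ α, M.lam n ω α - z ≠ 0 := fun α => by
    have := (h.lam_bounds hn α).2
    exact (by linarith : M.lam n ω α - z < 0).ne
  have hrho : rhoW n z (toM (matEntries (M.W n ω))) = (1 / (n : ℝ)) * ∑ α, (z - M.lam n ω α)⁻¹ := by
    have h2 := rhoW_eq hn' hδ (show QBound (n : ℝ) (z - δ) (toM (matEntries (M.W n ω))) from h)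
    rw [h2]
    congr 1
    exact Finset.sum_congr rfl fun α _ => by rw [M.lam_eq hn]; rfl
  rw [Fmat, resolvent_diag hne, hrho, mpStieltjes_eq hγ hz]
  simp only [Matrix.smul_apply, Matrix.sub_apply, smul_eq_mul, Matrix.one_apply_eq, mul_one,
    mul_sub, ← mul_assoc, sqrt_mul_one_div hn', mul_diag_mul_apply,
    Matrix.transpose_apply, Finset.mul_sum, Finset.sum_sub_distrib]
  have e1 : ∑ α, cw (n : ℝ) z δ (matEntries (M.W n ω)) α
      = - ∑ α, 1 / √(n : ℝ) * (z - M.lam n ω α)⁻¹ := by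
    rw [← Finset.sum_neg_distrib]
    refine Finset.sum_congr rfl fun α _ => ?_
    rw [h.cw_eq hn, ← neg_sub z, inv_neg]; ring
  have e2 : ∑ α, cw (n : ℝ) z δ (matEntries (M.W n ω)) α * matEntries (M.E12 n ω) (i, α) ^ 2
      = ∑ α, 1 / √(n : ℝ) * M.E12 n ω i α * (M.lam n ω α - z)⁻¹ * M.E12 n ω i α := by
    refine Finset.sum_congr rfl fun α _ => ?_
    rw [h.cw_eq hn]; simp only [matEntries]; ring
  rw [e1, e2]
  ring

lemma good.G_entry {M : BlockModel k γ p Ω P μ} {z δ : ℝ} (hδ : 0 < δ) {n : ℕ} {ω : Ω}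
    (h : M.good z δ n ω) (hn : 0 < n) (i j : Fin k) :
    M.Gmat n ω z i j = ∑ α, (cw (n : ℝ) z δ (matEntries (M.W n ω)) α *
      √(lamOf n (toM (matEntries (M.W n ω))) α) * matEntries (M.E21 n ω) (α, j)) *
        matEntries (M.E12 n ω) (i, α) := by
  have hne : ∀ α, M.lam n ω α - z ≠ 0 := fun α => by
    have := (h.lam_bounds hn α).2
    exact (by linarith : M.lam n ω α - z < 0).ne
  rw [Gmat, resolvent_diag hne, Matrix.mul_assoc (M.E12 n ω), Matrix.diagonal_mul_diagonal]
  simp only [Matrix.smul_apply, smul_eq_mul,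
    ← mul_assoc, sqrt_mul_one_div (n := (n : ℝ)) (by positivity), mul_diag_mul_apply,
    Finset.mul_sum]
  refine Finset.sum_congr rfl fun α _ => ?_
  rw [h.cw_eq hn, M.lam_eq hn]
  simp only [matEntries]
  change _ = 1 / √(n : ℝ) * (lamOf n (M.W n ω) α - z)⁻¹ * √(lamOf n (M.W n ω) α) * _ * _
  ring

end BlockModel

/-! ### Tightness of `E_{n,11}`, `F_n` and `G_n` -/

lemma tendsto_sqrt_nat : Tendsto (fun n : ℕ => √(n : ℝ)) atTop atTop :=
  Real.tendsto_sqrt_atTop.comp tendsto_natCast_atTop_atTop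

lemma tendsto_inv_sqrt_nat : Tendsto (fun n : ℕ => 1 / √(n : ℝ)) atTop (𝓝 0) :=
  tendsto_const_nhds.div_atTop tendsto_sqrt_nat

lemma aspect_facts (k : ℕ) {γ : ℝ} (hγ : 1 ≤ γ) {p : ℕ → ℕ}
    (ha : Tendsto (fun n : ℕ => √(n : ℝ) * ((n : ℝ) / (p n) - γ)) atTop (𝓝 0))
    (hp : Tendsto p atTop atTop) :
    Tendsto (fun n : ℕ => (p n : ℝ) / n) atTop (𝓝 γ⁻¹) ∧
    Tendsto (fun n : ℕ => √(n : ℝ) * (((p n - k : ℕ) : ℝ) / n - γ⁻¹)) atTop (𝓝 0) ∧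
    ∀ᶠ n : ℕ in atTop, ((p n - k : ℕ) : ℝ) ≤ 2 * n := by
  have hγ0 : γ ≠ 0 := by positivity
  have h1 : Tendsto (fun n : ℕ => (n : ℝ) / p n) atTop (𝓝 γ) := by
    have h := (tendsto_inv_sqrt_nat.mul ha).add_const γ
    rw [zero_mul, zero_add] at h
    refine h.congr' ?_
    filter_upwards [eventually_gt_atTop 0] with n hn
    have : √(n : ℝ) ≠ 0 := (Real.sqrt_pos.2 (by positivity)).ne'
    field_simp
    ring
  have h2 : Tendsto (fun n : ℕ => (p n : ℝ) / n) atTop (𝓝 γ⁻¹) := by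
    simpa [inv_div] using h1.inv₀ hγ0
  refine ⟨h2, ?_, ?_⟩
  · have h3 := ((ha.mul ((h1.const_mul γ).inv₀ (by positivity))).neg).sub
      (tendsto_inv_sqrt_nat.const_mul (k : ℝ))
    simp only [zero_mul, neg_zero, mul_zero, sub_zero] at h3
    refine h3.congr' ?_
    filter_upwards [eventually_gt_atTop 0, hp.eventually_ge_atTop (k + 1)] with n hn hpn
    have hn0 : (0 : ℝ) < n := by positivity
    have hs : √(n : ℝ) ≠ 0 := (Real.sqrt_pos.2 hn0).ne'
    have hs2 : √(n : ℝ) ^ 2 = n := Real.sq_sqrt hn0.le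
    have hp0 : (p n : ℝ) ≠ 0 := by
      have : 0 < p n := by omega
      positivity
    rw [Nat.cast_sub (by omega)]
    field_simp
    rw [hs2]
    ring
  · have hlt : γ⁻¹ < 2 := (inv_le_one_of_one_le₀ hγ).trans_lt (by norm_num)
    filter_upwards [h2.eventually (gt_mem_nhds hlt), eventually_gt_atTop 0] with n h3 hn
    rw [div_lt_iff₀ (by positivity)] at h3
    exact (Nat.cast_le.2 (Nat.sub_le _ _)).trans h3.le

namespace BlockModel

variable {k : ℕ} {γ : ℝ} {p : ℕ → ℕ} {Ω : Type*} [MeasurableSpace Ω] {P : Measure Ω}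
  {μ : Fin k → ℝ}

lemma good_whp (M : BlockModel k γ p Ω P μ) (hγ : 1 ≤ γ) {z δ : ℝ} (hδ : bGamma γ < z - δ) :
    Whp P (M.good z δ) := by
  have ha := aspect_facts k hγ M.aspect M.pTop
  refine tendsto_of_tendsto_of_tendsto_of_le_of_le tendsto_const_nhds
    (wishart_edge k hγ ha.1 M.pTop hδ) (fun _ => zero_le) fun n => ?_
  have hW : P.map (fun ω => matEntries (M.W n ω)) = gpi _ := M.Wgauss n
  have := Measure.le_map_apply (aemeasurable_of_map_prob hW)
    {W | ¬ QBound (n : ℝ) (z - δ) (Matrix.of fun i j => W (i, j))}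
  rw [hW] at this
  exact this

lemma rho_tight (M : BlockModel k γ p Ω P μ) (hγ : 1 ≤ γ) {z : ℝ} (hz : bGamma γ < z) :
    Tight P fun n ω => √(n : ℝ) * (rhoW n z (toM (matEntries (M.W n ω))) - rhoLim γ z) := by
  intro ε hε
  have ha := aspect_facts k hγ M.aspect M.pTop
  obtain ⟨K, hK⟩ := _root_.rho_tight k hγ hz ha.1 M.pTop ha.2.1 ε hε
  refine ⟨K, ?_⟩
  filter_upwards [hK] with n hn
  have hW : P.map (fun ω => matEntries (M.W n ω)) = gpi _ := M.Wgauss n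
  have := Measure.le_map_apply (aemeasurable_of_map_prob hW)
    {W | ¬ √(n : ℝ) * |rhoW n z (toM W) - rhoLim γ z| ≤ K}
  rw [hW] at this
  simp only [abs_mul, abs_of_nonneg (Real.sqrt_nonneg _)]
  exact this.trans hn

lemma E11_tight [IsProbabilityMeasure P] (M : BlockModel k γ p Ω P μ) : MTight P M.E11 := by
  intro i j
  refine tight_of_tail 1 (Eventually.of_forall fun n K hK => ?_)
  have hX : P.map (fun ω => matEntries (M.E11 n ω)) = gpi _ := M.E11gauss n
  refine indep_tail (Y := fun _ => ()) hX (aemeasurable_of_map_prob hX) aemeasurable_const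
    (indepFun_const_right _ _) (φ := fun y => y.1 (i, j)) (by fun_prop) hK ?_
  simp [lintegral_coord_sq]

/-- `E_{n,12}` is independent of the Wishart part. -/
lemma indep12W (M : BlockModel k γ p Ω P μ) (n : ℕ) :
    IndepFun (fun ω => matEntries (M.E12 n ω)) (fun ω => matEntries (M.W n ω)) P :=
  (M.indep3 n).comp measurable_matEntries
    (measurable_matEntries.comp (measurable_snd.comp measurable_snd))

lemma indep12 (M : BlockModel k γ p Ω P μ) (n : ℕ) :
    IndepFun (fun ω => matEntries (M.E12 n ω))
      (fun ω => (matEntries (M.E21 n ω), matEntries (M.W n ω))) P :=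
  (M.indep3 n).comp measurable_matEntries
    ((measurable_matEntries.comp measurable_fst).prodMk
      (measurable_matEntries.comp (measurable_snd.comp measurable_snd)))

lemma indep21W (M : BlockModel k γ p Ω P μ) (n : ℕ) :
    IndepFun (fun ω => matEntries (M.E21 n ω)) (fun ω => matEntries (M.W n ω)) P :=
  (M.indep4 n).comp measurable_matEntries (measurable_matEntries.comp measurable_snd)

lemma F_tight [IsProbabilityMeasure P] (M : BlockModel k γ p Ω P μ) (hγ : 1 ≤ γ) {z δ : ℝ}
    (hδ : 0 < δ) (hzδ : bGamma γ < z - δ) : MTight P fun n ω => M.Fmat n ω z := by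
  have ha := aspect_facts k hγ M.aspect M.pTop
  have hg := M.good_whp hγ hzδ
  have hz : bGamma γ < z := by linarith
  intro i j
  by_cases hij : i = j
  · subst hij
    refine Tight.congr hg (X := fun n ω => (∑ α, cw (n : ℝ) z δ (matEntries (M.W n ω)) α *
      (matEntries (M.E12 n ω) (i, α) ^ 2 - 1))
      - √(n : ℝ) * (rhoW n z (toM (matEntries (M.W n ω))) - rhoLim γ z)) ?_ ?_
    · refine Tight.sub ?_ (M.rho_tight hγ hz)
      refine tight_of_tail (kap * (2 * (δ⁻¹) ^ 2)) ?_
      filter_upwards [ha.2.2, eventually_gt_atTop 0] with n hq hn K hK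
      have hX : P.map (fun ω => matEntries (M.E12 n ω)) = gpi _ := M.E12gauss n
      have hW : P.map (fun ω => matEntries (M.W n ω)) = gpi _ := M.Wgauss n
      refine indep_tail hX (aemeasurable_of_map_prob hX) (aemeasurable_of_map_prob hW)
        (M.indep12W n) (φ := fun y => ∑ α, cw (n : ℝ) z δ y.2 α * (y.1 (i, α) ^ 2 - 1)) ?_ hK ?_
      · exact Finset.measurable_sum _ fun α _ => ((measurable_cw _ _ _ α).comp measurable_snd).mul
          ((((measurable_pi_apply (i, α)).comp measurable_fst).pow_const 2).sub_const 1)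
      · rw [hW]
        simp only [lintegral_sq_row]
        refine (lintegral_mono fun w => ENNReal.ofReal_le_ofReal
          (mul_le_mul_of_nonneg_left (sum_cw_sq_le (by positivity) hδ hq w) kap_nonneg)).trans ?_
        simp
    · filter_upwards [eventually_gt_atTop 0] with n hn ω h
      exact h.F_diag hγ hz hδ hn i
  · refine Tight.congr hg (X := fun n ω => ∑ α, cw (n : ℝ) z δ (matEntries (M.W n ω)) α *
      (matEntries (M.E12 n ω) (i, α) * matEntries (M.E12 n ω) (j, α))) ?_ ?_
    · refine tight_of_tail (2 * (δ⁻¹) ^ 2) ?_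
      filter_upwards [ha.2.2, eventually_gt_atTop 0] with n hq hn K hK
      have hX : P.map (fun ω => matEntries (M.E12 n ω)) = gpi _ := M.E12gauss n
      have hW : P.map (fun ω => matEntries (M.W n ω)) = gpi _ := M.Wgauss n
      refine indep_tail hX (aemeasurable_of_map_prob hX) (aemeasurable_of_map_prob hW)
        (M.indep12W n) (φ := fun y => ∑ α, cw (n : ℝ) z δ y.2 α * (y.1 (i, α) * y.1 (j, α))) ?_ hK ?_
      · exact Finset.measurable_sum _ fun α _ => ((measurable_cw _ _ _ α).comp measurable_snd).mul
          (((measurable_pi_apply (i, α)).comp measurable_fst).mul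
            ((measurable_pi_apply (j, α)).comp measurable_fst))
      · rw [hW]
        simp only [lintegral_sq_rows hij]
        refine (lintegral_mono fun w => ENNReal.ofReal_le_ofReal
          (sum_cw_sq_le (by positivity) hδ hq w)).trans ?_
        simp
    · filter_upwards [eventually_gt_atTop 0] with n hn ω h
      exact h.F_offdiag hδ hn hij

lemma G_tight [IsProbabilityMeasure P] (M : BlockModel k γ p Ω P μ) (hγ : 1 ≤ γ) {z δ : ℝ}
    (hδ : 0 < δ) (hzδ : bGamma γ < z - δ) : MTight P fun n ω => M.Gmat n ω z := by
  have ha := aspect_facts k hγ M.aspect M.pTop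
  have hg := M.good_whp hγ hzδ
  have hz : bGamma γ < z := by linarith
  have hz0 : 0 < z := by linarith [(gamma_edges hγ).2.2.2.2]
  intro i j
  refine Tight.congr hg (X := fun n ω => ∑ α, (cw (n : ℝ) z δ (matEntries (M.W n ω)) α *
      √(lamOf n (toM (matEntries (M.W n ω))) α) * matEntries (M.E21 n ω) (α, j)) *
        matEntries (M.E12 n ω) (i, α)) ?_ ?_
  · refine tight_of_tail (2 * (δ⁻¹) ^ 2 * z) ?_
    filter_upwards [ha.2.2, eventually_gt_atTop 0] with n hq hn K hK
    have hX : P.map (fun ω => matEntries (M.E12 n ω)) = gpi _ := M.E12gauss n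
    have hY : P.map (fun ω => matEntries (M.E21 n ω)) = gpi _ := M.E21gauss n
    have hW : P.map (fun ω => matEntries (M.W n ω)) = gpi _ := M.Wgauss n
    have hYm := aemeasurable_of_map_prob hY
    have hWm := aemeasurable_of_map_prob hW
    have hmap : P.map (fun ω => (matEntries (M.E21 n ω), matEntries (M.W n ω))) = (gpi _).prod (gpi _) := by
      rw [(indepFun_iff_map_prod_eq_prod_map_map hYm hWm).1 (M.indep21W n), hY, hW]
    let gw : (Fin (n - k) × Fin (p n - k) → ℝ) → Fin (p n - k) → ℝ := fun w α =>
      cw (n : ℝ) z δ w α * √(lamOf n (toM w) α)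
    have hgw : ∀ α, Measurable fun w => gw w α := fun α =>
      (measurable_cw _ _ _ α).mul (measurable_lamOf _ α).sqrt
    have hgw2 : ∀ w, ∑ α, gw w α ^ 2 ≤ 2 * (δ⁻¹) ^ 2 * z := by
      intro w
      refine le_trans ?_ (mul_le_mul_of_nonneg_right
        (sum_cw_sq_le (z := z) (by positivity) hδ hq w) hz0.le)
      rw [Finset.sum_mul]
      refine Finset.sum_le_sum fun α _ => ?_
      have hl := lamOf_bounds (n := n) (by positivity) (toM w) α
      simp only [gw]
      rw [mul_pow, Real.sq_sqrt hl.1]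
      by_cases hQ : QBound (n : ℝ) (z - δ) (toM w)
      · have := hl.2 _ hQ
        gcongr
        linarith
      · simp [cw, hQ]
    refine indep_tail hX (aemeasurable_of_map_prob hX) (hYm.prodMk hWm)
      (M.indep12 n) (φ := fun y => ∑ α, (gw y.2.2 α * y.2.1 (α, j)) * y.1 (i, α)) ?_ hK ?_
    · exact Finset.measurable_sum _ fun α _ =>
        (((hgw α).comp (measurable_snd.comp measurable_snd)).mul
          ((measurable_pi_apply (α, j)).comp (measurable_fst.comp measurable_snd))).mul
          ((measurable_pi_apply (i, α)).comp measurable_fst)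
    · have h1 : ∀ c : Fin (p n - k) → ℝ,
          ∫⁻ x, ENNReal.ofReal ((∑ α, c α * x (i, α)) ^ 2) ∂gpi (Fin k × Fin (p n - k))
            = ENNReal.ofReal (∑ α, c α ^ 2) := by
        intro c
        have h := lintegral_sq_linear (ι := Fin k × Fin (p n - k))
          (fun t => if t.1 = i then c t.2 else 0)
        simpa [Fintype.sum_prod_type, ite_mul, ite_pow,
          Finset.sum_comm (s := (Finset.univ : Finset (Fin k)))] using h
      rw [hmap]
      simp only [h1]
      rw [lintegral_prod_symm']
      · simp only [lintegral_weighted_sq]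
        refine (lintegral_mono fun w => ENNReal.ofReal_le_ofReal (hgw2 w)).trans ?_
        simp
      · exact ENNReal.measurable_ofReal.comp (Finset.measurable_sum _ fun α _ =>
          (((hgw α).comp measurable_snd).mul
            ((measurable_pi_apply (α, j)).comp measurable_fst)).pow_const 2)
  · filter_upwards [eventually_gt_atTop 0] with n hn ω h
    exact h.G_entry hδ hn i j

end BlockModel

/-! ### Convergence of `D_n` -/

/-- A continuous cutoff, equal to `0` on the ball of radius `K` and to `1` outside of the ball of
radius `K + 1`. -/
def cutoff (k : ℕ) (K : ℝ) : BoundedContinuousFunction (Fin k → ℝ) ℝ :=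
  BoundedContinuousFunction.ofNormedAddCommGroup (fun x => min 1 (max 0 (‖x‖ - K)))
    (by fun_prop) 1 (fun x => by
      rw [Real.norm_eq_abs, abs_of_nonneg (le_min zero_le_one (le_max_left _ _))]
      exact min_le_left _ _)

lemma cutoff_apply (k : ℕ) (K : ℝ) (x : Fin k → ℝ) : cutoff k K x = min 1 (max 0 (‖x‖ - K)) := rfl

/-- A sequence which converges in distribution is bounded in probability. The random vectors need
not be measurable: convergence of the integrals of the test functions `1 + cutoff`, whose limit is
not `0`, forces these compositions to be integrable for large `n`. -/
lemma tight_of_dist {Ω : Type*} [MeasurableSpace Ω] {P : Measure Ω} [IsProbabilityMeasure P] {k : ℕ}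
    {X : ℕ → Ω → Fin k → ℝ} {ν : Measure (Fin k → ℝ)} [IsProbabilityMeasure ν]
    (h : TendstoInDist P X ν) (i : Fin k) : Tight P fun n ω => X n ω i := by
  intro ε hε
  obtain ⟨e, he0, he⟩ : ∃ e : ℝ, 0 < e ∧ ENNReal.ofReal e ≤ ε := by
    refine ⟨(min ε 1).toReal, ENNReal.toReal_pos (by simp [hε]) (by simp), ?_⟩
    rw [ENNReal.ofReal_toReal (by simp)]
    exact min_le_left _ _
  have hlim : Tendsto (fun m : ℕ => ∫ x, cutoff k m x ∂ν) atTop (𝓝 (∫ _x, (0 : ℝ) ∂ν)) := by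
    refine tendsto_integral_of_dominated_convergence (fun _ => 1)
      (fun m => (cutoff k m).continuous.aestronglyMeasurable) (integrable_const _)
      (fun m => Eventually.of_forall fun x => ?_) (Eventually.of_forall fun x => ?_)
    · rw [cutoff_apply, Real.norm_eq_abs, abs_of_nonneg (le_min zero_le_one (le_max_left _ _))]
      exact min_le_left _ _
    · refine tendsto_const_nhds.congr' ?_
      filter_upwards [eventually_ge_atTop ⌈‖x‖⌉₊] with m hm
      have : ‖x‖ ≤ m := (Nat.le_ceil _).trans (by exact_mod_cast hm)
      rw [cutoff_apply, max_eq_left (by linarith), min_eq_right zero_le_one]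
  rw [integral_zero] at hlim
  obtain ⟨m, hm⟩ := (hlim.eventually (gt_mem_nhds he0)).exists
  have hm0 : 0 ≤ ∫ x, cutoff k m x ∂ν :=
    integral_nonneg fun x => le_min zero_le_one (le_max_left _ _)
  have h1 := h (1 + cutoff k m)
  have hν : ∫ x, (1 + cutoff k m) x ∂ν = 1 + ∫ x, cutoff k m x ∂ν := by
    simp only [BoundedContinuousFunction.coe_add, Pi.add_apply, BoundedContinuousFunction.coe_one,
      Pi.one_apply]
    rw [integral_add (integrable_const _) ((cutoff k m).integrable ν)]
    simp
  rw [hν] at h1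
  refine ⟨m + 1, ?_⟩
  filter_upwards [h1.eventually (gt_mem_nhds (by linarith : 1 + ∫ x, cutoff k m x ∂ν < 1 + e)),
    h1.eventually (lt_mem_nhds (by linarith : 0 < 1 + ∫ x, cutoff k m x ∂ν))] with n hn1 hn0
  have hInt : Integrable (fun ω => (1 + cutoff k m) (X n ω)) P := by
    by_contra hc
    rw [integral_undef hc] at hn0
    exact lt_irrefl _ hn0
  have hint2 : Integrable (fun ω => cutoff k m (X n ω)) P := by
    exact (hInt.sub (integrable_const (1 : ℝ))).congr (Eventually.of_forall fun ω => by simp)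
  have hval : ∫ ω, (1 + cutoff k m) (X n ω) ∂P = 1 + ∫ ω, cutoff k m (X n ω) ∂P := by
    simp only [BoundedContinuousFunction.coe_add, Pi.add_apply, BoundedContinuousFunction.coe_one,
      Pi.one_apply]
    rw [integral_add (integrable_const _) hint2]
    simp
  have hmk := mul_meas_ge_le_integral_of_nonneg (μ := P) (f := fun ω => cutoff k m (X n ω))
    (Eventually.of_forall fun ω => le_min zero_le_one (le_max_left _ _)) hint2 1
  have hsub : {ω | ¬ |X n ω i| ≤ m + 1} ⊆ {ω | 1 ≤ cutoff k m (X n ω)} := by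
    intro ω hω
    simp only [Set.mem_ofPred_eq, not_le] at hω ⊢
    have h2 : |X n ω i| ≤ ‖X n ω‖ := norm_le_pi_norm (X n ω) i
    rw [cutoff_apply]
    exact le_min le_rfl (le_max_of_le_right (by linarith))
  refine (measure_mono hsub).trans (le_trans ?_ he)
  rw [← ENNReal.ofReal_toReal (measure_ne_top P {ω | 1 ≤ cutoff k m (X n ω)})]
  refine ENNReal.ofReal_le_ofReal ?_
  rw [one_mul] at hmk
  exact hmk.trans (by linarith)

namespace BlockModel

variable {k : ℕ} {γ : ℝ} {p : ℕ → ℕ} {Ω : Type*} [MeasurableSpace Ω] {P : Measure Ω}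
  {μ : Fin k → ℝ}

/-- `D_n → D` in probability, from `|d - √μ| ≤ |d² - μ| / √μ` and the tightness of `√n (d² - μ)`. -/
lemma d_zero [IsProbabilityMeasure P] (M : BlockModel k γ p Ω P μ) (hμpos : ∀ i, 0 < μ i)
    {ν : Measure (Fin k → ℝ)} [IsProbabilityMeasure ν]
    (h : TendstoInDist P (fun n ω i => Real.sqrt n * ((M.d n ω i) ^ 2 - μ i)) ν) :
    MZero P fun n ω => Matrix.diagonal (M.d n ω) - Matrix.diagonal fun i => √(μ i) := by
  intro i j
  by_cases hij : i = j
  · subst hij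
    have h1 := TendstoInProbZero.mul_tight (P := P) (zero_of_tendsto tendsto_inv_sqrt_nat)
      ((tight_of_dist h i).mul (tight_const (√(μ i))⁻¹))
    rw [tzero_iff] at h1 ⊢
    intro t ht ε hε
    filter_upwards [h1 t ht ε hε, eventually_gt_atTop 0] with n hn hn0
    refine le_trans (measure_mono ?_) hn
    intro ω hω hω'
    refine hω (lt_of_le_of_lt ?_ hω')
    have hs : √(n : ℝ) ≠ 0 := (Real.sqrt_pos.2 (by positivity)).ne'
    have hμ : 0 < √(μ i) := Real.sqrt_pos.2 (hμpos i)
    have hd := M.dpos n ω i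
    simp only [Matrix.sub_apply, Matrix.diagonal_apply_eq]
    have e1 : 1 / √(n : ℝ) * (√(n : ℝ) * (M.d n ω i ^ 2 - μ i) * (√(μ i))⁻¹)
        = (M.d n ω i - √(μ i)) * ((M.d n ω i + √(μ i)) * (√(μ i))⁻¹) := by
      have : M.d n ω i ^ 2 - μ i = M.d n ω i ^ 2 - √(μ i) ^ 2 := by
        rw [Real.sq_sqrt (hμpos i).le]
      rw [this]
      field_simp
      ring
    rw [e1, abs_mul]
    refine le_mul_of_one_le_right (abs_nonneg _) ?_
    rw [abs_of_pos (by positivity), ← div_eq_mul_inv, one_le_div hμ]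
    linarith
  · simp only [Matrix.sub_apply, Matrix.diagonal_apply_ne _ hij, sub_zero]
    exact zero_of_tendsto (x := fun _ => 0) tendsto_const_nhds

end BlockModel

/-! ### Algebra of the Schur complement -/

/-- The Schur complement computation: eliminating the bulk block by the Woodbury identity turns the
secular matrix into a sandwich by the `k × k` matrix `(1 + A Q Aᵀ)⁻¹`. Here `Z = Λ - z` has inverse
`Q`, and `L = Λ^{1/2}`. -/
lemma schur_alg {k q : ℕ} {z : ℝ} (R K : Matrix (Fin k) (Fin k) ℝ) (A : Matrix (Fin k) (Fin q) ℝ)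
    (B : Matrix (Fin q) (Fin k) ℝ) (Z Q L : Matrix (Fin q) (Fin q) ℝ)
    (hZQ : Z * Q = 1) (hLQL : L * Q * L = 1 + z • Q) (hQt : Qᵀ = Q) (hLt : Lᵀ = L)
    (hK : (1 + A * Q * Aᵀ) * K = 1) :
    Rᵀ * R + Bᵀ * B - (Rᵀ * A + Bᵀ * L) * (Z + Aᵀ * A)⁻¹ * (Aᵀ * R + L * B)
      = (R - A * Q * L * B)ᵀ * K * (R - A * Q * L * B) - z • (Bᵀ * Q * B) := by
  have hinv : (Z + Aᵀ * A)⁻¹ = Q - Q * Aᵀ * K * A * Q := by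
    refine Matrix.inv_eq_right_inv ?_
    have h1 : (Z + Aᵀ * A) * (Q - Q * Aᵀ * K * A * Q)
        = Z * Q + Aᵀ * (A * Q) - (Z * Q) * (Aᵀ * (K * (A * Q)))
          - Aᵀ * ((A * Q * Aᵀ) * K) * (A * Q) := by
      simp only [Matrix.mul_sub, Matrix.add_mul, Matrix.mul_assoc]
      abel
    have h2 : (A * Q * Aᵀ) * K = 1 - K := by
      rw [Matrix.add_mul, Matrix.one_mul] at hK
      rw [← hK]; abel
    rw [h1, h2, hZQ]
    simp only [Matrix.mul_sub, Matrix.sub_mul, Matrix.one_mul, Matrix.mul_one, Matrix.mul_assoc]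
    abel
  have hK' : K * (1 + A * Q * Aᵀ) = 1 := by
    exact mul_eq_one_comm.1 hK
  obtain ⟨f, hf⟩ : ∃ f, f = A * Q * Aᵀ := ⟨_, rfl⟩
  obtain ⟨g, hg⟩ : ∃ g, g = A * Q * L * B := ⟨_, rfl⟩
  have hgt : gᵀ = Bᵀ * L * Q * Aᵀ := by
    rw [hg]
    simp only [Matrix.transpose_mul, hQt, hLt, Matrix.mul_assoc]
  rw [← hf] at hK hK'
  rw [← hg, hinv]
  have hright : A * Q * (Aᵀ * R + L * B) = f * R + g := by
    rw [hf, hg]; simp only [Matrix.mul_add, Matrix.mul_assoc]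
  have hleft : (Rᵀ * A + Bᵀ * L) * Q * Aᵀ = Rᵀ * f + gᵀ := by
    rw [hf, hgt]; simp only [Matrix.add_mul, Matrix.mul_assoc]
  have hmid : (Rᵀ * A + Bᵀ * L) * Q * (Aᵀ * R + L * B)
      = Rᵀ * f * R + Rᵀ * g + gᵀ * R + Bᵀ * B + z • (Bᵀ * Q * B) := by
    have h3 : Bᵀ * L * Q * (L * B) = Bᵀ * B + z • (Bᵀ * Q * B) := by
      have : Bᵀ * L * Q * (L * B) = Bᵀ * (L * Q * L) * B := by simp only [Matrix.mul_assoc]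
      rw [this, hLQL]
      simp only [Matrix.mul_add, Matrix.add_mul, Matrix.mul_one, Matrix.mul_smul, Matrix.smul_mul]
    rw [Matrix.add_mul, Matrix.add_mul, Matrix.mul_add, Matrix.mul_add, h3, hgt, hf, hg]
    simp only [Matrix.mul_assoc]
    abel
  have hsplit : (Rᵀ * A + Bᵀ * L) * (Q - Q * Aᵀ * K * A * Q) * (Aᵀ * R + L * B)
      = (Rᵀ * A + Bᵀ * L) * Q * (Aᵀ * R + L * B)
        - ((Rᵀ * A + Bᵀ * L) * Q * Aᵀ) * K * (A * Q * (Aᵀ * R + L * B)) := by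
    simp only [Matrix.mul_sub, Matrix.sub_mul, Matrix.mul_assoc]
  rw [hsplit, hmid, hleft, hright, Matrix.transpose_sub]
  have hfK : f * K = 1 - K := by
    rw [Matrix.add_mul, Matrix.one_mul] at hK
    rw [← hK]; abel
  have hKf : K * f = 1 - K := by
    rw [Matrix.mul_add, Matrix.mul_one] at hK'
    rw [← hK']; abel
  have e1 : (Rᵀ * f + gᵀ) * K * (f * R + g)
      = Rᵀ * (f * K) * f * R + Rᵀ * (f * K) * g + gᵀ * (K * f) * R + gᵀ * K * g := by
    noncomm_ring
  rw [e1, hfK, hKf]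
  have e2 : Rᵀ * (1 - K) * f * R = Rᵀ * (f - K * f) * R := by noncomm_ring
  rw [e2, hKf]
  noncomm_ring

/-- Expansion of the sandwich to first order, with an explicit remainder. -/
lemma rem_alg {k : ℕ} {s c : ℝ} (hs : s ≠ 0) (hc : c ≠ 0) (Dn D0 F K Δ : Matrix (Fin k) (Fin k) ℝ)
    (hK : (c • 1 + s⁻¹ • F) * K = 1) :
    s • ((Dn + s⁻¹ • Δᵀ) * K * (Dn + s⁻¹ • Δ))
      - (-(c⁻¹) ^ 2 • (D0 * F * D0) + c⁻¹ • (s • (Dn * Dn) + D0 * Δ + Δᵀ * D0))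
    = (-(c⁻¹) ^ 2) • ((Dn - D0) * F * Dn + D0 * F * (Dn - D0))
      + c⁻¹ • ((Dn - D0) * Δ + Δᵀ * (Dn - D0))
      + s⁻¹ • ((c⁻¹) ^ 2 • (Dn * F * F * K * Dn)
        - c⁻¹ • (Dn * F * K * Δ + Δᵀ * F * K * Dn) + Δᵀ * K * Δ) := by
  have h1 : K = c⁻¹ • 1 - (c⁻¹ * s⁻¹) • (F * K) := by
    have h2 : c • K = 1 - s⁻¹ • (F * K) := by
      rw [← hK]
      simp only [Matrix.add_mul, Matrix.smul_mul, Matrix.one_mul]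
      abel
    calc K = c⁻¹ • (c • K) := by rw [smul_smul, inv_mul_cancel₀ hc, one_smul]
      _ = _ := by rw [h2, smul_sub, smul_smul]
  have hDK : Dn * K * Dn = c⁻¹ • (Dn * Dn) - ((c⁻¹) ^ 2 * s⁻¹) • (Dn * F * Dn)
      + ((c⁻¹) ^ 2 * s⁻¹ ^ 2) • (Dn * F * F * K * Dn) := by
    have h3 : K = c⁻¹ • 1 - ((c⁻¹) ^ 2 * s⁻¹) • F + ((c⁻¹) ^ 2 * s⁻¹ ^ 2) • (F * F * K) := by
      have h4 : F * K = c⁻¹ • F - (c⁻¹ * s⁻¹) • (F * F * K) := by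
        conv_lhs => rw [h1]
        simp only [Matrix.mul_sub, Matrix.mul_smul, Matrix.mul_one, Matrix.mul_assoc]
      conv_lhs => rw [h1, h4]
      module
    conv_lhs => rw [h3]
    simp only [Matrix.mul_sub, Matrix.mul_add, Matrix.sub_mul, Matrix.add_mul, Matrix.mul_smul,
      Matrix.smul_mul, Matrix.mul_one, Matrix.mul_assoc]
  have hsand : ∀ X Y : Matrix (Fin k) (Fin k) ℝ,
      X * K * Y = c⁻¹ • (X * Y) - (c⁻¹ * s⁻¹) • (X * F * K * Y) := by
    intro X Y
    conv_lhs => rw [h1]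
    simp only [Matrix.mul_sub, Matrix.sub_mul, Matrix.mul_smul,
      Matrix.smul_mul, Matrix.mul_one, Matrix.mul_assoc]
  have hexp : (Dn + s⁻¹ • Δᵀ) * K * (Dn + s⁻¹ • Δ)
      = Dn * K * Dn + s⁻¹ • (Dn * K * Δ) + s⁻¹ • (Δᵀ * K * Dn) + (s⁻¹ ^ 2) • (Δᵀ * K * Δ) := by
    simp only [Matrix.mul_add, Matrix.add_mul, Matrix.mul_smul, Matrix.smul_mul]
    module
  rw [hexp, hDK, hsand Dn Δ, hsand Δᵀ Dn]
  simp only [Matrix.mul_sub, Matrix.sub_mul]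
  match_scalars <;> field_simp <;> ring

/-! ### The secular matrix on the good event -/

/-- Near a nonzero multiple of the identity, matrices are invertible with bounded inverse. -/
lemma inv_near {k : ℕ} {c : ℝ} (hc : c ≠ 0) : ∃ t : ℝ, 0 < t ∧ ∃ C : ℝ,
    ∀ V : Matrix (Fin k) (Fin k) ℝ, (∀ i j, |V i j| < t) →
      (c • 1 + V).det ≠ 0 ∧ ∀ i j, |(c • 1 + V)⁻¹ i j| ≤ C := by
  let φ : (Fin k → Fin k → ℝ) → Matrix (Fin k) (Fin k) ℝ := fun v => c • 1 + Matrix.of v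
  have hφ : Continuous φ := by
    refine continuous_const.add ?_
    exact continuous_id
  have hdet : Continuous fun v => (φ v).det := hφ.matrix_det
  have h0 : (φ 0).det ≠ 0 := by
    have : φ 0 = c • 1 := by
      simp only [φ]
      exact add_zero _
    rw [this, Matrix.det_smul, Matrix.det_one]
    simpa using pow_ne_zero _ hc
  have hent : ∀ i j, ContinuousAt (fun v => (φ v)⁻¹ i j) 0 := by
    intro i j
    simp only [Matrix.inv_def, Ring.inverse_eq_inv', Matrix.smul_apply, smul_eq_mul]
    exact (hdet.continuousAt.inv₀ h0).mul ((hφ.matrix_adjugate.matrix_elem i j).continuousAt)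
  have hev : ∀ᶠ v in 𝓝 (0 : Fin k → Fin k → ℝ), (φ v).det ≠ 0 ∧
      ∀ i j, |(φ v)⁻¹ i j| < |(φ 0)⁻¹ i j| + 1 := by
    refine (hdet.continuousAt.eventually_ne h0).and ?_
    rw [eventually_all]; intro i
    rw [eventually_all]; intro j
    exact (hent i j).abs.eventually (gt_mem_nhds (lt_add_one _))
  obtain ⟨t, ht, hball⟩ := Metric.eventually_nhds_iff.1 hev
  refine ⟨t, ht, ∑ i, ∑ j, (|(φ 0)⁻¹ i j| + 1), fun V hV => ?_⟩
  have hd : dist (fun i j => V i j) (0 : Fin k → Fin k → ℝ) < t := by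
    rw [dist_pi_lt_iff ht]; intro i
    rw [dist_pi_lt_iff ht]; intro j
    simpa [Real.dist_eq] using hV i j
  have h1 := hball hd
  refine ⟨h1.1, fun i j => (h1.2 i j).le.trans ?_⟩
  calc |(φ 0)⁻¹ i j| + 1 ≤ ∑ j, (|(φ 0)⁻¹ i j| + 1) :=
        Finset.single_le_sum (f := fun j => |(φ 0)⁻¹ i j| + 1)
          (fun _ _ => by positivity) (Finset.mem_univ j)
    _ ≤ _ := Finset.single_le_sum (f := fun i => ∑ j, (|(φ 0)⁻¹ i j| + 1))
          (fun _ _ => by positivity) (Finset.mem_univ i)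

lemma Whp.all {Ω : Type*} [MeasurableSpace Ω] {P : Measure Ω} {ι : Type*} [Fintype ι]
    {A : ι → ℕ → Ω → Prop} (h : ∀ i, Whp P (A i)) : Whp P fun n ω => ∀ i, A i n ω := by
  have hsum : Tendsto (fun n => ∑ i, P {ω | ¬ A i n ω}) atTop (𝓝 0) := by
    simpa using tendsto_finsetSum Finset.univ fun i _ => h i
  refine tendsto_of_tendsto_of_tendsto_of_le_of_le tendsto_const_nhds hsum (fun _ => zero_le) fun n => ?_
  have hsub : {ω | ¬ ∀ i, A i n ω} ⊆ ⋃ i ∈ (Finset.univ : Finset ι), {ω | ¬ A i n ω} := by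
    intro ω hω
    simpa using hω
  exact (measure_mono hsub).trans (measure_biUnion_finset_le _ _)

lemma MZero.whp_lt {Ω : Type*} [MeasurableSpace Ω] {P : Measure Ω} {k : ℕ}
    {V : ℕ → Ω → Matrix (Fin k) (Fin k) ℝ} (hV : MZero P V) {t : ℝ} (ht : 0 < t) :
    Whp P fun n ω => ∀ i j, |V n ω i j| < t := by
  refine Whp.all fun i => Whp.all fun j => ?_
  have := hV i j t ht
  simpa [Whp] using this

namespace BlockModel

variable {k : ℕ} {γ : ℝ} {p : ℕ → ℕ} {Ω : Type*} [MeasurableSpace Ω] {P : Measure Ω}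
  {μ : Fin k → ℝ}

/-- The `k × k` core `(1 + (1/n) E₁₂ (Λ - z)⁻¹ E₁₂ᵀ)⁻¹`, written in terms of `F_n(z)`. -/
def core (M : BlockModel k γ p Ω P μ) (n : ℕ) (ω : Ω) (z : ℝ) : Matrix (Fin k) (Fin k) ℝ :=
  ((1 + γ⁻¹ * mpStieltjes γ z) • 1 + (√(n : ℝ))⁻¹ • M.Fmat n ω z)⁻¹

/-- The secular matrix after elimination of the bulk block, on the good event and where the core is
invertible. -/
lemma T_eq (M : BlockModel k γ p Ω P μ) {z δ : ℝ} (hδ : 0 < δ) {n : ℕ} (hn : 0 < n) {ω : Ω}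
    (hg : M.good z δ n ω)
    (hdet : ((1 + γ⁻¹ * mpStieltjes γ z) • 1 + (√(n : ℝ))⁻¹ • M.Fmat n ω z).det ≠ 0) :
    M.T n ω z = (Matrix.diagonal (M.d n ω) + (√(n : ℝ))⁻¹ • (M.E11 n ω - M.Gmat n ω z)ᵀ)
        * M.core n ω z * (Matrix.diagonal (M.d n ω) + (√(n : ℝ))⁻¹ • (M.E11 n ω - M.Gmat n ω z))
      - z • ((1 / (n : ℝ)) • ((M.E21 n ω)ᵀ * (Matrix.diagonal (M.lam n ω) - z • 1)⁻¹ * M.E21 n ω))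
      + (1 / (n : ℝ)) • ((M.E31 n ω)ᵀ * M.E31 n ω) - z • 1 := by
  have hn' : (0 : ℝ) < n := by positivity
  obtain ⟨s, hs⟩ : ∃ s, s = √(n : ℝ) := ⟨_, rfl⟩
  have hs0 : s ≠ 0 := by rw [hs]; exact (Real.sqrt_pos.2 hn').ne'
  have hn2 : (n : ℝ) = s ^ 2 := by rw [hs, Real.sq_sqrt hn'.le]
  have hne : ∀ α, M.lam n ω α - z ≠ 0 := fun α => by
    have := (hg.lam_bounds hn α).2
    exact (by linarith : M.lam n ω α - z < 0).ne
  have hZ : (Matrix.diagonal (M.lam n ω) - z • (1 : Matrix (Fin (p n - k)) (Fin (p n - k)) ℝ))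
      = Matrix.diagonal fun α => M.lam n ω α - z := by
    rw [← Matrix.diagonal_one, ← Matrix.diagonal_smul, Matrix.diagonal_sub]
    simp
  have hQ := resolvent_diag hne
  obtain ⟨Q, hQd⟩ : ∃ Q, Q = (Matrix.diagonal (M.lam n ω)
    - z • (1 : Matrix (Fin (p n - k)) (Fin (p n - k)) ℝ))⁻¹ := ⟨_, rfl⟩
  obtain ⟨L, hL⟩ : ∃ L, L = Matrix.diagonal fun α => √(M.lam n ω α) := ⟨_, rfl⟩
  obtain ⟨Δ, hΔ⟩ : ∃ Δ, Δ = M.E11 n ω - M.Gmat n ω z := ⟨_, rfl⟩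
  have hGm : M.Gmat n ω z = s⁻¹ • (M.E12 n ω * Q * L * M.E21 n ω) := by
    rw [Gmat, ← hs, hn2, smul_smul, hQd, hL]
    congr 1
    field_simp
  have hcore : 1 + (s⁻¹ • M.E12 n ω) * Q * (s⁻¹ • M.E12 n ω)ᵀ
      = (1 + γ⁻¹ * mpStieltjes γ z) • 1 + s⁻¹ • M.Fmat n ω z := by
    rw [Fmat, ← hs, hn2, ← hQd, Matrix.transpose_smul]
    simp only [Matrix.smul_mul, Matrix.mul_smul]
    match_scalars <;> field_simp
    ring
  have hK : (1 + (s⁻¹ • M.E12 n ω) * Q * (s⁻¹ • M.E12 n ω)ᵀ) * M.core n ω z = 1 := by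
    rw [hcore, core, ← hs]
    rw [← hs] at hdet
    exact Matrix.mul_nonsing_inv _ (isUnit_iff_ne_zero.2 hdet)
  have hR : (Matrix.diagonal (M.d n ω) + s⁻¹ • M.E11 n ω)
      - (s⁻¹ • M.E12 n ω) * Q * L * (s⁻¹ • M.E21 n ω) = Matrix.diagonal (M.d n ω) + s⁻¹ • Δ := by
    rw [hΔ, hGm]
    simp only [Matrix.smul_mul, Matrix.mul_smul]
    module
  have key := schur_alg (z := z) (Matrix.diagonal (M.d n ω) + s⁻¹ • M.E11 n ω) (M.core n ω z)
    (s⁻¹ • M.E12 n ω) (s⁻¹ • M.E21 n ω) (Matrix.diagonal (M.lam n ω) - z • 1) Q L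
    (by
      rw [hQd, hQ, hZ, Matrix.diagonal_mul_diagonal, ← Matrix.diagonal_one]
      congr 1; ext α; exact mul_inv_cancel₀ (hne α))
    (by
      rw [hQd, hQ, hL, Matrix.diagonal_mul_diagonal, Matrix.diagonal_mul_diagonal,
        ← Matrix.diagonal_one, ← Matrix.diagonal_smul, Matrix.diagonal_add]
      congr 1; ext α
      have h1 := Real.mul_self_sqrt (hg.lam_bounds hn α).1
      have h2 := hne α
      simp only [Pi.smul_apply, smul_eq_mul]
      rw [mul_right_comm, h1]
      field_simp
      ring)
    (by rw [hQd, hQ, Matrix.diagonal_transpose]) (by rw [hL, Matrix.diagonal_transpose])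
    hK
  rw [hR] at key
  rw [T, ← hs, ← hΔ, ← hQd]
  have hS12 : M.S12 n ω = (Matrix.diagonal (M.d n ω) + s⁻¹ • M.E11 n ω)ᵀ * (s⁻¹ • M.E12 n ω)
      + (s⁻¹ • M.E21 n ω)ᵀ * L := by
    rw [S12, ← hs, hn2, ← hL]
    simp only [Matrix.transpose_add, Matrix.transpose_smul, Matrix.diagonal_transpose,
      Matrix.add_mul, Matrix.smul_mul, Matrix.mul_smul]
    match_scalars <;> field_simp
  have hS21 : M.S21 n ω = (s⁻¹ • M.E12 n ω)ᵀ * (Matrix.diagonal (M.d n ω) + s⁻¹ • M.E11 n ω)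
      + L * (s⁻¹ • M.E21 n ω) := by
    rw [S21, ← hs, hn2, ← hL]
    simp only [Matrix.transpose_smul,
      Matrix.mul_add, Matrix.smul_mul, Matrix.mul_smul]
    match_scalars <;> field_simp
  have hS22 : M.S22 n ω - z • 1 = (Matrix.diagonal (M.lam n ω) - z • 1)
      + (s⁻¹ • M.E12 n ω)ᵀ * (s⁻¹ • M.E12 n ω) := by
    rw [S22, hn2]
    simp only [Matrix.transpose_smul, Matrix.smul_mul, Matrix.mul_smul]
    match_scalars <;> field_simp
  have hS11 : M.S11 n ω = (Matrix.diagonal (M.d n ω) + s⁻¹ • M.E11 n ω)ᵀ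
        * (Matrix.diagonal (M.d n ω) + s⁻¹ • M.E11 n ω)
      + (s⁻¹ • M.E21 n ω)ᵀ * (s⁻¹ • M.E21 n ω) + (1 / (n : ℝ)) • ((M.E31 n ω)ᵀ * M.E31 n ω) := by
    have hdd : Matrix.diagonal (fun i => M.d n ω i ^ 2)
        = Matrix.diagonal (M.d n ω) * Matrix.diagonal (M.d n ω) := by
      rw [Matrix.diagonal_mul_diagonal]
      congr 1; ext i; exact sq _
    rw [S11, ← hs, hn2, hdd]
    simp only [Matrix.transpose_add, Matrix.transpose_smul, Matrix.diagonal_transpose,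
      Matrix.add_mul, Matrix.mul_add, Matrix.smul_mul, Matrix.mul_smul]
    match_scalars <;> field_simp
  have hh : (s⁻¹ • M.E21 n ω)ᵀ * Q * (s⁻¹ • M.E21 n ω)
      = (1 / (n : ℝ)) • ((M.E21 n ω)ᵀ * Q * M.E21 n ω) := by
    rw [hn2]
    simp only [Matrix.transpose_smul, Matrix.smul_mul, Matrix.mul_smul]
    match_scalars <;> field_simp
  have hΔt : (Matrix.diagonal (M.d n ω) + s⁻¹ • Δ)ᵀ = Matrix.diagonal (M.d n ω) + s⁻¹ • Δᵀ := by
    rw [Matrix.transpose_add, Matrix.diagonal_transpose, Matrix.transpose_smul]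
  rw [hh, hΔt] at key
  rw [← key, hS11, hS12, hS21, hS22]
  abel

lemma core_tight (M : BlockModel k γ p Ω P μ) {z : ℝ} (hc : 1 + γ⁻¹ * mpStieltjes γ z ≠ 0)
    (hF : MTight P fun n ω => M.Fmat n ω z) :
    (MTight P fun n ω => M.core n ω z) ∧ Whp P fun n ω =>
      ((1 + γ⁻¹ * mpStieltjes γ z) • 1 + (√(n : ℝ))⁻¹ • M.Fmat n ω z).det ≠ 0 := by
  obtain ⟨t, ht, C, hC⟩ := inv_near (k := k) hc
  have hV : MZero P fun n ω => (√(n : ℝ))⁻¹ • M.Fmat n ω z :=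
    MTight.zero_smul (by simpa using tendsto_inv_sqrt_nat) hF
  have hw := hV.whp_lt ht
  refine ⟨fun i j => Tight.whp_bound hw (tight_const C) (Eventually.of_forall fun n ω h => ?_),
    hw.mono (Eventually.of_forall fun n ω h => (hC _ h).1)⟩
  exact ((hC _ h).2 i j).trans (le_abs_self C)

end BlockModel

/-! ### The expansion -/

namespace BlockModel

variable {k : ℕ} {γ : ℝ} {p : ℕ → ℕ} {Ω : Type*} [MeasurableSpace Ω] {P : Measure Ω}
  {μ : Fin k → ℝ}

/-- The explicit error of the first-order expansion: each summand contains a factor `D_n - D` or a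
factor `n^{-1/2}`. -/
def remainder (M : BlockModel k γ p Ω P μ) (n : ℕ) (ω : Ω) (z : ℝ) : Matrix (Fin k) (Fin k) ℝ :=
  let c := 1 + γ⁻¹ * mpStieltjes γ z
  let s := √(n : ℝ)
  let Dn := Matrix.diagonal (M.d n ω)
  let D0 := Matrix.diagonal fun i => √(μ i)
  let F := M.Fmat n ω z
  let K := M.core n ω z
  let Δ := M.E11 n ω - M.Gmat n ω z
  (-(c⁻¹) ^ 2) • ((Dn - D0) * F * Dn + D0 * F * (Dn - D0))
      + c⁻¹ • ((Dn - D0) * Δ + Δᵀ * (Dn - D0))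
      + s⁻¹ • ((c⁻¹) ^ 2 • (Dn * F * F * K * Dn)
        - c⁻¹ • (Dn * F * K * Δ + Δᵀ * F * K * Dn) + Δᵀ * K * Δ)

lemma remainder_zero [IsProbabilityMeasure P] (M : BlockModel k γ p Ω P μ) {z : ℝ}
    (hF : MTight P fun n ω => M.Fmat n ω z) (hG : MTight P fun n ω => M.Gmat n ω z)
    (hK : MTight P fun n ω => M.core n ω z)
    (hd : MZero P fun n ω => Matrix.diagonal (M.d n ω) - Matrix.diagonal fun i => √(μ i)) :
    MZero P fun n ω => M.remainder n ω z := by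
  have hD0 : MTight P fun (_ : ℕ) (_ : Ω) => Matrix.diagonal fun i => √(μ i) :=
    fun i j => tight_const _
  have hDn : MTight P fun n ω => Matrix.diagonal (M.d n ω) := by
    have := hd.tight.add hD0
    simpa only [sub_add_cancel] using this
  have hΔ : MTight P fun n ω => M.E11 n ω - M.Gmat n ω z := M.E11_tight.sub hG
  have h1 := ((hd.mul_tight hF).mul_tight hDn).add ((hD0.mul hF).mul_zero hd)
  have h2 := (hd.mul_tight hΔ).add (hΔ.transpose.mul_zero hd)
  have h3 := (MTight.smul (tight_const (((1 + γ⁻¹ * mpStieltjes γ z)⁻¹) ^ 2))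
    ((((hDn.mul hF).mul hF).mul hK).mul hDn)).sub
    (MTight.smul (tight_const ((1 + γ⁻¹ * mpStieltjes γ z)⁻¹))
      ((((hDn.mul hF).mul hK).mul hΔ).add (((hΔ.transpose.mul hF).mul hK).mul hDn)))
  have h4 := h3.add ((hΔ.transpose.mul hK).mul hΔ)
  have h5 := MTight.zero_smul (x := fun n : ℕ => (√(n : ℝ))⁻¹)
    (by simpa using tendsto_inv_sqrt_nat) h4
  exact ((h1.const_smul _).add (h2.const_smul _)).add h5

/-- On the good event, and where the core is invertible, the error term is exactly `remainder`. -/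
lemma expansion_eq (M : BlockModel k γ p Ω P μ) (hγ : 1 ≤ γ) {z δ : ℝ} (hz : bGamma γ < z)
    (hc : 1 + γ⁻¹ * mpStieltjes γ z ≠ 0) (hδ : 0 < δ) {n : ℕ} (hn : 0 < n)
    {ω : Ω} (hg : M.good z δ n ω)
    (hdet : ((1 + γ⁻¹ * mpStieltjes γ z) • 1 + (√(n : ℝ))⁻¹ • M.Fmat n ω z).det ≠ 0) :
    √(n : ℝ) • (M.T n ω z - T0lim γ μ z) - M.expansionTerm n ω z = M.remainder n ω z := by
  have hs0 : √(n : ℝ) ≠ 0 := (Real.sqrt_pos.2 (by positivity)).ne'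
  have hK : ((1 + γ⁻¹ * mpStieltjes γ z) • 1 + (√(n : ℝ))⁻¹ • M.Fmat n ω z) * M.core n ω z = 1 :=
    Matrix.mul_nonsing_inv _ (isUnit_iff_ne_zero.2 hdet)
  have hdd : Matrix.diagonal (fun i => M.d n ω i ^ 2)
      = Matrix.diagonal (M.d n ω) * Matrix.diagonal (M.d n ω) := by
    rw [Matrix.diagonal_mul_diagonal]
    congr 1; ext i; exact sq _
  have hrem := rem_alg hs0 hc (Matrix.diagonal (M.d n ω)) (Matrix.diagonal fun i => √(μ i))
    (M.Fmat n ω z) (M.core n ω z) (M.E11 n ω - M.Gmat n ω z) hK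
  rw [remainder]
  refine Eq.trans ?_ hrem
  rw [M.T_eq hδ hn hg hdet, T0lim, expansionTerm, Hmat, hdd, mpStieltjes_inv hγ hz]
  generalize (Matrix.diagonal (M.d n ω) + (√(n : ℝ))⁻¹ • (M.E11 n ω - M.Gmat n ω z)ᵀ)
        * M.core n ω z * (Matrix.diagonal (M.d n ω)
          + (√(n : ℝ))⁻¹ • (M.E11 n ω - M.Gmat n ω z)) = Sd
  generalize Matrix.diagonal (fun i => √(μ i)) * (M.E11 n ω - M.Gmat n ω z) = Y1
  generalize (M.E11 n ω - M.Gmat n ω z)ᵀ * Matrix.diagonal (fun i => √(μ i)) = Y2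
  generalize (1 / (n : ℝ)) • ((M.E21 n ω)ᵀ * (Matrix.diagonal (M.lam n ω) - z • 1)⁻¹ * M.E21 n ω)
    = Y3
  module

end BlockModel

/-- Assuming additionally that `√n (d²_{n,·} − μ_·)` converges in
distribution (to a mean-zero multivariate normal), for each fixed `z > b_γ`,
`√n (T_n(z) − T₀(z)) − T_{n,1}(z)` converges to zero in probability (entrywise), i.e.
`√n (T_n(z) − T₀(z)) = T_{n,1}(z) + o_P(1)`. -/
theorem secular_matrix_expansion
    {k : ℕ} (hk : 1 ≤ k) {γ : ℝ} (hγ : 1 ≤ γ)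
    {p : ℕ → ℕ} {Ω : Type*} [MeasurableSpace Ω] {P : Measure Ω} [IsProbabilityMeasure P]
    {μ : Fin k → ℝ} (M : BlockModel k γ p Ω P μ)
    (hd : ∀ n ω, StrictAnti (M.d n ω))
    (hμanti : StrictAnti μ) (hμpos : ∀ i, 0 < μ i)
    (hCLT : ∃ (Cmat : Matrix (Fin k) (Fin k) ℝ) (ν : Measure (Fin k → ℝ)),
      IsProbabilityMeasure ν ∧ IsCenteredGaussianCov ν (fun i j => Cmat i j) ∧
      TendstoInDist P (fun n ω i => Real.sqrt n * ((M.d n ω i) ^ 2 - μ i)) ν)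
    (z : ℝ) (hz : bGamma γ < z) :
    ∀ i j : Fin k, TendstoInProbZero P (fun n ω =>
      (Real.sqrt n • (M.T n ω z - T0lim γ μ z) - M.expansionTerm n ω z) i j) := by
  obtain ⟨Cmat, ν, hν, -, hdist⟩ := hCLT
  obtain ⟨δ, hδ, hzδ⟩ : ∃ δ : ℝ, 0 < δ ∧ bGamma γ < z - δ :=
    ⟨(z - bGamma γ) / 2, by linarith, by linarith⟩
  have hc : 1 + γ⁻¹ * mpStieltjes γ z ≠ 0 := by
    have h1 := (rhoLim_spec hγ hz).2.1
    rw [mpStieltjes_eq hγ hz]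
    linarith
  have hF := M.F_tight hγ hδ hzδ
  have hG := M.G_tight hγ hδ hzδ
  obtain ⟨hK, hdet⟩ := M.core_tight hc hF
  have hd0 := M.d_zero hμpos hdist
  have hrem := M.remainder_zero hF hG hK hd0
  intro i j
  refine TendstoInProbZero.congr ((M.good_whp hγ hzδ).and hdet) (hrem i j) ?_
  filter_upwards [eventually_gt_atTop 0] with n hn ω hω
  rw [M.expansion_eq hγ hz hc hδ hn hω.1 hω.2]
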